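/- arXiv:1001.4829 — 3 statements merged into one kernel-verified Lean document; each statement's English description precedes it below -/
import Mathlib

section
/- There exist a constant c > 0 and N such that for all n ≥ N: if P_n is a nonempty monotone decreasing graph property of n-vertex graphs that is not evasive, then P_n contains a graph with at least c·n·log n edges. Equivalently, every nontrivial monotone decreasing property of n-vertex graphs all of whose members have fewer than c·n·log n edges is evasive for all sufficiently large n. -/
/-- A deterministic decision tree over a set of Boolean variables indexed by `ι`. -/
inductive DecisionTree (ι : Type) : Type
  | leaf : Bool → DecisionTree ι
  | node : ι → DecisionTree ι → DecisionTree ι → DecisionTree ι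

namespace DecisionTree

/-- Evaluate a decision tree on an input assignment. -/
def eval {ι : Type} : DecisionTree ι → (ι → Bool) → Bool
  | leaf b, _ => b
  | node i t f, x => if x i then t.eval x else f.eval x

/-- The depth (worst-case number of queries) of a decision tree. -/
def depth {ι : Type} : DecisionTree ι → ℕ
  | leaf _ => 0
  | node _ t f => max t.depth f.depth + 1

end DecisionTree

/-- The variables of a graph property on `n` vertices: pairs `i < j`. -/
def EdgeVar (n : ℕ) := {p : Fin n × Fin n // p.1 < p.2}

/-- The graph on `Fin n` determined by an assignment to the adjacency variables. -/
def graphOfInput {n : ℕ} (x : EdgeVar n → Bool) : SimpleGraph (Fin n) :=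
  SimpleGraph.fromRel (fun i j => ∃ h : i < j, x ⟨(i, j), h⟩ = true)

/-- The deterministic query (decision-tree) complexity of a set of graphs on `Fin n`,
viewed as a Boolean function of the adjacency variables. -/
noncomputable def queryComplexity {n : ℕ} (P : Set (SimpleGraph (Fin n))) : ℕ :=
  sInf {d | ∃ T : DecisionTree (EdgeVar n),
    (∀ x, T.eval x = true ↔ graphOfInput x ∈ P) ∧ T.depth ≤ d}

/-- A set of graphs on `Fin n` is evasive if its query complexity is `n(n-1)/2`,
the total number of adjacency variables. -/
def Evasive {n : ℕ} (P : Set (SimpleGraph (Fin n))) : Prop :=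
  queryComplexity P = n * (n - 1) / 2

/-- `G` contains a (not necessarily induced) subgraph isomorphic to `H`. -/
def ContainsCopy {V : Type} (H : SimpleGraph V) {W : Type} (G : SimpleGraph W) : Prop :=
  ∃ f : V → W, Function.Injective f ∧ ∀ v w : V, H.Adj v w → G.Adj (f v) (f w)

/-- The forbidden-subgraph property `Q_n^H`: graphs on `Fin n` containing no copy of `H`. -/
def ForbiddenSubgraphProperty {V : Type} (H : SimpleGraph V) (n : ℕ) :
    Set (SimpleGraph (Fin n)) :=
  {G | ¬ ContainsCopy H G}

/-- A prime `p` is an `ε`-near Fermat prime if `2^s ∣ p - 1` and `(p-1)/2^s ≤ p^ε`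
for some `s ≥ 0`. -/
def NearFermatPrime (ε : ℝ) (p : ℕ) : Prop :=
  p.Prime ∧ ∃ s : ℕ, 2 ^ s ∣ p - 1 ∧ (((p - 1) / 2 ^ s : ℕ) : ℝ) ≤ (p : ℝ) ^ ε

/-- A set of graphs on `Fin n` is a (labelled-vertex-invariant) graph property if it is
invariant under relabeling of the vertices. -/
def IsGraphProperty {n : ℕ} (P : Set (SimpleGraph (Fin n))) : Prop :=
  ∀ σ : Equiv.Perm (Fin n), ∀ G : SimpleGraph (Fin n),
    G ∈ P → G.map σ.toEmbedding ∈ P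

/-- A set of graphs is monotone decreasing if it is closed under deletion of edges. -/
def MonotoneDecreasing {n : ℕ} (P : Set (SimpleGraph (Fin n))) : Prop :=
  ∀ G G' : SimpleGraph (Fin n), G' ≤ G → G ∈ P → G' ∈ P

/-!
Discarding the edgeless graph from a nonevasive decreasing property leaves a poset whose order
complex is acyclic: the first query of a short decision tree splits the family of edge sets into a
link and a deletion, both decided by shorter trees, and adding the sets containing the queried edge
one at a time glues the two. By Smith's theorem, in characteristic `p`, the fixed points of a
`p`-group acting on an acyclic poset again form an acyclic poset, and by the Lefschetz formula one
further automorphism of this poset has a fixed point. Hence the property contains a graph with at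
least one edge which is invariant under any prescribed `p`-group `Q` of vertex permutations and any
prescribed permutation normalizing `Q`.

Now let `q` be a prime power dividing `n = k q`, identify the vertices with `ZMod k × 𝔽_q`, let `Q`
translate the `k` blocks independently, and let the extra permutation shift the blocks cyclically
so that its `k`-th power multiplies each block by a generator of `𝔽_qˣ`. An invariant graph with an
edge has all degrees at least `q - 1`, hence at least `n (q - 1) / 2` edges, and `q` can be chosen
of order at least `log n` because `n` divides `lcm (1, …, q)` for its largest exact prime power `q`.
-/

open Finset
open scoped Pointwise

section LinearAlgebra

variable {K V : Type*} [Field K] [AddCommGroup V] [Module K V]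

/-- The dimension of the homology `(A ⊓ ker d) / d A` of a subcomplex `A` of `(V, d)`, rewritten
by rank-nullity in a form that makes it additive in `A`. -/
noncomputable def homologyDim (d : Module.End K V) (A : Submodule K V) : ℤ :=
  Module.finrank K A - 2 * Module.finrank K (A.map d)

theorem map_range_le_of_commute {d s : Module.End K V} (hs : Commute d s) :
    (LinearMap.range s).map d ≤ LinearMap.range s := by
  rintro _ ⟨_, ⟨v, rfl⟩, rfl⟩
  exact ⟨d v, (LinearMap.congr_fun hs.eq v).symm⟩

section FiniteDimensional

variable [FiniteDimensional K V]

theorem finrank_map_add_finrank_inf_ker {W : Type*} [AddCommGroup W] [Module K W]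
    (f : V →ₗ[K] W) (A : Submodule K V) :
    Module.finrank K (A.map f) + Module.finrank K (A ⊓ LinearMap.ker f : Submodule K V) =
      Module.finrank K A := by
  have h := LinearMap.finrank_range_add_finrank_ker (f.domRestrict A)
  rw [LinearMap.range_domRestrict, LinearMap.ker_domRestrict] at h
  rw [← h, ← Submodule.map_comap_subtype, Submodule.finrank_map_subtype_eq]

theorem finrank_sup_of_disjoint {A B : Submodule K V} (h : Disjoint A B) :
    Module.finrank K (A ⊔ B : Submodule K V) = Module.finrank K A + Module.finrank K B := by
  rw [← Submodule.finrank_sup_add_finrank_inf_eq, h.eq_bot, finrank_bot, add_zero]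

theorem homologyDim_sup {d : Module.End K V} {A B : Submodule K V} (hA : A.map d ≤ A)
    (hB : B.map d ≤ B) (h : Disjoint A B) :
    homologyDim d (A ⊔ B) = homologyDim d A + homologyDim d B := by
  rw [homologyDim, Submodule.map_sup, finrank_sup_of_disjoint h,
    finrank_sup_of_disjoint (h.mono hA hB), homologyDim, homologyDim]
  push_cast
  ring

theorem homologyDim_ker_eq_range {d s : Module.End K V} (hd : Function.Exact d d)
    (hs : Commute d s) : homologyDim d (LinearMap.ker s) = homologyDim d (LinearMap.range s) := by
  have hker := hd.linearMap_ker_eq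
  have hrange : (LinearMap.range s).map d = (LinearMap.ker d).map s := by
    rw [hker, ← LinearMap.range_comp, ← LinearMap.range_comp]
    exact congrArg LinearMap.range hs.eq
  have h₁ := LinearMap.finrank_range_add_finrank_ker d
  have h₂ := LinearMap.finrank_range_add_finrank_ker s
  have h₃ := finrank_map_add_finrank_inf_ker d (LinearMap.ker s)
  have h₄ := finrank_map_add_finrank_inf_ker s (LinearMap.ker d)
  rw [inf_comm, ← hrange] at h₄
  rw [← hker] at h₁
  rw [homologyDim, homologyDim]
  omega

theorem inf_ker_le_map_of_homologyDim_eq_zero {d : Module.End K V} {A : Submodule K V}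
    (hA : A.map d ≤ A ⊓ LinearMap.ker d) (h : homologyDim d A = 0) :
    A ⊓ LinearMap.ker d ≤ A.map d := by
  have hrank := finrank_map_add_finrank_inf_ker d A
  rw [homologyDim] at h
  exact (Submodule.eq_of_le_of_finrank_eq hA (by omega)).ge

-- In Smith theory `s = T - 1` and `t = 1 + T + ⋯ + T ^ (p - 1)`, where `T ^ p = 1`.
theorem inf_ker_le_map_of_smith_decomposition {d s t : Module.End K V} {W : Submodule K V}
    (hd : Function.Exact d d) (hs : Commute d s) (ht : Commute d t) (hW : W.map d ≤ W)
    (hker : LinearMap.ker s = LinearMap.range t ⊔ W)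
    (htW : Disjoint (LinearMap.range t) W) (hsW : Disjoint (LinearMap.range s) W)
    (hst : LinearMap.range s ≤ LinearMap.ker t) (hWt : W ≤ LinearMap.ker t) :
    W ⊓ LinearMap.ker d ≤ W.map d := by
  have hkert : LinearMap.range s ⊔ W = LinearMap.ker t := by
    have h₁ := LinearMap.finrank_range_add_finrank_ker s
    have h₂ := LinearMap.finrank_range_add_finrank_ker t
    have h₃ := finrank_sup_of_disjoint htW
    have h₄ := finrank_sup_of_disjoint hsW
    rw [← hker] at h₃
    exact Submodule.eq_of_le_of_finrank_eq (sup_le hst hWt) (by omega)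
  have h₁ := homologyDim_ker_eq_range hd hs
  have h₂ := homologyDim_ker_eq_range hd ht
  rw [hker, homologyDim_sup (map_range_le_of_commute ht) hW htW] at h₁
  rw [← hkert, homologyDim_sup (map_range_le_of_commute hs) hW hsW] at h₂
  refine inf_ker_le_map_of_homologyDim_eq_zero (le_inf hW ?_) (by linarith)
  exact LinearMap.map_le_range.trans hd.linearMap_ker_eq.ge

end FiniteDimensional

theorem exists_contraction_of_exact {d : Module.End K V} (hd : Function.Exact d d) :
    ∃ s : Module.End K V, d * s + s * d = 1 := by
  have hdd (v : V) : d (d v) = 0 := hd.apply_apply_eq_zero v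
  obtain ⟨r₀, hr₀⟩ := d.rangeRestrict.exists_rightInverse_of_surjective d.range_rangeRestrict
  obtain ⟨r, hr⟩ := LinearMap.exists_extend r₀
  have hdr {z : V} (hz : d z = 0) : d (r z) = z := by
    have hz' : z ∈ LinearMap.range d := hd.linearMap_ker_eq ▸ hz
    rw [show r z = r₀ ⟨z, hz'⟩ from LinearMap.congr_fun hr ⟨z, hz'⟩]
    exact congrArg Subtype.val (LinearMap.congr_fun hr₀ ⟨z, hz'⟩)
  refine ⟨r * (1 - r * d), LinearMap.ext fun v => ?_⟩
  have hcycle : d (v - r (d v)) = 0 := by rw [map_sub, hdr (hdd v), sub_self]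
  change d (r (v - r (d v))) + r (d v - r (d (d v))) = v
  rw [hdr hcycle, hdd, map_zero, sub_zero, sub_add_cancel]

theorem trace_eq_zero_of_exact {d e : Module.End K V} (hd : Function.Exact d d)
    (he : d * e = -(e * d)) : LinearMap.trace K V e = 0 := by
  obtain ⟨s, hs⟩ := exists_contraction_of_exact hd
  have h : e = e * d * s + e * s * d := by rw [mul_assoc, mul_assoc, ← mul_add, hs, mul_one]
  rw [h, map_add, LinearMap.trace_mul_comm K (e * s) d, ← mul_assoc, he, neg_mul, map_neg,
    add_neg_cancel]

end LinearAlgebra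

section OrderComplex

variable {α : Type*} [PartialOrder α] {K : Type*} [CommRing K]

/-- The chains of the augmented order complex of `X ⊆ α` with coefficients in `K`, that is, the
functions on finsets supported on the finite order-chains inside `X`. The empty order-chain is
included, which is the augmentation. -/
def orderChains (K : Type*) [CommRing K] (X : Set α) : Submodule K (Finset α → K) where
  carrier := {f | ∀ c : Finset α, f c ≠ 0 → (c : Set α) ⊆ X ∧ IsChain (· ≤ ·) (c : Set α)}
  zero_mem' c h := absurd rfl h
  add_mem' {f g} hf hg c h := by
    by_cases h₀ : f c = 0
    · exact hg c fun h₁ => h (by simp [h₀, h₁])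
    · exact hf c h₀
  smul_mem' a f hf c h := hf c fun h₀ => h (by simp [h₀])

theorem orderChains_mono {X Y : Set α} (h : X ⊆ Y) : orderChains K X ≤ orderChains K Y :=
  fun _ hf c hc => ⟨(hf c hc).1.trans h, (hf c hc).2⟩

variable [DecidableLT α]

/-- The sign of inserting `x` into a chain `c`: the parity of the position of `x`. -/
def chainSign (K : Type*) [CommRing K] (x : α) (c : Finset α) : K := (-1) ^ #{y ∈ c | y < x}

theorem chainSign_mul_self (x : α) (c : Finset α) : chainSign K x c * chainSign K x c = 1 := by
  rw [chainSign, ← mul_pow, neg_one_mul, neg_neg, one_pow]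

variable [DecidableEq α]

theorem chainSign_insert (x : α) {y : α} {c : Finset α} (hy : y ∉ c) :
    chainSign K x (insert y c) = if y < x then -chainSign K x c else chainSign K x c := by
  unfold chainSign
  rw [filter_insert]
  split_ifs with h
  · rw [card_insert_of_notMem (by simp [hy]), pow_succ, mul_neg_one]
  · rfl

theorem chainSign_insert_self (x : α) {c : Finset α} (hx : x ∉ c) :
    chainSign K x (insert x c) = chainSign K x c := by
  rw [chainSign_insert x hx, if_neg (lt_irrefl x)]

theorem chainSign_insert_mul_chainSign_insert {x y : α} {c : Finset α} (hx : x ∉ c) (hy : y ∉ c)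
    (hxy : x < y ∨ y < x) :
    chainSign K y (insert x c) * chainSign K x (insert y c) =
      -(chainSign K x c * chainSign K y c) := by
  rw [chainSign_insert y hx, chainSign_insert x hy]
  rcases hxy with h | h
  · rw [if_pos h, if_neg h.asymm]
    ring
  · rw [if_pos h, if_neg h.asymm]
    ring

/-- The component at `x` of the boundary operator: the coefficients, on the link of `x`, of the
chains through `x`. -/
def chainLink (x : α) : Module.End K (Finset α → K) where
  toFun f c := if x ∈ c then 0 else chainSign K x c * f (insert x c)
  map_add' f g := by
    ext c
    simp only [Pi.add_apply, mul_add]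
    split_ifs
    · rw [add_zero]
    · rfl
  map_smul' a f := by
    ext c
    simp only [Pi.smul_apply, smul_eq_mul, RingHom.id_apply, mul_ite, mul_zero, mul_left_comm]

theorem chainLink_apply (x : α) (f : Finset α → K) (c : Finset α) :
    chainLink x f c = if x ∈ c then 0 else chainSign K x c * f (insert x c) :=
  rfl

/-- Coning off with apex `x`. -/
def chainCone (x : α) : Module.End K (Finset α → K) where
  toFun f c := if x ∈ c then chainSign K x c * f (c.erase x) else 0
  map_add' f g := by
    ext c
    simp only [Pi.add_apply, mul_add]
    split_ifs
    · rfl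
    · rw [add_zero]
  map_smul' a f := by
    ext c
    simp only [Pi.smul_apply, smul_eq_mul, RingHom.id_apply, mul_ite, mul_zero, mul_left_comm]

theorem chainCone_apply_insert {x : α} {c : Finset α} (hx : x ∉ c) (f : Finset α → K) :
    chainCone x f (insert x c) = chainSign K x c * f c := by
  simp [chainCone, chainSign_insert_self, hx]

theorem chainCone_apply_of_notMem {x : α} {c : Finset α} (hx : x ∉ c) (f : Finset α → K) :
    chainCone x f c = 0 :=
  if_neg hx

-- Together with `chainLink_chainLink` and `chainLink_chainCone` these are the canonical
-- anticommutation relations; the identities for the boundary operator follow formally.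
theorem chainLink_chainCone_add_chainCone_chainLink (x : α) (f : Finset α → K) :
    chainLink x (chainCone x f) + chainCone x (chainLink x f) = f := by
  ext c
  rw [Pi.add_apply, chainLink_apply]
  by_cases hx : x ∈ c
  · obtain ⟨c, hxc, rfl⟩ : ∃ b, x ∉ b ∧ insert x b = c :=
      ⟨c.erase x, notMem_erase x c, insert_erase hx⟩
    rw [if_pos hx, chainCone_apply_insert hxc, chainLink_apply, if_neg hxc, ← mul_assoc,
      chainSign_mul_self, one_mul, zero_add]
  · rw [if_neg hx, chainCone_apply_insert hx, chainCone_apply_of_notMem hx, ← mul_assoc,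
      chainSign_mul_self, one_mul, add_zero]

theorem chainLink_chainLink {X : Set α} {f : Finset α → K} (hf : f ∈ orderChains K X) (x y : α) :
    chainLink x (chainLink y f) = -chainLink y (chainLink x f) := by
  ext c
  simp only [Pi.neg_apply, chainLink_apply, mem_insert]
  by_cases hx : x ∈ c
  · simp [hx]
  by_cases hy : y ∈ c
  · simp [hy]
  rcases eq_or_ne x y with rfl | hxy
  · simp
  simp only [hx, hy, hxy, hxy.symm, or_self, if_false, insert_comm x y c]
  by_cases h₀ : f (insert y (insert x c)) = 0
  · simp [h₀]
  have hcomp : x < y ∨ y < x :=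
    ((hf _ h₀).2 (by simp) (by simp) hxy).imp hxy.lt_of_le hxy.symm.lt_of_le
  have hsign := chainSign_insert_mul_chainSign_insert (K := K) hx hy hcomp
  have hx₁ := chainSign_mul_self (K := K) x c
  have hx₂ := chainSign_mul_self (K := K) x (insert y c)
  linear_combination f (insert y (insert x c)) *
    (chainSign K x c * chainSign K x (insert y c) * hsign
      - chainSign K x c * chainSign K y (insert x c) * hx₂
      - chainSign K y c * chainSign K x (insert y c) * hx₁)

theorem chainLink_chainCone {x y : α} (hxy : y ≠ x) {X : Set α} {f : Finset α → K}
    (hf : f ∈ orderChains K X) (hX : ∀ z ∈ X, z ≤ x ∨ x ≤ z) :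
    chainLink y (chainCone x f) = -chainCone x (chainLink y f) := by
  ext c
  rw [Pi.neg_apply, chainLink_apply]
  by_cases hx : x ∈ c
  · obtain ⟨c, hxc, rfl⟩ : ∃ b, x ∉ b ∧ insert x b = c :=
      ⟨c.erase x, notMem_erase x c, insert_erase hx⟩
    rw [chainCone_apply_insert hxc, chainLink_apply]
    by_cases hy : y ∈ c
    · simp [hy]
    rw [if_neg (by simp [hxy, hy]), if_neg hy, insert_comm,
      chainCone_apply_insert (by simp [hxy.symm, hxc])]
    by_cases h₀ : f (insert y c) = 0
    · simp [h₀]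
    have hcomp : x < y ∨ y < x := (hX y ((hf _ h₀).1 (by simp))).symm.imp hxy.symm.lt_of_le
      hxy.lt_of_le
    have hsign := chainSign_insert_mul_chainSign_insert (K := K) hxc hy hcomp
    linear_combination f (insert y c) * hsign
  · rw [chainCone_apply_of_notMem hx, chainCone_apply_of_notMem (by simp [hxy.symm, hx]), mul_zero,
      ite_self, neg_zero]

theorem chainLink_mem {x : α} {X : Set α} {f : Finset α → K}
    (hf : f ∈ orderChains K (insert x X)) :
    chainLink x f ∈ orderChains K {y ∈ X | y < x ∨ x < y} := by
  intro c hc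
  rw [chainLink_apply] at hc
  obtain ⟨hxc, hc⟩ := ite_ne_left_iff.1 hc
  obtain ⟨hsub, hchain⟩ := hf _ (right_ne_zero_of_mul hc.symm)
  rw [coe_insert] at hsub hchain
  refine ⟨fun y hy => ?_, hchain.mono (Set.subset_insert x c)⟩
  have hyx : y ≠ x := ne_of_mem_of_not_mem hy hxc
  refine ⟨(hsub (Set.mem_insert_of_mem x hy)).resolve_left hyx, ?_⟩
  exact (hchain (Set.mem_insert_of_mem x hy) (Set.mem_insert x _) hyx).imp hyx.lt_of_le
    hyx.symm.lt_of_le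

theorem chainCone_mem {x : α} {X : Set α} {f : Finset α → K} (hf : f ∈ orderChains K X)
    (hX : ∀ y ∈ X, y ≤ x ∨ x ≤ y) : chainCone x f ∈ orderChains K (insert x X) := by
  intro c hc
  by_cases hx : x ∈ c
  · obtain ⟨c, hxc, rfl⟩ : ∃ b, x ∉ b ∧ insert x b = c :=
      ⟨c.erase x, notMem_erase x c, insert_erase hx⟩
    rw [chainCone_apply_insert hxc] at hc
    obtain ⟨hsub, hchain⟩ := hf _ (right_ne_zero_of_mul hc)
    rw [coe_insert]
    exact ⟨Set.insert_subset_insert hsub, hchain.insert fun y hy _ => (hX y (hsub hy)).symm⟩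
  · exact absurd (chainCone_apply_of_notMem hx f) hc

variable [Fintype α]

/-- The boundary operator of the augmented order complex. It squares to zero on `orderChains`,
but not on arbitrary functions. -/
def chainBoundary (K : Type*) [CommRing K] : Module.End K (Finset α → K) := ∑ x, chainLink x

theorem chainBoundary_apply (f : Finset α → K) : chainBoundary K f = ∑ x, chainLink x f :=
  LinearMap.sum_apply _ _ _

theorem chainBoundary_mem {X : Set α} {f : Finset α → K} (hf : f ∈ orderChains K X) :
    chainBoundary K f ∈ orderChains K X := by
  rw [chainBoundary_apply]
  refine sum_mem fun x _ => orderChains_mono (Set.sep_subset X _) (chainLink_mem (x := x) ?_)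
  exact orderChains_mono (Set.subset_insert x X) hf

theorem chainBoundary_chainLink {X : Set α} {f : Finset α → K} (hf : f ∈ orderChains K X) (x : α) :
    chainBoundary K (chainLink x f) = -chainLink x (chainBoundary K f) := by
  simp_rw [chainBoundary_apply, map_sum, chainLink_chainLink hf _ x, sum_neg_distrib]

theorem chainBoundary_chainBoundary {X : Set α} {f : Finset α → K} (hf : f ∈ orderChains K X) :
    chainBoundary K (chainBoundary K f) = 0 := by
  have hself (x : α) : chainLink x (chainLink x f) = 0 := by
    ext c
    simp [chainLink_apply]
  simp_rw [chainBoundary_apply, map_sum, ← sum_product']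
  refine sum_involution (fun z _ => z.swap) (fun z _ => ?_) (fun z _ hz h => hz ?_)
    (fun z _ => mem_univ _) fun z _ => z.swap_swap
  · rw [chainLink_chainLink hf]
    exact neg_add_cancel _
  · obtain ⟨x, y⟩ := z
    obtain rfl : y = x := congrArg Prod.fst h
    exact hself y

theorem chainBoundary_chainCone {x : α} {X : Set α} {f : Finset α → K}
    (hf : f ∈ orderChains K X) (hX : ∀ y ∈ X, y ≤ x ∨ x ≤ y) :
    chainBoundary K (chainCone x f) = f - chainCone x (chainBoundary K f) := by
  rw [eq_sub_iff_add_eq]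
  simp_rw [chainBoundary_apply, map_sum]
  rw [← sum_add_distrib, sum_eq_single x, chainLink_chainCone_add_chainCone_chainLink]
  · intro y _ hy
    rw [chainLink_chainCone hy hf hX, neg_add_cancel]
  · simp

/-- The reduced homology over `K` of the order complex of `X` vanishes. -/
def OrderAcyclic (K : Type*) [CommRing K] (X : Set α) : Prop :=
  ∀ f ∈ orderChains K X, chainBoundary K f = 0 → ∃ g ∈ orderChains K X, chainBoundary K g = f

theorem orderAcyclic_of_cone {X : Set α} {x : α} (hx : x ∈ X) (hX : ∀ y ∈ X, y ≤ x ∨ x ≤ y) :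
    OrderAcyclic K X := fun f hf hf₀ =>
  ⟨chainCone x f, Set.insert_eq_of_mem hx ▸ chainCone_mem hf hX, by
    rw [chainBoundary_chainCone hf hX, hf₀, map_zero, sub_zero]⟩

theorem OrderAcyclic.insert_point {X : Set α} {x : α} (hX : OrderAcyclic K X)
    (hlink : OrderAcyclic K {y ∈ X | y < x ∨ x < y}) : OrderAcyclic K (insert x X) := by
  intro f hf hf₀
  have hcomp : ∀ y ∈ {y ∈ X | y < x ∨ x < y}, y ≤ x ∨ x ≤ y :=
    fun y hy => hy.2.imp le_of_lt le_of_lt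
  obtain ⟨g, hg, hgf⟩ := hlink (chainLink x f) (chainLink_mem hf) (by
    rw [chainBoundary_chainLink hf, hf₀, map_zero, neg_zero])
  have hcone : chainCone x g ∈ orderChains K (insert x X) :=
    orderChains_mono (Set.insert_subset_insert (Set.sep_subset X _)) (chainCone_mem hg hcomp)
  -- Adding the boundary of the cone over `g` moves the cycle `f` off the point `x`.
  have havoid : f + chainBoundary K (chainCone x g) ∈ orderChains K X := by
    have hmem := Submodule.add_mem _ hf (chainBoundary_mem hcone)
    refine fun c hc => ⟨fun y hy => ((hmem c hc).1 hy).resolve_left ?_, (hmem c hc).2⟩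
    rintro rfl
    refine hc ?_
    have hgc : g c = 0 := by
      by_contra h
      simpa using ((hg c h).1 hy).2
    have hfc := congrFun (chainLink_chainCone_add_chainCone_chainLink y f) c
    rw [Pi.add_apply, chainLink_apply, if_pos (mem_coe.1 hy), zero_add] at hfc
    rw [chainBoundary_chainCone hg hcomp, hgf, Pi.add_apply, Pi.sub_apply, hfc, hgc, zero_sub,
      add_neg_cancel]
  obtain ⟨r, hr, hrf⟩ := hX _ havoid (by
    rw [map_add, hf₀, chainBoundary_chainBoundary hcone, add_zero])
  refine ⟨r - chainCone x g, Submodule.sub_mem _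
    (orderChains_mono (Set.subset_insert x X) hr) hcone, ?_⟩
  rw [map_sub, hrf, add_sub_cancel_right]

end OrderComplex

section Orbits

variable {G β : Type*} [Group G] [MulAction G β] {p : ℕ} [Fact p.Prime] {a : G}

theorem existsUnique_pow_smul_eq_of_mem_orbit_zpowers {b c : β} (hper : a ^ p • b = b)
    (hb : a • b ≠ b) (hc : c ∈ MulAction.orbit (Subgroup.zpowers a) b) :
    ∃! m, m < p ∧ a ^ m • b = c := by
  have hperiod : Function.minimalPeriod (a • ·) b = p := by
    refine Function.minimalPeriod_eq_prime ?_ hb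
    rwa [Function.IsPeriodicPt, smul_iterate]
  obtain ⟨⟨_, z, rfl⟩, hz⟩ := hc
  have hp : (0 : ℤ) < p := mod_cast (Fact.out : p.Prime).pos
  have hlt := Int.emod_lt_of_pos z hp
  have hm : a ^ (z % p).toNat • b = c := by
    rw [← zpow_natCast, Int.toNat_of_nonneg (Int.emod_nonneg z hp.ne'), ← hperiod,
      MulAction.zpow_smul_mod_minimalPeriod]
    exact hz
  have hinj := Function.iterate_injOn_Iio_minimalPeriod (f := (a • ·)) (x := b)
  rw [hperiod] at hinj
  refine ⟨(z % p).toNat, ⟨by omega, hm⟩, fun i ⟨hi, hib⟩ => hinj hi ?_ ?_⟩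
  · exact Set.mem_Iio.2 (by omega)
  · simp only [smul_iterate]
    exact hib.trans hm.symm

theorem exists_sum_smul_eq {M : Type*} [AddCommMonoid M] {f : β → M} (hf : ∀ b, f (a • b) = f b)
    (hper : ∀ b, f b ≠ 0 → a ^ p • b = b) :
    ∃ g : β → M, (∀ b, g b ≠ 0 → f b ≠ 0) ∧
      ∀ b, a • b ≠ b → ∑ i ∈ range p, g (a ^ i • b) = f b := by
  classical
  let rep : β → β := fun b => (⟦b⟧ : MulAction.orbitRel.Quotient (Subgroup.zpowers a) β).out
  have hrep (b : β) (i : ℕ) : rep (a ^ i • b) = rep b :=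
    congrArg Quotient.out (Quotient.sound ⟨⟨a ^ i, i, zpow_natCast a i⟩, rfl⟩)
  have hrep_mem (b : β) : rep b ∈ MulAction.orbit (Subgroup.zpowers a) b :=
    Quotient.exact (Quotient.out_eq (s := MulAction.orbitRel (Subgroup.zpowers a) β) ⟦b⟧)
  have hpow (b : β) (i : ℕ) : f (a ^ i • b) = f b := by
    induction i with
    | zero => rw [pow_zero, one_smul]
    | succ i ih => rw [pow_succ', mul_smul, hf, ih]
  refine ⟨fun b => if b = rep b then f b else 0, fun b hb => (ite_ne_right_iff.1 hb).2,
    fun b hb => ?_⟩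
  simp only [hrep, hpow]
  by_cases hfb : f b = 0
  · simp [hfb]
  obtain ⟨m, ⟨hm, hmb⟩, huniq⟩ :=
    existsUnique_pow_smul_eq_of_mem_orbit_zpowers (hper b hfb) hb (hrep_mem b)
  rw [sum_eq_single_of_mem m (mem_range.2 hm), if_pos hmb]
  exact fun i hi him => if_neg fun hib => him (huniq i ⟨mem_range.1 hi, hib⟩)

end Orbits

section Automorphisms

variable {α : Type*} [PartialOrder α] {K : Type*} [CommRing K]

section Pull

variable [DecidableEq α]

/-- The action of an order automorphism on coefficient functions. -/
def chainPull (K : Type*) [CommRing K] (h : α ≃o α) : Module.End K (Finset α → K) :=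
  LinearMap.funLeft K K (h • ·)

theorem chainPull_apply (h : α ≃o α) (f : Finset α → K) (c : Finset α) :
    chainPull K h f c = f (h • c) :=
  rfl

theorem chainPull_mem {h : α ≃o α} {X : Set α} (hX : h ⁻¹' X ⊆ X)
    {f : Finset α → K} (hf : f ∈ orderChains K X) : chainPull K h f ∈ orderChains K X := by
  intro c hc
  obtain ⟨hsub, hchain⟩ := hf _ hc
  refine ⟨fun x hx => ?_, fun x hx y hy hxy => ?_⟩
  · exact hX (hsub (smul_mem_smul_finset hx))
  · simpa using hchain (smul_mem_smul_finset hx) (smul_mem_smul_finset hy) (h.injective.ne hxy)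

variable [DecidableLT α]

theorem chainSign_smul (h : α ≃o α) (x : α) (c : Finset α) :
    chainSign K (h x) (h • c) = chainSign K x c := by
  unfold chainSign
  congr 1
  rw [smul_finset_def, filter_image, card_image_of_injective _ (MulAction.injective h)]
  simp

theorem chainLink_chainPull (h : α ≃o α) (x : α) (f : Finset α → K) :
    chainLink x (chainPull K h f) = chainPull K h (chainLink (h x) f) := by
  ext c
  have hmem : h x ∈ h • c ↔ x ∈ c := smul_mem_smul_finset_iff (b := x) h
  simp only [chainLink_apply, chainPull_apply, chainSign_smul, hmem, smul_finset_insert,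
    RelIso.smul_def]

theorem chainBoundary_chainPull [Fintype α] (h : α ≃o α) (f : Finset α → K) :
    chainBoundary K (chainPull K h f) = chainPull K h (chainBoundary K f) := by
  simp_rw [chainBoundary_apply, map_sum, chainLink_chainPull]
  exact h.toEquiv.sum_comp fun x => chainPull K h (chainLink x f)

end Pull

section FixedChains

variable [Finite α]

theorem apply_eq_self_of_comparable (h : α ≃o α) {x : α} (hx : x ≤ h x ∨ h x ≤ x) :
    h x = x := by
  by_contra hne
  obtain ⟨n, hn, hper⟩ : x ∈ Function.periodicPts h := h.injective.mem_periodicPts x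
  rcases hx with hx | hx
  · exact (h.strictMono.strictMono_iterate_of_lt_map (lt_of_le_of_ne' hx hne) hn).ne' hper
  · exact (h.strictMono.strictAnti_iterate_of_map_lt (lt_of_le_of_ne hx hne) hn).ne hper

variable [DecidableEq α]

theorem smul_eq_self_iff_of_isChain {h : α ≃o α} {c : Finset α}
    (hc : IsChain (· ≤ ·) (c : Set α)) : h • c = c ↔ ∀ x ∈ c, h x = x := by
  refine ⟨fun heq x hx => apply_eq_self_of_comparable h (hc.total hx ?_), fun hfix => ?_⟩
  · rw [mem_coe, ← heq]
    exact smul_mem_smul_finset hx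
  · exact (image_congr hfix).trans image_id

theorem mem_orderChains_fixedPoints_iff {h : α ≃o α} {X : Set α} {f : Finset α → K} :
    f ∈ orderChains K {x ∈ X | h x = x} ↔
      f ∈ orderChains K X ∧ ∀ c, f c ≠ 0 → h • c = c := by
  refine ⟨fun hf => ⟨orderChains_mono (Set.sep_subset _ _) hf, fun c hc => ?_⟩,
    fun ⟨hf, hfix⟩ c hc => ?_⟩
  · exact (smul_eq_self_iff_of_isChain (hf c hc).2).2 fun x hx => ((hf c hc).1 hx).2
  · obtain ⟨hsub, hchain⟩ := hf c hc
    exact ⟨fun x hx => ⟨hsub hx, (smul_eq_self_iff_of_isChain hchain).1 (hfix c hc) x hx⟩, hchain⟩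

end FixedChains

end Automorphisms

section SmithTheory

variable {α : Type*} [PartialOrder α] {K : Type*} [CommRing K] {h : α ≃o α} {X : Set α}

section Pull

variable [DecidableEq α]

/-- The action of an order automorphism preserving `X` on the chain module of `X`. -/
def orderPull (K : Type*) [CommRing K] (hX : h ⁻¹' X ⊆ X) : Module.End K (orderChains K X) :=
  (chainPull K h).restrict fun _ => chainPull_mem hX

theorem orderPull_pow_apply (hX : h ⁻¹' X ⊆ X) (i : ℕ) (f : orderChains K X) (c : Finset α) :
    ((orderPull K hX ^ i) f).1 c = f.1 (h ^ i • c) := by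
  induction i generalizing f with
  | zero => rw [pow_zero, pow_zero, one_smul, Module.End.one_apply]
  | succ i ih =>
    rw [pow_succ, Module.End.mul_apply, ih, pow_succ', mul_smul]
    rfl

theorem sum_orderPull_pow_apply (hX : h ⁻¹' X ⊆ X) (p : ℕ) (f : orderChains K X) (c : Finset α) :
    ((∑ i ∈ range p, orderPull K hX ^ i) f).1 c = ∑ i ∈ range p, f.1 (h ^ i • c) := by
  simp [LinearMap.sum_apply, orderPull_pow_apply]

theorem smul_eq_self_of_subset {c : Finset α} (hfix : ∀ x ∈ X, h x = x) (hc : ↑c ⊆ X) :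
    h • c = c :=
  (image_congr fun _ hx => hfix _ (hc hx)).trans image_id

theorem orderPull_pow_eq_one (hX : h ⁻¹' X ⊆ X) {p : ℕ} (hp : ∀ x ∈ X, (h ^ p) x = x) :
    orderPull K hX ^ p = 1 := by
  ext f c
  rw [orderPull_pow_apply, Module.End.one_apply]
  by_cases hc : f.1 c = 0
  · by_contra hne
    have hfix := smul_eq_self_of_subset hp (f.2 _ (hc ▸ hne)).1
    exact hne (congrArg f.1 (MulAction.injective (h ^ p) hfix))
  · rw [smul_eq_self_of_subset hp (f.2 c hc).1]

theorem sum_orderPull_pow_apply_eq_zero {p : ℕ} [CharP K p] (hX : h ⁻¹' X ⊆ X)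
    (f : orderChains K X) {c : Finset α} (hc : h • c = c) :
    ((∑ i ∈ range p, orderPull K hX ^ i) f).1 c = 0 := by
  have hpow (i : ℕ) : h ^ i • c = c :=
    (MulAction.stabilizer (α ≃o α) c).pow_mem hc i
  rw [sum_orderPull_pow_apply, sum_congr rfl fun i _ => congrArg f.1 (hpow i), sum_const,
    card_range, nsmul_eq_mul, CharP.cast_eq_zero, zero_mul]

end Pull

section FixedChains

/-- The chains of `X` supported on order-chains fixed by `h`. -/
def fixedChains (K : Type*) [CommRing K] (h : α ≃o α) (X : Set α) :
    Submodule K (orderChains K X) :=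
  (orderChains K {x ∈ X | h x = x}).comap (orderChains K X).subtype

variable [Finite α] [DecidableEq α]

theorem mem_fixedChains_iff {f : orderChains K X} :
    f ∈ fixedChains K h X ↔ ∀ c, f.1 c ≠ 0 → h • c = c :=
  mem_orderChains_fixedPoints_iff.trans (and_iff_right f.2)

theorem orderPull_apply_of_mem_fixedChains (hX : h ⁻¹' X ⊆ X) {f : orderChains K X}
    (hf : f ∈ fixedChains K h X) : orderPull K hX f = f := by
  rw [mem_fixedChains_iff] at hf
  ext c
  change f.1 (h • c) = f.1 c
  by_cases hc : f.1 c = 0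
  · by_contra hne
    exact hne (congrArg f.1 (MulAction.injective h (hf _ (hc ▸ hne))))
  · rw [hf c hc]

theorem disjoint_range_fixedChains {u : Module.End K (orderChains K X)}
    (hu : ∀ f c, h • c = c → (u f).1 c = 0) :
    Disjoint (LinearMap.range u) (fixedChains K h X) := by
  rw [Submodule.disjoint_def]
  rintro _ ⟨f, rfl⟩ hf
  ext c
  by_contra hc
  exact hc (hu f c (mem_fixedChains_iff.1 hf c hc))

theorem ker_orderPull_sub_one_le (hX : h ⁻¹' X ⊆ X) {p : ℕ} [Fact p.Prime]
    (hp : ∀ x ∈ X, (h ^ p) x = x) :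
    LinearMap.ker (orderPull K hX - 1) ≤
      LinearMap.range (∑ i ∈ range p, orderPull K hX ^ i) ⊔ fixedChains K h X := by
  intro f hf
  have hpull : orderPull K hX f = f := sub_eq_zero.1 hf
  obtain ⟨g, hgf, hg⟩ := exists_sum_smul_eq (a := h) (f := f.1) (p := p)
    (fun c => congrFun (congrArg Subtype.val hpull) c)
    fun c hc => smul_eq_self_of_subset hp (f.2 c hc).1
  have hgmem : g ∈ orderChains K X := fun c hc => f.2 c (hgf c hc)
  refine Submodule.mem_sup.2 ⟨_, ⟨⟨g, hgmem⟩, rfl⟩, _, ?_, add_sub_cancel _ f⟩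
  rw [mem_fixedChains_iff]
  intro c hc
  by_contra hne
  refine hc (sub_eq_zero.2 ?_)
  rw [sum_orderPull_pow_apply, hg c hne]

theorem sum_orderPull_pow_apply_eq_zero_of_mem {p : ℕ} [CharP K p] (hX : h ⁻¹' X ⊆ X)
    {f : orderChains K X} (hf : f ∈ fixedChains K h X) :
    (∑ i ∈ range p, orderPull K hX ^ i) f = 0 := by
  have hpow (i : ℕ) : (orderPull K hX ^ i) f = f := by
    induction i with
    | zero => rfl
    | succ i ih =>
      rw [pow_succ, Module.End.mul_apply, orderPull_apply_of_mem_fixedChains hX hf, ih]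
  rw [LinearMap.sum_apply, sum_congr rfl fun i _ => hpow i, sum_const, card_range,
    ← Nat.cast_smul_eq_nsmul K, CharP.cast_eq_zero, zero_smul]

end FixedChains

variable [Fintype α] [DecidableEq α] [DecidableLT α]

/-- The boundary operator on the chain module of `X`. -/
def orderBoundary (K : Type*) [CommRing K] (X : Set α) : Module.End K (orderChains K X) :=
  (chainBoundary K).restrict fun _ => chainBoundary_mem

theorem OrderAcyclic.exact (hacyc : OrderAcyclic K X) :
    Function.Exact (orderBoundary K X) (orderBoundary K X) := by
  refine fun f => ⟨fun hf => ?_, ?_⟩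
  · obtain ⟨g, hg, hgf⟩ := hacyc f f.2 (congrArg Subtype.val hf)
    exact ⟨⟨g, hg⟩, Subtype.ext hgf⟩
  · rintro ⟨g, rfl⟩
    exact Subtype.ext (chainBoundary_chainBoundary g.2)

theorem commute_orderBoundary_orderPull (hX : h ⁻¹' X ⊆ X) :
    Commute (orderBoundary K X) (orderPull K hX) :=
  LinearMap.ext fun f => Subtype.ext (chainBoundary_chainPull h f.1)

theorem commute_orderBoundary_orderPull_sub_one (hX : h ⁻¹' X ⊆ X) :
    Commute (orderBoundary K X) (orderPull K hX - 1) :=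
  Commute.sub_right (R := Module.End K (orderChains K X)) (commute_orderBoundary_orderPull hX)
    (.one_right _)

theorem OrderAcyclic.fixedPoints {K : Type*} [Field K] {p : ℕ} [CharP K p] [Fact p.Prime]
    (hacyc : OrderAcyclic K X) (hX : h ⁻¹' X ⊆ X) (hp : ∀ x ∈ X, (h ^ p) x = x) :
    OrderAcyclic K {x ∈ X | h x = x} := by
  set T := orderPull K hX
  set t := ∑ i ∈ range p, T ^ i
  have hperiod : T ^ p = 1 := orderPull_pow_eq_one hX hp
  have hTt : (T - 1) * t = 0 := (mul_geom_sum T p).trans (sub_eq_zero.2 hperiod)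
  have htT : t * (T - 1) = 0 := (geom_sum_mul T p).trans (sub_eq_zero.2 hperiod)
  have hTW : fixedChains K h X ≤ LinearMap.ker (T - 1) := fun w hw =>
    sub_eq_zero.2 (orderPull_apply_of_mem_fixedChains hX hw)
  have hsmith := inf_ker_le_map_of_smith_decomposition (W := fixedChains K h X) (s := T - 1)
    (t := t) hacyc.exact (commute_orderBoundary_orderPull_sub_one hX)
    (.sum_right _ _ _ fun i _ => (commute_orderBoundary_orderPull hX).pow_right i)
    (fun w => ?_)
    ((ker_orderPull_sub_one_le hX hp).antisymm (sup_le (LinearMap.range_le_ker_iff.2 hTt) hTW))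
    (disjoint_range_fixedChains fun f c hc => sum_orderPull_pow_apply_eq_zero hX f hc)
    (disjoint_range_fixedChains fun f c hc => sub_eq_zero.2 (congrArg f.1 hc))
    (LinearMap.range_le_ker_iff.2 htT)
    fun w hw => sum_orderPull_pow_apply_eq_zero_of_mem hX hw
  · intro f hf hf₀
    obtain ⟨g, hg, hgf⟩ := hsmith (x := ⟨f, orderChains_mono (Set.sep_subset _ _) hf⟩)
      ⟨hf, Subtype.ext hf₀⟩
    exact ⟨g, hg, congrArg Subtype.val hgf⟩
  · rintro ⟨w, hw, rfl⟩
    exact chainBoundary_mem (f := w.1) hw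

end SmithTheory

section Lefschetz

variable {α : Type*} {K : Type*} [CommRing K]

/-- The grading operator of the chain complex: multiplication by `(-1) ^ #c` at the chain `c`. -/
def chainGrade (K : Type*) [CommRing K] : Module.End K (Finset α → K) :=
  LinearMap.mulLeft K fun c => (-1) ^ #c

theorem chainGrade_apply (f : Finset α → K) (c : Finset α) : chainGrade K f c = (-1) ^ #c * f c :=
  rfl

variable [PartialOrder α] [DecidableEq α]

theorem trace_mulLeft_mul_chainPull [Fintype α] (χ : Finset α → K) (h : α ≃o α) :
    LinearMap.trace K _ (LinearMap.mulLeft K χ * chainPull K h) = ∑ c with h • c = c, χ c := by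
  rw [LinearMap.trace_eq_matrix_trace K (Pi.basisFun K (Finset α)), Matrix.trace, sum_filter]
  refine sum_congr rfl fun c _ => ?_
  simp [chainPull_apply, Pi.single_apply]

variable [DecidableLT α]

theorem chainLink_chainGrade (x : α) (f : Finset α → K) :
    chainLink x (chainGrade K f) = -chainGrade K (chainLink x f) := by
  ext c
  rw [Pi.neg_apply, chainGrade_apply, chainLink_apply, chainLink_apply]
  split_ifs with hx
  · simp
  · rw [chainGrade_apply, card_insert_of_notMem hx]
    ring

variable [Fintype α] {h : α ≃o α} {X : Set α}

theorem chainBoundary_chainGrade (f : Finset α → K) :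
    chainBoundary K (chainGrade K f) = -chainGrade K (chainBoundary K f) := by
  simp_rw [chainBoundary_apply, chainLink_chainGrade, sum_neg_distrib, map_sum]

open scoped Classical in
theorem OrderAcyclic.sum_chains_fixedPoints_eq_zero {K : Type*} [Field K]
    (hacyc : OrderAcyclic K X) (hX : h ⁻¹' X ⊆ X) :
    ∑ c ∈ {c : Finset α | (c : Set α) ⊆ {x ∈ X | h x = x} ∧ IsChain (· ≤ ·) (c : Set α)},
      (-1 : K) ^ #c = 0 := by
  let χ (c : Finset α) : K :=
    if (c : Set α) ⊆ X ∧ IsChain (· ≤ ·) (c : Set α) then (-1) ^ #c else 0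
  let e := LinearMap.mulLeft K χ * chainPull K h
  have he (f : Finset α → K) : e f ∈ orderChains K X := fun c hc =>
    (ite_ne_right_iff.1 (left_ne_zero_of_mul hc)).1
  have heq {f : Finset α → K} (hf : f ∈ orderChains K X) :
      e f = chainGrade K (chainPull K h f) := by
    ext c
    change χ c * _ = (-1) ^ #c * _
    by_cases hc : chainPull K h f c = 0
    · rw [hc, mul_zero, mul_zero]
    · rw [show χ c = (-1) ^ #c from if_pos (chainPull_mem hX hf c hc)]
  have htrace := trace_eq_zero_of_exact (e := e.restrict fun f _ => he f) hacyc.exact <| by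
    refine LinearMap.ext fun f => Subtype.ext ?_
    change chainBoundary K (e f.1) = -e (chainBoundary K f.1)
    rw [heq f.2, heq (chainBoundary_mem f.2), chainBoundary_chainGrade, chainBoundary_chainPull]
  rw [LinearMap.trace_restrict_eq_of_forall_mem _ _ he, trace_mulLeft_mul_chainPull,
    ← sum_filter, filter_filter] at htrace
  rw [← htrace]
  refine sum_congr (filter_congr fun c _ => ?_) fun _ _ => rfl
  rw [Set.subset_ofPred]
  constructor
  · rintro ⟨hsub, hchain⟩
    exact ⟨(smul_eq_self_iff_of_isChain hchain).2 fun x hx => (hsub x hx).2,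
      fun x hx => (hsub x hx).1, hchain⟩
  · rintro ⟨hfix, hsub, hchain⟩
    exact ⟨fun x hx => ⟨hsub hx, (smul_eq_self_iff_of_isChain hchain).1 hfix x hx⟩, hchain⟩

theorem OrderAcyclic.exists_fixedPoint {K : Type*} [Field K] (hacyc : OrderAcyclic K X)
    (hX : h ⁻¹' X ⊆ X) : ∃ x ∈ X, h x = x := by
  classical
  by_contra! hno
  have hempty : {x ∈ X | h x = x} = ∅ := Set.eq_empty_of_forall_notMem fun x hx => hno x hx.1 hx.2
  have heuler := hacyc.sum_chains_fixedPoints_eq_zero hX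
  rw [sum_eq_single ∅] at heuler
  · simp at heuler
  · intro c hc hne
    rw [mem_filter_univ, hempty, Set.subset_empty_iff, coe_eq_empty] at hc
    exact absurd hc.1 hne
  · simp

end Lefschetz

section PGroups

theorem exists_normal_subgroup_card_of_card_eq_prime_pow_succ {G : Type*} [Group G] {p n : ℕ}
    [hp : Fact p.Prime] (hG : Nat.card G = p ^ (n + 1)) :
    ∃ R : Subgroup G, R.Normal ∧ Nat.card R = p ^ n ∧ R.index = p := by
  have : Finite G := Nat.finite_of_card_ne_zero (by simp [hG, hp.out.ne_zero])
  obtain ⟨R, hR⟩ := Sylow.exists_subgroup_card_pow_prime (G := G) p (n := n)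
    (hG ▸ pow_dvd_pow p n.le_succ)
  have hindex : R.index = p := by
    have := R.card_mul_index
    rw [hG, hR, pow_succ] at this
    exact Nat.eq_of_mul_eq_mul_left (pow_pos hp.out.pos n) this
  refine ⟨R, Subgroup.normal_of_index_eq_minFac_card ?_, hR, hindex⟩
  rw [hindex, hG, hp.out.pow_minFac n.succ_ne_zero]

theorem eq_top_of_index_prime {G : Type*} [Group G] {R S : Subgroup G} (hR : R.index.Prime)
    (hlt : R < S) : S = ⊤ := by
  have hmul := Subgroup.relIndex_mul_index hlt.le
  rw [← Subgroup.index_eq_one]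
  refine ((Nat.prime_mul_iff.1 (hmul ▸ hR)).resolve_right fun h => ?_).2
  exact hlt.not_ge (Subgroup.relIndex_eq_one.1 h.2)

end PGroups

section FixedPointTheorem

variable {α : Type*} [PartialOrder α] [Fintype α] [DecidableEq α] [DecidableLT α]
  {K : Type*} [Field K] {p : ℕ} [CharP K p] [Fact p.Prime] {X : Set α}

theorem OrderAcyclic.fixedPoints_of_isPGroup {G : Type*} [Group G] [Finite G] (hG : IsPGroup p G)
    (hacyc : OrderAcyclic K X) (φ : G →* α ≃o α) (hφ : ∀ g, φ g ⁻¹' X ⊆ X) :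
    OrderAcyclic K {x ∈ X | ∀ g, φ g x = x} := by
  obtain ⟨n, hn⟩ := IsPGroup.iff_card.1 hG
  clear hG
  induction n generalizing G with
  | zero =>
    have : Subsingleton G := (Nat.card_eq_one_iff_unique.1 hn).1
    convert hacyc
    ext x
    simp [Subsingleton.elim _ (1 : G)]
  | succ n ih =>
    obtain ⟨R, hnormal, hcard, hindex⟩ := exists_normal_subgroup_card_of_card_eq_prime_pow_succ hn
    have hprime : R.index.Prime := hindex ▸ Fact.out
    obtain ⟨g, -, hg⟩ := SetLike.exists_of_lt (lt_top_iff_ne_top.2 fun h : R = ⊤ =>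
      hprime.ne_one (Subgroup.index_eq_one.2 h))
    have hY := ih (φ.comp R.subtype) (fun r => hφ r) hcard
    convert hY.fixedPoints (p := p) (h := φ g) (fun x hx => ⟨hφ g hx.1, fun r => ?_⟩)
      fun x hx => ?_ using 1
    · ext x
      let S := (MulAction.stabilizer (α ≃o α) x).comap φ
      refine ⟨fun hx => ⟨⟨hx.1, fun r => hx.2 r⟩, hx.2 g⟩, fun hx => ⟨hx.1.1, fun a => ?_⟩⟩
      have hlt : R < S := SetLike.lt_iff_le_and_exists.2
        ⟨fun r hr => hx.1.2 ⟨r, hr⟩, g, hx.2, hg⟩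
      exact (eq_top_of_index_prime hprime hlt).ge (Subgroup.mem_top a)
    · refine (φ g).injective ?_
      have hconj := hx.2 ⟨g * r * g⁻¹, hnormal.conj_mem r r.2 g⟩
      simpa using hconj
    · simpa using hx.2 ⟨g ^ p, hindex ▸ R.pow_index_mem g⟩

/-- Oliver's fixed point theorem. -/
theorem OrderAcyclic.exists_fixedPoint_of_mem_normalizer {G : Type*} [Group G] {Q : Subgroup G}
    [Finite Q] (hQ : IsPGroup p Q) {θ : G} (hθ : θ ∈ Subgroup.normalizer (Q : Set G))
    (hacyc : OrderAcyclic K X) (φ : G →* α ≃o α) (hφ : ∀ g, φ g ⁻¹' X ⊆ X) :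
    ∃ x ∈ X, (∀ g ∈ Q, φ g x = x) ∧ φ θ x = x := by
  have hY := hacyc.fixedPoints_of_isPGroup hQ (φ.comp Q.subtype) fun g => hφ g
  obtain ⟨x, ⟨hx, hfix⟩, hθx⟩ := hY.exists_fixedPoint (h := φ θ) fun x hx =>
    ⟨hφ θ hx.1, fun g => (φ θ).injective <| by
      have hconj := hx.2 ⟨θ * g * θ⁻¹, (Subgroup.mem_normalizer_iff.1 hθ g).1 g.2⟩
      simpa using hconj⟩
  exact ⟨x, hx, fun g hg => hfix ⟨g, hg⟩, hθx⟩

end FixedPointTheorem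

section Faces

variable {ι : Type*} [DecidableEq ι] {A B : Finset ι} {i : ι}

theorem Ioc_eq_Ioc_erase_union_Icc_insert (hi : i ∉ A) :
    Set.Ioc A B = Set.Ioc A (B.erase i) ∪ Set.Icc (insert i A) B := by
  ext F
  constructor
  · rintro ⟨hAF, hFB⟩
    by_cases hiF : i ∈ F
    · exact Or.inr ⟨insert_subset hiF hAF.le, hFB⟩
    · exact Or.inl ⟨hAF, subset_erase.2 ⟨hFB, hiF⟩⟩
  · rintro (⟨hAF, hFB⟩ | ⟨hAF, hFB⟩)
    · exact ⟨hAF, hFB.trans (erase_subset i B)⟩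
    · exact ⟨(ssubset_insert hi).trans_le hAF, hFB⟩

variable [Fintype ι] {K : Type*} [Field K]

-- The faces through `i` are adjoined from the largest down: the link of a new face `F` is then a
-- cone with apex `F.erase i`.
theorem OrderAcyclic.union_star {D : Set (Finset ι)} (hD : OrderAcyclic K D)
    (hDi : ∀ F ∈ D, i ∉ F) {S : Set (Finset ι)} (hS : ∀ F ∈ S, i ∈ F ∧ F.erase i ∈ D) :
    OrderAcyclic K (D ∪ S) := by
  induction hn : S.ncard generalizing S with
  | zero => rwa [(Set.ncard_eq_zero S.toFinite).1 hn, Set.union_empty]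
  | succ n ih =>
    obtain ⟨x, hxS, hmin⟩ :=
      S.toFinite.exists_minimal (Set.nonempty_of_ncard_ne_zero (by omega))
    have hrest := ih (fun F (hF : F ∈ S \ {x}) => hS F hF.1)
      (by rw [Set.ncard_sdiff_singleton_of_mem hxS, hn, Nat.add_sub_cancel])
    rw [← Set.insert_sdiff_self_of_mem hxS, Set.union_insert]
    have hlt : x.erase i < x := erase_ssubset (hS x hxS).1
    refine hrest.insert_point
      (orderAcyclic_of_cone (x := x.erase i) ⟨Or.inl (hS x hxS).2, Or.inl hlt⟩ ?_)
    rintro y ⟨hy | hy, hyx | hyx⟩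
    · exact Or.inl (subset_erase.2 ⟨hyx.le, hDi y hy⟩)
    · exact Or.inr (hlt.trans hyx).le
    · exact absurd (hmin hy.1 hyx.le) hyx.not_ge
    · exact Or.inr (hlt.trans hyx).le

theorem OrderAcyclic.inter_Ioc_of_link_of_deletion {Δ : Set (Finset ι)} (hΔ : IsLowerSet Δ)
    (hAB : A ⊆ B) (hi : i ∈ B \ A) (hdel : OrderAcyclic K (Δ ∩ Set.Ioc A (B.erase i)))
    (hlink : insert i A ∈ Δ → OrderAcyclic K (Δ ∩ Set.Ioc (insert i A) B)) :
    OrderAcyclic K (Δ ∩ Set.Ioc A B) := by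
  obtain ⟨hiB, hiA⟩ := mem_sdiff.1 hi
  rw [Ioc_eq_Ioc_erase_union_Icc_insert hiA, Set.inter_union_distrib_left]
  by_cases hA : insert i A ∈ Δ
  · have hdel_notMem : ∀ F ∈ Δ ∩ Set.Ioc A (B.erase i), i ∉ F := fun F hF hiF =>
      notMem_erase i B (hF.2.2 hiF)
    rw [← Set.Ioc_insert_left (insert_subset hiB hAB), Set.inter_insert_of_mem hA,
      Set.union_insert]
    refine (hdel.union_star hdel_notMem fun F hF => ?_).insert_point ?_
    · have hiF : i ∈ F := hF.2.1.le (mem_insert_self i A)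
      refine ⟨hiF, hΔ (erase_subset i F) hF.1, ?_, erase_subset_erase i hF.2.2⟩
      refine lt_of_le_of_ne (subset_erase.2 ⟨(subset_insert i A).trans hF.2.1.le, hiA⟩) fun h => ?_
      exact hF.2.1.ne (by rw [h, insert_erase hiF])
    · convert hlink hA using 1
      ext F
      constructor
      · rintro ⟨hF | hF, hlt | hlt⟩
        · exact absurd ((subset_insert_iff_of_notMem (hdel_notMem F hF)).1 hlt.le) hF.2.1.not_ge
        · exact absurd (hlt.le (mem_insert_self i A)) (hdel_notMem F hF)
        · exact hF
        · exact hF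
      · exact fun hF => ⟨Or.inr hF, Or.inr hF.2.1⟩
  · have hempty : Δ ∩ Set.Icc (insert i A) B = ∅ :=
      Set.eq_empty_of_forall_notMem fun F hF => hA (hΔ hF.2.1 hF.1)
    rwa [hempty, Set.union_empty]

end Faces

section DecisionTree

variable {ι : Type}

-- A query of `i` splits the complex into the deletion and the link of `i`.
theorem DecisionTree.orderAcyclic [Fintype ι] [DecidableEq ι] {K : Type*} [Field K]
    {Δ : Set (Finset ι)} (hΔ : IsLowerSet Δ) (T : DecisionTree ι) {A B : Finset ι}
    (hAB : A ⊆ B) (hA : A ∈ Δ)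
    (hT : ∀ F ∈ Set.Icc A B, T.eval (fun i => decide (i ∈ F)) = true ↔ F ∈ Δ)
    (hdepth : T.depth < #(B \ A)) : OrderAcyclic K (Δ ∩ Set.Ioc A B) := by
  induction T generalizing A B with
  | leaf b =>
    have hb : b = true := (hT A ⟨le_rfl, hAB⟩).2 hA
    have hB : B ∈ Δ := (hT B ⟨hAB, le_rfl⟩).1 hb
    have hne : A ≠ B := by
      rintro rfl
      simp at hdepth
    exact orderAcyclic_of_cone ⟨hB, hAB.ssubset_of_ne hne, le_rfl⟩ fun F hF => Or.inl hF.2.2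
  | node i t f iht ihf =>
    rw [depth] at hdepth
    have hTt (F) (hF : F ∈ Set.Icc A B) (hi : i ∈ F) :
        t.eval (fun i => decide (i ∈ F)) = true ↔ F ∈ Δ := by
      simpa [eval, hi] using hT F hF
    have hTf (F) (hF : F ∈ Set.Icc A B) (hi : i ∉ F) :
        f.eval (fun i => decide (i ∈ F)) = true ↔ F ∈ Δ := by
      simpa [eval, hi] using hT F hF
    by_cases hiA : i ∈ A
    · exact iht hAB hA (fun F hF => hTt F hF (hF.1 hiA)) (by omega)
    by_cases hiB : i ∈ B
    · have hi : i ∈ B \ A := mem_sdiff.2 ⟨hiB, hiA⟩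
      have hcard := card_erase_of_mem hi
      refine OrderAcyclic.inter_Ioc_of_link_of_deletion hΔ hAB hi
        (ihf (subset_erase.2 ⟨hAB, hiA⟩) hA (fun F hF => ?_) (by rw [erase_sdiff_comm]; omega))
        fun hiAΔ => iht (insert_subset hiB hAB) hiAΔ (fun F hF => ?_) (by rw [sdiff_insert]; omega)
      · exact hTf F ⟨hF.1, hF.2.trans (erase_subset i B)⟩ fun hiF => notMem_erase i B (hF.2 hiF)
      · exact hTt F ⟨(subset_insert i A).trans hF.1, hF.2⟩ (hF.1 (mem_insert_self i A))
    · exact ihf hAB hA (fun F hF => hTf F hF fun hiF => hiB (hF.2 hiF)) (by omega)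

theorem DecisionTree.exists_depth_le_card {S : Finset ι} {f : (ι → Bool) → Bool}
    (hf : DependsOn f S) : ∃ T : DecisionTree ι, (∀ x, T.eval x = f x) ∧ T.depth ≤ #S := by
  classical
  induction S using Finset.induction_on generalizing f with
  | empty => exact ⟨.leaf (f fun _ => true), fun x => hf (by simp), by simp [depth]⟩
  | insert i S hi ih =>
    have hdep (b : Bool) : DependsOn (fun x => f (Function.update x i b)) S := fun x y hxy => by
      refine hf fun j hj => ?_
      by_cases hji : j = i
      · simp [hji]
      · simpa [hji] using hxy j ((mem_insert.1 hj).resolve_left hji)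
    obtain ⟨t, ht, htdepth⟩ := ih (hdep true)
    obtain ⟨u, hu, hudepth⟩ := ih (hdep false)
    refine ⟨.node i t u, fun x => ?_, ?_⟩
    · cases hx : x i
      · rw [eval, if_neg (by simp [hx]), hu, ← hx, Function.update_eq_self]
      · rw [eval, if_pos hx, ht, ← hx, Function.update_eq_self]
    · rw [card_insert_of_notMem hi, depth]
      exact Nat.succ_le_succ (max_le htdepth hudepth)

end DecisionTree

section GraphProperties

variable {n : ℕ} {V W : Type*}

instance : Fintype (EdgeVar n) := inferInstanceAs (Fintype {p : Fin n × Fin n // p.1 < p.2})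

instance : DecidableEq (EdgeVar n) :=
  inferInstanceAs (DecidableEq {p : Fin n × Fin n // p.1 < p.2})

theorem card_edgeVar : Fintype.card (EdgeVar n) = n * (n - 1) / 2 := by
  have h : Fintype.card (EdgeVar n) = #{p : Fin n × Fin n | p.1 < p.2} :=
    Fintype.card_subtype _
  rw [h, ← sum_range_id, ← Fin.sum_univ_eq_sum_range (fun i => i), card_filter,
    Fintype.sum_prod_type_right]
  refine sum_congr rfl fun j _ => ?_
  rw [← card_filter, filter_gt_eq_Iio, Fin.card_Iio]

theorem graphOfInput_adj (x : EdgeVar n → Bool) (v : EdgeVar n) :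
    (graphOfInput x).Adj v.1.1 v.1.2 ↔ x v = true := by
  rw [graphOfInput, SimpleGraph.fromRel_adj]
  constructor
  · rintro ⟨-, ⟨_, hx⟩ | ⟨hlt, _⟩⟩
    · exact hx
    · exact absurd v.2 hlt.asymm
  · exact fun h => ⟨v.2.ne, Or.inl ⟨v.2, h⟩⟩

theorem le_iff_forall_edgeVar {G H : SimpleGraph (Fin n)} :
    G ≤ H ↔ ∀ v : EdgeVar n, G.Adj v.1.1 v.1.2 → H.Adj v.1.1 v.1.2 := by
  refine ⟨fun h v hv => h hv, fun h a b hab => ?_⟩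
  rcases lt_or_gt_of_ne hab.ne with hlt | hlt
  · exact h ⟨(a, b), hlt⟩ hab
  · exact (h ⟨(b, a), hlt⟩ hab.symm).symm

open Classical in
/-- The correspondence between sets of adjacency variables and graphs, which lets a property of
graphs be treated as a family of finite sets. -/
noncomputable def edgeSetGraph (n : ℕ) : Finset (EdgeVar n) ≃o SimpleGraph (Fin n) where
  toFun F := graphOfInput fun v => decide (v ∈ F)
  invFun G := {v | G.Adj v.1.1 v.1.2}
  left_inv F := by
    ext v
    simp [graphOfInput_adj]
  right_inv G := by
    refine le_antisymm ?_ ?_ <;> simp [le_iff_forall_edgeVar, graphOfInput_adj]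
  map_rel_iff' {F F'} := by
    simp [le_iff_forall_edgeVar, graphOfInput_adj, subset_iff]

/-- Transport of graphs along a bijection of the vertex sets, as an isomorphism of lattices. -/
def relabel (ε : V ≃ W) : SimpleGraph V ≃o SimpleGraph W where
  toEquiv := ε.simpleGraph
  map_rel_iff' {G H} :=
    ⟨fun h a b hab => by simpa using @h (ε a) (ε b) (by simpa using hab), fun h _ _ hab => h hab⟩

/-- The automorphism group of a graph, as a subgroup of the permutations of its vertices. -/
def automorphismSubgroup (G : SimpleGraph V) : Subgroup (Equiv.Perm V) where
  carrier := {σ | relabel σ G = G}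
  one_mem' := rfl
  mul_mem' {σ _} hσ hτ := (congrArg (relabel σ) hτ).trans hσ
  inv_mem' {σ} hσ := (relabel σ).symm_apply_eq.2 hσ.symm

theorem mem_automorphismSubgroup {σ : Equiv.Perm V} {G : SimpleGraph V} :
    σ ∈ automorphismSubgroup G ↔ relabel σ G = G :=
  Iff.rfl

theorem adj_iff_of_mem_automorphismSubgroup {σ : Equiv.Perm V} {G : SimpleGraph V}
    (hσ : σ ∈ automorphismSubgroup G) (a b : V) : G.Adj (σ a) (σ b) ↔ G.Adj a b := by
  conv_lhs => rw [← mem_automorphismSubgroup.1 hσ]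
  simp [relabel]

theorem degree_eq_of_mem_automorphismSubgroup {G : SimpleGraph V} [G.LocallyFinite]
    {σ : Equiv.Perm V} (hσ : σ ∈ automorphismSubgroup G) (v : V) :
    G.degree (σ v) = G.degree v :=
  SimpleGraph.Iso.degree_eq
    (⟨σ, adj_iff_of_mem_automorphismSubgroup hσ _ _⟩ : G ≃g G) v

theorem IsGraphProperty.relabel_mem {P : Set (SimpleGraph (Fin n))} (hP : IsGraphProperty P)
    (σ : Equiv.Perm (Fin n)) {G : SimpleGraph (Fin n)} (hG : G ∈ P) : relabel σ G ∈ P := by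
  have h := hP σ G hG
  rwa [← SimpleGraph.comap_symm] at h

theorem exists_decisionTree_of_not_evasive {P : Set (SimpleGraph (Fin n))} (hP : ¬ Evasive P) :
    ∃ T : DecisionTree (EdgeVar n), (∀ x, T.eval x = true ↔ graphOfInput x ∈ P) ∧
      T.depth < n * (n - 1) / 2 := by
  classical
  obtain ⟨T, hT, hd⟩ := DecisionTree.exists_depth_le_card (S := (univ : Finset (EdgeVar n)))
    (f := fun x => decide (graphOfInput x ∈ P)) (by simpa using dependsOn_univ _)
  rw [card_univ, card_edgeVar] at hd
  have hmem : n * (n - 1) / 2 ∈ {d | ∃ T : DecisionTree (EdgeVar n),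
      (∀ x, T.eval x = true ↔ graphOfInput x ∈ P) ∧ T.depth ≤ d} :=
    ⟨T, fun x => by simp [hT], hd⟩
  obtain ⟨T', hT', hd'⟩ := Nat.sInf_mem ⟨_, hmem⟩
  exact ⟨T', hT', hd'.trans_lt (lt_of_le_of_ne (Nat.sInf_le hmem) hP)⟩

theorem orderAcyclic_of_not_evasive {K : Type*} [Field K] {P : Set (SimpleGraph (Fin n))}
    (hmono : MonotoneDecreasing P) (hne : P.Nonempty) (hP : ¬ Evasive P) :
    OrderAcyclic K (edgeSetGraph n ⁻¹' P ∩ Set.Ioc ∅ univ) := by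
  obtain ⟨T, hT, hd⟩ := exists_decisionTree_of_not_evasive hP
  obtain ⟨G, hG⟩ := hne
  exact T.orderAcyclic (Δ := edgeSetGraph n ⁻¹' P)
    (fun F F' hFF' hF => hmono _ _ ((edgeSetGraph n).monotone hFF') hF)
    (empty_subset _) (hmono G _ (map_bot (edgeSetGraph n) ▸ bot_le) hG) (fun F _ => hT _)
    (by simpa [card_edgeVar] using hd)

theorem exists_invariant_graph {P : Set (SimpleGraph (Fin n))} (hsymm : IsGraphProperty P)
    (hmono : MonotoneDecreasing P) (hne : P.Nonempty) (hP : ¬ Evasive P) {p : ℕ} [Fact p.Prime]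
    (ε : V ≃ Fin n) {Q : Subgroup (Equiv.Perm V)} [Finite Q] (hQ : IsPGroup p Q)
    {θ : Equiv.Perm V} (hθ : θ ∈ Subgroup.normalizer (Q : Set (Equiv.Perm V))) :
    ∃ G : SimpleGraph V, relabel ε G ∈ P ∧ G ≠ ⊥ ∧ Q ≤ automorphismSubgroup G ∧
      θ ∈ automorphismSubgroup G := by
  let e : Finset (EdgeVar n) ≃o SimpleGraph V := (edgeSetGraph n).trans (relabel ε.symm)
  let φ : Equiv.Perm V →* (Finset (EdgeVar n) ≃o Finset (EdgeVar n)) :=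
    { toFun σ := (e.trans (relabel σ)).trans e.symm
      map_one' := OrderIso.ext <| funext e.symm_apply_apply
      map_mul' σ τ := OrderIso.ext <| funext fun F =>
        congrArg (e.symm ∘ relabel σ) (e.apply_symm_apply (relabel τ (e F))).symm }
  have hφ (σ F) : e (φ σ F) = relabel σ (e F) := e.apply_symm_apply _
  have he (F) : edgeSetGraph n F = relabel ε (e F) := ((relabel ε).apply_symm_apply _).symm
  have hφP (σ) (F) (hF : edgeSetGraph n F ∈ P) : edgeSetGraph n (φ σ F) ∈ P := by
    rw [he, hφ]
    exact hsymm.relabel_mem ((ε.symm.trans σ).trans ε) hF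
  obtain ⟨F, ⟨hFP, hF⟩, hFQ, hFθ⟩ :=
    (orderAcyclic_of_not_evasive (K := ZMod p) hmono hne hP).exists_fixedPoint_of_mem_normalizer
      hQ hθ φ fun σ F ⟨hFP, hF⟩ => ⟨by simpa [← RelIso.mul_apply, ← map_mul] using hφP σ⁻¹ _ hFP,
        (φ σ).lt_iff_lt.1 ((map_bot (φ σ)).trans_lt hF.1), subset_univ F⟩
  refine ⟨e F, he F ▸ hFP, fun h => hF.1.ne' ((map_eq_bot_iff e).1 h), fun σ hσ => ?_, ?_⟩
  · rw [mem_automorphismSubgroup, ← hφ, hFQ σ hσ]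
  · rw [mem_automorphismSubgroup, ← hφ, hFθ]

end GraphProperties

section BlockPermutations

/-- The permutations `(i, x) ↦ (i, t i + x)` of `ι × A`, translating every block `{i} × A`
separately. -/
def blockTranslate (ι A : Type*) [AddGroup A] : Multiplicative (ι → A) →* Equiv.Perm (ι × A) where
  toFun t := (Equiv.refl ι).prodShear fun i => Equiv.addLeft (t.toAdd i)
  map_one' := by
    ext <;> simp
  map_mul' s t := by
    ext <;> simp

theorem blockTranslate_ofAdd_apply {ι A : Type*} [AddGroup A] (t : ι → A) (v : ι × A) :
    blockTranslate ι A (.ofAdd t) v = (v.1, t v.1 + v.2) := rfl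

theorem isPGroup_range_blockTranslate (p : ℕ) (ι R : Type*) [Ring R] [CharP R p] :
    IsPGroup p (blockTranslate ι R).range := by
  refine IsPGroup.of_surjective (fun t => ⟨1, ?_⟩) _ (blockTranslate ι R).rangeRestrict_surjective
  rw [pow_one, ← ofAdd_toAdd t, ← ofAdd_nsmul, ← Nat.cast_smul_eq_nsmul R p, CharP.cast_eq_zero,
    zero_smul, ofAdd_zero]

variable {k : ℕ} {F : Type*}

/-- The cyclic shift `(i, x) ↦ (i + 1, w i * x)` of the blocks `{i} × F`, twisted by units `w`. -/
def blockShift [Monoid F] (w : ZMod k → Fˣ) : Equiv.Perm (ZMod k × F) :=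
  (Equiv.addRight 1).prodShear fun i => (w i).mulLeft

theorem blockShift_apply [Monoid F] (w : ZMod k → Fˣ) (v : ZMod k × F) :
    blockShift w v = (v.1 + 1, w v.1 * v.2) := rfl

theorem blockShift_mem_normalizer [NeZero k] [Ring F] [Finite F] (w : ZMod k → Fˣ) :
    blockShift w ∈ Subgroup.normalizer
      ((blockTranslate (ZMod k) F).range : Set (Equiv.Perm (ZMod k × F))) := by
  refine Subgroup.mem_normalizer_fintype ?_
  rintro _ ⟨s, rfl⟩
  obtain ⟨t, rfl⟩ := Multiplicative.ofAdd.surjective s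
  refine ⟨.ofAdd fun i => w (i - 1) * t (i - 1), eq_mul_inv_of_mul_eq (Equiv.ext fun v => ?_)⟩
  simp [blockTranslate_ofAdd_apply, blockShift_apply, mul_add]

theorem blockShift_pow_apply [CommMonoid F] (w : ZMod k → Fˣ) (m : ℕ) (x : F) :
    (blockShift w ^ m) (0, x) = ((m : ZMod k), ↑(∏ i ∈ range m, w i) * x) := by
  induction m with
  | zero => simp
  | succ m ih =>
    rw [pow_succ', Equiv.Perm.mul_apply, ih, blockShift_apply, prod_range_succ,
      mul_comm (∏ _ ∈ _, _), Units.val_mul, mul_assoc, Nat.cast_succ]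

theorem blockShift_pow_pow_apply [CommMonoid F] (w : ZMod k → Fˣ) (m : ℕ) (x : F) :
    ((blockShift w ^ k) ^ m) (0, x) = (0, ↑((∏ i ∈ range k, w i) ^ m) * x) := by
  induction m with
  | zero => simp
  | succ m ih =>
    rw [pow_succ', Equiv.Perm.mul_apply, ih, blockShift_pow_apply, ZMod.natCast_self, pow_succ',
      Units.val_mul, mul_assoc]

theorem exists_forall_mem_powers_prod_range (k : ℕ) [NeZero k] (F : Type*) [Field F] [Finite F] :
    ∃ w : ZMod k → Fˣ, ∀ u : Fˣ, u ∈ Submonoid.powers (∏ i ∈ range k, w i) := by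
  obtain ⟨ω, hω⟩ := IsCyclic.exists_monoid_generator (α := Fˣ)
  refine ⟨Pi.mulSingle 0 ω, ?_⟩
  rw [prod_eq_single_of_mem 0 (mem_range.2 (NeZero.pos k)) fun i hi hi0 => ?_]
  · simpa using hω
  · refine Pi.mulSingle_eq_of_ne (fun h => hi0 ?_) _
    exact Nat.eq_zero_of_dvd_of_lt ((ZMod.natCast_eq_zero_iff _ _).1 h) (mem_range.1 hi)

section InvariantGraph

variable {H : SimpleGraph (ZMod k × F)}

theorem exists_mem_automorphismSubgroup_apply_zero [NeZero k] [CommRing F] {w : ZMod k → Fˣ}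
    (htranslate : (blockTranslate (ZMod k) F).range ≤ automorphismSubgroup H)
    (hshift : blockShift w ∈ automorphismSubgroup H) (v : ZMod k × F) :
    ∃ σ ∈ automorphismSubgroup H, σ (0, 0) = v :=
  ⟨blockTranslate (ZMod k) F (.ofAdd fun _ => v.2) * blockShift w ^ v.1.val,
    mul_mem (htranslate ⟨_, rfl⟩) (pow_mem hshift _), by
      simp [blockShift_pow_apply, blockTranslate_ofAdd_apply]⟩

theorem adj_zero_of_adj_zero [Field F] {w : ZMod k → Fˣ}
    (hw : ∀ u : Fˣ, u ∈ Submonoid.powers (∏ i ∈ range k, w i))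
    (htranslate : (blockTranslate (ZMod k) F).range ≤ automorphismSubgroup H)
    (hshift : blockShift w ∈ automorphismSubgroup H) {j : ZMod k} {y z : F}
    (hy : H.Adj (0, 0) (j, y)) (hz : z ≠ 0) : H.Adj (0, 0) (j, z) := by
  rcases eq_or_ne j 0 with rfl | hj
  · have hy0 : y ≠ 0 := by
      rintro rfl
      exact hy.ne rfl
    obtain ⟨m, hm⟩ := hw (Units.mk0 z hz / Units.mk0 y hy0)
    have h := (adj_iff_of_mem_automorphismSubgroup (pow_mem (pow_mem hshift k) m) _ _).2 hy
    simpa [blockShift_pow_pow_apply, -Units.val_pow_eq_pow_val, hm, hy0] using h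
  · have h := (adj_iff_of_mem_automorphismSubgroup
      (htranslate ⟨.ofAdd (Pi.single j (z - y)), rfl⟩) _ _).2 hy
    simpa [blockTranslate_ofAdd_apply, hj.symm] using h

theorem card_sub_one_le_degree [NeZero k] [Field F] [Fintype F] [DecidableRel H.Adj] (hH : H ≠ ⊥)
    {w : ZMod k → Fˣ} (hw : ∀ u : Fˣ, u ∈ Submonoid.powers (∏ i ∈ range k, w i))
    (htranslate : (blockTranslate (ZMod k) F).range ≤ automorphismSubgroup H)
    (hshift : blockShift w ∈ automorphismSubgroup H) (v : ZMod k × F) :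
    Fintype.card F - 1 ≤ H.degree v := by
  classical
  have hdeg (v) : H.degree v = H.degree (0, 0) := by
    obtain ⟨σ, hσ, rfl⟩ := exists_mem_automorphismSubgroup_apply_zero htranslate hshift v
    exact degree_eq_of_mem_automorphismSubgroup hσ _
  obtain ⟨a, b, hab⟩ := SimpleGraph.ne_bot_iff_exists_adj.1 hH
  have hpos : 0 < H.degree (0, 0) := hdeg a ▸ (H.degree_pos_iff_exists_adj a).2 ⟨b, hab⟩
  obtain ⟨⟨j, y⟩, hy⟩ := (H.degree_pos_iff_exists_adj _).1 hpos
  rw [hdeg v, ← H.card_neighborFinset_eq_degree, ← card_univ,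
    ← card_erase_of_mem (mem_univ (0 : F))]
  refine card_le_card_of_injOn (fun z => (j, z)) (fun z hz => ?_) (by simp)
  simpa using adj_zero_of_adj_zero hw htranslate hshift hy (ne_of_mem_erase hz)

end InvariantGraph

end BlockPermutations

theorem exists_mul_le_two_mul_ncard_edgeSet {n : ℕ} (hn : n ≠ 0) {P : Set (SimpleGraph (Fin n))}
    (hsymm : IsGraphProperty P) (hmono : MonotoneDecreasing P) (hne : P.Nonempty)
    (hP : ¬ Evasive P) {q : ℕ} (hq : IsPrimePow q) (hdvd : q ∣ n) :
    ∃ G ∈ P, n * (q - 1) ≤ 2 * G.edgeSet.ncard := by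
  classical
  obtain ⟨k, rfl⟩ := hdvd
  obtain ⟨p, a, hp, ha, rfl⟩ := (isPrimePow_nat_iff q).1 hq
  have : Fact p.Prime := ⟨hp⟩
  have : NeZero k := ⟨right_ne_zero_of_mul hn⟩
  let F := GaloisField p a
  have : Fintype F := Fintype.ofFinite F
  have hF : Fintype.card F = p ^ a := by
    rw [← Nat.card_eq_fintype_card, GaloisField.card p a ha.ne']
  have hcard : Fintype.card (ZMod k × F) = p ^ a * k := by
    rw [Fintype.card_prod, ZMod.card, hF, mul_comm]
  obtain ⟨w, hw⟩ := exists_forall_mem_powers_prod_range k F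
  let ε : ZMod k × F ≃ Fin (p ^ a * k) := Fintype.equivFinOfCardEq hcard
  obtain ⟨H, hH, hbot, htranslate, hshift⟩ := exists_invariant_graph hsymm hmono hne hP ε
    (isPGroup_range_blockTranslate p (ZMod k) F) (blockShift_mem_normalizer w)
  have hdeg := card_sub_one_le_degree hbot hw htranslate hshift
  have hiso : relabel ε H ≃g H := SimpleGraph.Iso.comap ε.symm H
  refine ⟨relabel ε H, hH, ?_⟩
  rw [Set.ncard_eq_toFinset_card', ← SimpleGraph.edgeFinset, hiso.card_edgeFinset_eq,
    ← H.sum_degrees_eq_twice_card_edges]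
  calc p ^ a * k * (p ^ a - 1) = ∑ v : ZMod k × F, (p ^ a - 1) := by
        rw [sum_const, card_univ, hcard, smul_eq_mul]
    _ ≤ ∑ v, H.degree v := sum_le_sum fun v _ => hF ▸ hdeg v

/-- The largest prime power `q` exactly dividing `n` satisfies `n ∣ lcm (1, …, q)`, and the
logarithm of the latter is `ψ q = O(q)`. -/
theorem exists_isPrimePow_dvd_log_le {n : ℕ} (hn : 2 ≤ n) :
    ∃ q : ℕ, IsPrimePow q ∧ q ∣ n ∧ Real.log n ≤ (Real.log 4 + 4) * q := by
  have hn0 : n ≠ 0 := by omega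
  obtain ⟨p, hp, hmax⟩ := exists_max_image n.primeFactors (fun p => p ^ n.factorization p)
    (Nat.nonempty_primeFactors.2 hn)
  have hpp := Nat.prime_of_mem_primeFactors hp
  have hpn := hpp.factorization_pos_of_dvd hn0 (Nat.dvd_of_mem_primeFactors hp)
  refine ⟨p ^ n.factorization p, hpp.isPrimePow.pow hpn.ne', Nat.ordProj_dvd n p, ?_⟩
  set q := p ^ n.factorization p
  have hdvd : n ∣ Nat.lcmUpto q := by
    rw [← Nat.factorization_prime_le_iff_dvd hn0 (Nat.lcmUpto_ne_zero q)]
    intro r hr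
    rw [Nat.factorization_lcmUpto q hr]
    by_cases hrn : r ∈ n.primeFactors
    · exact Nat.le_log_of_pow_le hr.one_lt (hmax r hrn)
    · rw [Finsupp.notMem_support_iff.1 (Nat.support_factorization n ▸ hrn)]
      exact Nat.zero_le _
  calc Real.log n ≤ Real.log (Nat.lcmUpto q) :=
        Real.log_le_log (by positivity) (mod_cast Nat.le_of_dvd (Nat.lcmUpto_pos q) hdvd)
    _ = Chebyshev.psi q := (Chebyshev.psi_eq_log_lcmUpto q).symm
    _ ≤ (Real.log 4 + 4) * q := Chebyshev.psi_le_const_mul_self (by positivity)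

/-- Unconditionally, there is a constant `c > 0` such that for all sufficiently large `n`,
every nonempty monotone decreasing graph property on `n` vertices that is not evasive
contains a graph with at least `c · n · log n` edges. -/
theorem nonevasive_implies_superlinear_dimension :
    ∃ c : ℝ, 0 < c ∧ ∃ N : ℕ, ∀ n : ℕ, N ≤ n → ∀ P : Set (SimpleGraph (Fin n)),
      IsGraphProperty P → MonotoneDecreasing P → P.Nonempty → ¬ Evasive P →
      ∃ G ∈ P, c * (n : ℝ) * Real.log n ≤ (G.edgeSet.ncard : ℝ) := by
  refine ⟨1 / (4 * (Real.log 4 + 4)), by positivity, 2, fun n hn P hsymm hmono hne hP => ?_⟩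
  obtain ⟨q, hq, hdvd, hlog⟩ := exists_isPrimePow_dvd_log_le hn
  obtain ⟨G, hG, hcard⟩ :=
    exists_mul_le_two_mul_ncard_edgeSet (by omega) hsymm hmono hne hP hq hdvd
  refine ⟨G, hG, ?_⟩
  have hedges : (n : ℝ) * q ≤ 4 * G.edgeSet.ncard := by
    have hq2 : q ≤ 2 * (q - 1) := by have := hq.two_le; omega
    exact_mod_cast (Nat.mul_le_mul_left n hq2).trans (by linarith)
  calc 1 / (4 * (Real.log 4 + 4)) * (n : ℝ) * Real.log n
      ≤ 1 / (4 * (Real.log 4 + 4)) * n * ((Real.log 4 + 4) * q) := by gcongr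
    _ = n * q / 4 := by field_simp
    _ ≤ G.edgeSet.ncard := by linarith
end

section
/- Let H be a finite simple graph on h ≥ 1 vertices and let T_H := min{2^{2^t} − 1 : t ≥ 0 an integer, 2^{2^t} ≥ h}. If r ≥ 1 and r ≡ 1 (mod T_H), then the Euler characteristic χ(Q_r^{[[H]]}) is even, i.e., χ(Q_r^{[[H]]}) ≡ 0 (mod 2). -/
/-!
The parity of `χ(Q_r^{[[H]]})` is governed by the number `N(r)` of graphs on `r` vertices that
receive no homomorphism from `H`, the empty graph being counted by `N(r)` but not by `χ`. The
point is the congruence `N(n + q) ≡ N(n + 1) (mod 2)` for `q = 2 ^ k`, `k = 2 ^ t`, whenever `H`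
is `q`-colorable: it allows `r` to be lowered by `q - 1` until `N(1) = 1` is reached. (For edgeless
`H` there are no faces at all.)

Identify the last `q` vertices with `ℤ/2^k` and let its affine group act on them. This is a
2-group, so modulo 2 only invariant graphs count. As the action is transitive, these arise by
substituting an invariant graph on `ℤ/2^k` for one vertex of a graph on `n + 1` vertices. As the
orbits on pairs are the classes `2 ^ i ∣ x - y`, `2 ^ (i + 1) ∤ x - y`, an invariant graph on
`ℤ/2^k` is given by a set `A` of levels `i < k`, and it is homomorphically equivalent to the
complete graph on `2 ^ |A|` vertices. Hence `N(n + q)` is congruent to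
`∑ j, (k choose j) * N_j`, where `N_j` counts the graphs on `n + 1` vertices that still
receive no homomorphism from `H` once a complete graph on `2 ^ j` vertices is substituted for the
last vertex. For `k = 2 ^ t` all the binomial
coefficients but the outer two are even, `N_k = 0` because `H` is `q`-colorable, and
`N_0 = N(n + 1)`.
-/

open scoped Classical

/-- The Euler characteristic of the simplicial complex `Q_r^{[[H]]}` of graphs on
`Fin r` admitting no homomorphism from `H`, viewed via their edge sets:
`χ = Σ_{G : no H → G hom, E(G) ≠ ∅} (-1)^{|E(G)| - 1}`. -/
noncomputable def chiNoHom {V : Type} (H : SimpleGraph V) (r : ℕ) : ℤ :=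
  ∑ G : SimpleGraph (Fin r),
    if ¬ Nonempty (H →g G) ∧ G.edgeSet.Nonempty then (-1 : ℤ) ^ (G.edgeSet.ncard - 1) else 0

section Invariant

variable {Γ W X : Type*} [Group Γ]

/-- A graph on `X` is invariant under the permutation representation `ρ` if every `ρ g` is an
automorphism of it. -/
def IsInvariantGraph (ρ : Γ →* Equiv.Perm X) (K : SimpleGraph X) : Prop :=
  ∀ g, K.comap (ρ g) = K

lemma IsInvariantGraph.adj_iff {ρ : Γ →* Equiv.Perm X} {K : SimpleGraph X}
    (hK : IsInvariantGraph ρ K) (g : Γ) (x y : X) : K.Adj (ρ g x) (ρ g y) ↔ K.Adj x y := by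
  rw [← SimpleGraph.comap_adj, hK g]

theorem card_modEq_card_isInvariantGraph {p : ℕ} [Fact p.Prime] (hΓ : IsPGroup p Γ) [Finite W]
    (ρ : Γ →* Equiv.Perm W) {P : SimpleGraph W → Prop}
    (hP : ∀ g G, P G → P (G.comap (ρ g))) :
    Nat.card {G // P G} ≡ Nat.card {G // P G ∧ IsInvariantGraph ρ G} [MOD p] := by
  let : MulAction Γ {G // P G} :=
    { smul g G := ⟨G.1.comap (ρ g⁻¹), hP _ _ G.2⟩
      one_smul G := Subtype.ext <| show G.1.comap (ρ 1⁻¹) = G.1 by simp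
      mul_smul g h G := Subtype.ext <|
        show G.1.comap (ρ (g * h)⁻¹) = (G.1.comap (ρ h⁻¹)).comap (ρ g⁻¹) by
          rw [SimpleGraph.comap_comap, mul_inv_rev, map_mul, Equiv.Perm.coe_mul] }
  have mem_fixedPoints (G : {G // P G}) :
      G ∈ MulAction.fixedPoints Γ {G // P G} ↔ IsInvariantGraph ρ G.1 := by
    refine ⟨fun h g => ?_, fun h g => Subtype.ext (h g⁻¹)⟩
    simpa using show G.1.comap (ρ g⁻¹⁻¹) = G.1 from congrArg Subtype.val (h g⁻¹)
  refine (hΓ.card_modEq_card_fixedPoints _).trans (congrArg (· % p) ?_)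
  exact Nat.card_congr <| (Equiv.subtypeEquivRight mem_fixedPoints).trans
    (Equiv.subtypeSubtypeEquivSubtypeInter P (IsInvariantGraph ρ))

/-- The representation on `α ⊕ X` that is `ρ` on `X` and trivial on `α`. -/
def sumRep (α : Type*) (ρ : Γ →* Equiv.Perm X) : Γ →* Equiv.Perm (α ⊕ X) :=
  (Equiv.Perm.sumCongrHom α X).comp ((MonoidHom.inr _ _).comp ρ)

@[simp]
lemma sumRep_inl {α : Type*} (ρ : Γ →* Equiv.Perm X) (g : Γ) (a : α) :
    sumRep α ρ g (.inl a) = .inl a := rfl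

@[simp]
lemma sumRep_inr {α : Type*} (ρ : Γ →* Equiv.Perm X) (g : Γ) (x : X) :
    sumRep α ρ g (.inr x) = .inr (ρ g x) := rfl

end Invariant

section Substitution

variable {α X Y Γ : Type*} [Group Γ]

/-- The map collapsing the right summand to the single point `none`. -/
def collapse : α ⊕ X → Option α := Sum.elim some fun _ => none

/-- The graph obtained from `G` by substituting the graph `K` for the vertex `none`: every vertex
of `K` inherits the neighbours of `none`. -/
def substNone (G : SimpleGraph (Option α)) (K : SimpleGraph X) : SimpleGraph (α ⊕ X) :=
  G.comap collapse ⊔ K.map Function.Embedding.inr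

variable (G : SimpleGraph (Option α)) (K : SimpleGraph X)

@[simp]
lemma substNone_adj_inl_inl (a b : α) :
    (substNone G K).Adj (.inl a) (.inl b) ↔ G.Adj (some a) (some b) := by
  simp [substNone, collapse]

@[simp]
lemma substNone_adj_inl_inr (a : α) (x : X) :
    (substNone G K).Adj (.inl a) (.inr x) ↔ G.Adj (some a) none := by
  simp [substNone, collapse]

@[simp]
lemma substNone_adj_inr_inl (x : X) (a : α) :
    (substNone G K).Adj (.inr x) (.inl a) ↔ G.Adj none (some a) := by
  simp [substNone, collapse]

@[simp]
lemma substNone_adj_inr_inr (x y : X) :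
    (substNone G K).Adj (.inr x) (.inr y) ↔ K.Adj x y := by
  simp [substNone, collapse]

variable {K} in
/-- Substitution is functorial in the substituted graph. -/
def substNoneMap {L : SimpleGraph Y} (f : K →g L) : substNone G K →g substNone G L where
  toFun := Sum.map id f
  map_rel' {u v} h := by
    rcases u with a | x <;> rcases v with b | y <;> simp_all [f.map_adj]

variable {G K}

lemma substNone_inj [Nonempty X] {G' : SimpleGraph (Option α)} {K' : SimpleGraph X} :
    substNone G K = substNone G' K' ↔ G = G' ∧ K = K' := by
  refine ⟨fun h => ?_, fun ⟨hG, hK⟩ => hG ▸ hK ▸ rfl⟩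
  have adj_iff (u v) : (substNone G K).Adj u v ↔ (substNone G' K').Adj u v := by rw [h]
  obtain ⟨x⟩ := ‹Nonempty X›
  constructor
  · ext u v
    rcases u with _ | a <;> rcases v with _ | b
    · simp
    · simpa using adj_iff (.inr x) (.inl b)
    · simpa using adj_iff (.inl a) (.inr x)
    · simpa using adj_iff (.inl a) (.inl b)
  · ext y z
    simpa using adj_iff (.inr y) (.inr z)

lemma isInvariantGraph_substNone {ρ : Γ →* Equiv.Perm X} (hK : IsInvariantGraph ρ K) :
    IsInvariantGraph (sumRep α ρ) (substNone G K) := by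
  intro g
  ext u v
  rcases u with a | x <;> rcases v with b | y <;> simp [hK.adj_iff g]

lemma exists_substNone_eq_of_isInvariantGraph [Nonempty X] {ρ : Γ →* Equiv.Perm X}
    (hρ : ∀ x y, ∃ g, ρ g x = y) {F : SimpleGraph (α ⊕ X)}
    (hF : IsInvariantGraph (sumRep α ρ) F) :
    ∃ (G : SimpleGraph (Option α)) (K : SimpleGraph X),
      IsInvariantGraph ρ K ∧ substNone G K = F := by
  obtain ⟨x₀⟩ := ‹Nonempty X›
  have adj_const (a : α) (x : X) : F.Adj (.inl a) (.inr x₀) ↔ F.Adj (.inl a) (.inr x) := by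
    obtain ⟨g, rfl⟩ := hρ x₀ x
    exact (hF.adj_iff g (.inl a) (.inr x₀)).symm
  refine ⟨F.comap fun o => o.elim (.inr x₀) .inl, F.comap .inr, fun g => ?_, ?_⟩
  · ext x y
    exact hF.adj_iff g (.inr x) (.inr y)
  · ext u v
    rcases u with a | x <;> rcases v with b | y
    · simp
    · simpa using adj_const a y
    · simpa [F.adj_comm] using adj_const b x
    · simp

end Substitution

section Count

variable {V α β X Y Γ : Type*} (H : SimpleGraph V)

/-- The number of graphs on `α` without a homomorphism from `H`, that is the number of faces,
including the empty one, of the complex `Q_r^{[[H]]}` when `α` has `r` elements. -/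
noncomputable def noHomCount (α : Type*) : ℕ :=
  Nat.card {G : SimpleGraph α // IsEmpty (H →g G)}

/-- The number of graphs on `Option α` that still admit no homomorphism from `H` after
substituting `K` for the vertex `none`. -/
noncomputable def substCount (α : Type*) (K : SimpleGraph X) : ℕ :=
  Nat.card {G : SimpleGraph (Option α) // IsEmpty (H →g substNone G K)}

variable {H} in
lemma isEmpty_hom_congr {F : SimpleGraph X} {G : SimpleGraph Y} (f : F →g G) (g : G →g F) :
    IsEmpty (H →g F) ↔ IsEmpty (H →g G) :=
  ⟨fun h => ⟨fun φ => h.elim (g.comp φ)⟩, fun h => ⟨fun φ => h.elim (f.comp φ)⟩⟩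

lemma noHomCount_congr (e : α ≃ β) : noHomCount H α = noHomCount H β := by
  refine Nat.card_congr (e.simpleGraph.subtypeEquiv fun G => ?_)
  have i : e.simpleGraph G ≃g G := SimpleGraph.Iso.comap e.symm G
  exact isEmpty_hom_congr i.symm.toHom i.toHom

lemma substCount_congr {K : SimpleGraph X} {L : SimpleGraph Y} (f : K →g L) (g : L →g K) :
    substCount H α K = substCount H α L :=
  Nat.card_congr <| Equiv.subtypeEquivRight fun G =>
    isEmpty_hom_congr (substNoneMap G f) (substNoneMap G g)

lemma substCount_of_unique [Unique X] (K : SimpleGraph X) :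
    substCount H α K = noHomCount H (Option α) := by
  refine Nat.card_congr (Equiv.subtypeEquivRight fun G => ?_)
  have f : substNone G K →g G := ⟨collapse, fun {u v} h => by
    rcases u with a | x <;> rcases v with b | y
    · exact (substNone_adj_inl_inl G K a b).mp h
    · exact (substNone_adj_inl_inr G K a y).mp h
    · exact (substNone_adj_inr_inl G K x b).mp h
    · exact absurd (congrArg Sum.inr (Subsingleton.elim x y)) h.ne⟩
  have g : G →g substNone G K := ⟨fun o => o.elim (.inr default) .inl, fun {u v} h => by
    rcases u with _ | a <;> rcases v with _ | b <;> simp_all⟩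
  exact isEmpty_hom_congr f g

lemma substCount_eq_zero {K : SimpleGraph X} (f : H →g K) : substCount H α K = 0 := by
  refine @Nat.card_of_isEmpty _ ⟨fun G => G.2.elim ⟨fun v => .inr (f v), fun h => ?_⟩⟩
  simpa using f.map_adj h

theorem noHomCount_sum_modEq [Finite α] [Finite X] [Nonempty X] {p : ℕ} [Fact p.Prime]
    [Group Γ] (hΓ : IsPGroup p Γ) {ρ : Γ →* Equiv.Perm X}
    [Fintype {K : SimpleGraph X // IsInvariantGraph ρ K}] (hρ : ∀ x y, ∃ g, ρ g x = y) :
    noHomCount H (α ⊕ X) ≡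
      ∑ K : {K : SimpleGraph X // IsInvariantGraph ρ K}, substCount H α K.1 [MOD p] := by
  refine (card_modEq_card_isInvariantGraph hΓ (sumRep α ρ) fun g G hG =>
    ⟨fun φ => hG.elim ((SimpleGraph.Iso.comap _ G).toHom.comp φ)⟩).trans (congrArg (· % p) ?_)
  simp only [substCount]
  rw [← Nat.card_sigma]
  symm
  refine Nat.card_eq_of_bijective
    (fun s => ⟨substNone s.2.1 s.1.1, s.2.2, isInvariantGraph_substNone s.1.2⟩) ⟨?_, ?_⟩
  · rintro ⟨⟨K, hK⟩, G, hG⟩ ⟨⟨K', hK'⟩, G', hG'⟩ h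
    obtain ⟨rfl, rfl⟩ := substNone_inj.mp (congrArg Subtype.val h)
    rfl
  · rintro ⟨F, hF, hinv⟩
    obtain ⟨G, K, hK, rfl⟩ := exists_substNone_eq_of_isInvariantGraph hρ hinv
    exact ⟨⟨⟨K, hK⟩, G, hF⟩, rfl⟩

end Count

section PrimePower

lemma zmod_natCast_dvd_sub_iff {d n : ℕ} (hd : d ∣ n) (a b : ℕ) :
    (d : ZMod n) ∣ a - b ↔ a ≡ b [MOD d] := by
  constructor
  · intro h
    have hcast := map_dvd (ZMod.castHom hd (ZMod d)) h
    rwa [map_sub, map_natCast, map_natCast, map_natCast, ZMod.natCast_self, zero_dvd_iff,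
      sub_eq_zero, ZMod.natCast_eq_natCast_iff] at hcast
  · intro h
    simpa using map_dvd (Int.castRingHom (ZMod n)) h.symm.dvd

variable {p k : ℕ}

lemma zmod_isUnit_of_not_dvd (hp : p.Prime) {z : ZMod (p ^ k)} (hz : ¬ (p : ZMod (p ^ k)) ∣ z) :
    IsUnit z := by
  have : NeZero (p ^ k) := ⟨pow_ne_zero k hp.ne_zero⟩
  rw [← ZMod.natCast_zmod_val z] at hz ⊢
  have hcop : p.Coprime z.val :=
    hp.coprime_iff_not_dvd.mpr fun h => hz (Nat.cast_dvd_cast h)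
  exact (ZMod.isUnit_iff_coprime _ _).mpr (hcop.symm.pow_right k)

lemma zmod_associated_pow_iff (hp : p.Prime) {i : ℕ} (hi : i < k) {z : ZMod (p ^ k)} :
    Associated ((p : ZMod (p ^ k)) ^ i) z ↔
      (p : ZMod (p ^ k)) ^ i ∣ z ∧ ¬ (p : ZMod (p ^ k)) ^ (i + 1) ∣ z := by
  constructor
  · refine fun h => ⟨h.dvd, fun hdvd => ?_⟩
    have hmod := (zmod_natCast_dvd_sub_iff (pow_dvd_pow p (Nat.succ_le_of_lt hi)) (p ^ i) 0).mp
      (by simpa using hdvd.trans h.symm.dvd)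
    exact (Nat.pow_dvd_pow_iff_le_right hp.one_lt).not.mpr (Nat.not_succ_le_self i)
      ((Nat.modEq_zero_iff_dvd).mp hmod)
  · rintro ⟨⟨w, rfl⟩, hdvd⟩
    rw [pow_succ] at hdvd
    exact associated_mul_unit_right _ _
      (zmod_isUnit_of_not_dvd hp fun hw => hdvd (mul_dvd_mul_left _ hw))

lemma zmod_exists_associated_pow (hp : p.Prime) {z : ZMod (p ^ k)} (hz : z ≠ 0) :
    ∃ i : Fin k, Associated ((p : ZMod (p ^ k)) ^ (i : ℕ)) z := by
  have hk : ¬ (p : ZMod (p ^ k)) ^ k ∣ z := by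
    rw [← Nat.cast_pow, ZMod.natCast_self]
    exact fun h => hz (zero_dvd_iff.mp h)
  obtain ⟨i, hi, hdvd, hndvd⟩ : ∃ i < k, (p : ZMod (p ^ k)) ^ i ∣ z ∧
      ¬ (p : ZMod (p ^ k)) ^ (i + 1) ∣ z := by
    by_contra! h
    have hall (i : ℕ) (hi : i ≤ k) : (p : ZMod (p ^ k)) ^ i ∣ z := by
      induction i with
      | zero => simp
      | succ i ih => exact h i hi (ih (Nat.le_of_succ_le hi))
    exact hk (hall k le_rfl)
  exact ⟨⟨i, hi⟩, (zmod_associated_pow_iff hp hi).mpr ⟨hdvd, hndvd⟩⟩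

lemma zmod_associated_pow_unique (hp : p.Prime) {z : ZMod (p ^ k)} {i j : Fin k}
    (hi : Associated ((p : ZMod (p ^ k)) ^ (i : ℕ)) z)
    (hj : Associated ((p : ZMod (p ^ k)) ^ (j : ℕ)) z) : i = j := by
  wlog hij : i ≤ j generalizing i j
  · exact (this hj hi (le_of_not_ge hij)).symm
  by_contra hne
  exact ((zmod_associated_pow_iff hp i.2).mp hi).2
    ((pow_dvd_pow _ (lt_of_le_of_ne hij hne)).trans hj.dvd)

lemma zmod_testBit_ne_of_associated {i a b : ℕ} (hi : i < k)
    (h : Associated (((2 : ℕ) : ZMod (2 ^ k)) ^ i) (a - b)) : a.testBit i ≠ b.testBit i := by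
  have hdvd := (zmod_associated_pow_iff Nat.prime_two hi).mp h
  rw [← Nat.cast_pow, ← Nat.cast_pow, zmod_natCast_dvd_sub_iff (pow_dvd_pow 2 hi.le),
    zmod_natCast_dvd_sub_iff (pow_dvd_pow 2 (Nat.succ_le_of_lt hi))] at hdvd
  obtain ⟨hlow, hhigh⟩ := hdvd
  intro hbit
  apply hhigh
  simp only [Nat.ModEq, Nat.mod_pow_succ] at hlow ⊢
  rw [Nat.testBit_eq_decide_div_mod_eq, Nat.testBit_eq_decide_div_mod_eq, decide_eq_decide] at hbit
  rw [hlow, show a / 2 ^ i % 2 = b / 2 ^ i % 2 by omega]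

end PrimePower

section Affine

variable (R : Type*) [CommRing R]

/-- The action of the affine group of a commutative ring on the ring. -/
def affineRep : (R ≃ᵃ[R] R) →* Equiv.Perm R where
  toFun := AffineEquiv.toEquiv
  map_one' := rfl
  map_mul' _ _ := rfl

variable {R}

/-- The affine map `x ↦ u * x + b`. -/
def unitAffine (u : Rˣ) (b : R) : R ≃ᵃ[R] R :=
  (LinearEquiv.smulOfUnit u).toAffineEquiv.trans (AffineEquiv.constVAdd R R b)

lemma affineRep_unitAffine (u : Rˣ) (b x : R) : affineRep R (unitAffine u b) x = u * x + b :=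
  add_comm b (u * x)

lemma bijective_unitAffine : Function.Bijective fun q : Rˣ × R => unitAffine q.1 q.2 := by
  constructor
  · rintro ⟨u, b⟩ ⟨v, c⟩ h
    have happ (x : R) : u * x + b = v * x + c := by
      simpa only [← affineRep_unitAffine] using congrArg (affineRep R · x) h
    obtain rfl : b = c := by simpa using happ 0
    obtain rfl : u = v := Units.ext (by simpa using happ 1)
    rfl
  · intro e
    have hmul (f : R ≃ₗ[R] R) (x : R) : f x = f 1 * x := by
      simpa [mul_comm] using f.map_smul x 1
    let u : Rˣ := ⟨e.linear 1, e.linear.symm 1, by rw [← hmul, e.linear.apply_symm_apply],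
      by rw [← hmul, e.linear.symm_apply_apply]⟩
    refine ⟨(u, e 0), AffineEquiv.ext fun x => ?_⟩
    calc unitAffine u (e 0) x = e.linear 1 * x + e 0 := affineRep_unitAffine u (e 0) x
      _ = e x := by simpa [← hmul] using (e.map_vadd 0 x).symm

lemma exists_affineRep_eq_pair {x y x' y' : R} (h : Associated (x - y) (x' - y')) :
    ∃ g, affineRep R g x = x' ∧ affineRep R g y = y' := by
  obtain ⟨u, hu⟩ := h
  refine ⟨unitAffine u (y' - u * y), ?_, ?_⟩
  · rw [affineRep_unitAffine]
    linear_combination hu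
  · rw [affineRep_unitAffine]
    ring

lemma exists_affineRep_eq (x y : R) : ∃ g, affineRep R g x = y :=
  (exists_affineRep_eq_pair (y := x) (y' := y) (by simp)).imp fun _ => And.left

lemma associated_affineRep_sub (g : R ≃ᵃ[R] R) (x y : R) :
    Associated (x - y) (affineRep R g x - affineRep R g y) := by
  obtain ⟨⟨u, b⟩, rfl⟩ := bijective_unitAffine.surjective g
  exact ⟨u, by simp only [affineRep_unitAffine]; ring⟩

lemma isPGroup_affine_zmod_two_pow (k : ℕ) :
    IsPGroup 2 (ZMod (2 ^ k) ≃ᵃ[ZMod (2 ^ k)] ZMod (2 ^ k)) := by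
  have : NeZero (2 ^ k) := ⟨by positivity⟩
  have hunits : (2 ^ k).totient ∣ 2 ^ k := by
    cases k with
    | zero => simp
    | succ k =>
      rw [Nat.totient_prime_pow_succ Nat.prime_two]
      simp [pow_succ]
  refine IsPGroup.of_card_dvd_pow (n := k + k) ?_
  rw [← Nat.card_eq_of_bijective _ bijective_unitAffine, Nat.card_prod, Nat.card_zmod,
    Nat.card_eq_fintype_card, ZMod.card_units_eq_totient, pow_add]
  exact mul_dvd_mul_right hunits _

end Affine

section LevelGraph

variable {k : ℕ}

/-- The graph on `ℤ/2^k` in which `x` and `y` are adjacent when the 2-adic valuation of `x - y`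
lies in `A`. Valuation `i` is expressed as being a unit times `2 ^ i`. -/
def levelGraph (A : Finset (Fin k)) : SimpleGraph (ZMod (2 ^ k)) where
  Adj x y := ∃ i ∈ A, Associated (((2 : ℕ) : ZMod (2 ^ k)) ^ (i : ℕ)) (x - y)
  symm := ⟨fun x y ⟨i, hi, h⟩ => ⟨i, hi, by simpa using h.neg_right⟩⟩
  loopless := ⟨fun x ⟨i, _, h⟩ =>
    ((zmod_associated_pow_iff Nat.prime_two i.2).mp h).2 (by simp)⟩

lemma levelGraph_adj_iff_mem {A : Finset (Fin k)} {i : Fin k} {x y : ZMod (2 ^ k)}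
    (h : Associated (((2 : ℕ) : ZMod (2 ^ k)) ^ (i : ℕ)) (x - y)) :
    (levelGraph A).Adj x y ↔ i ∈ A :=
  ⟨fun ⟨_, hj, hassoc⟩ => zmod_associated_pow_unique Nat.prime_two h hassoc ▸ hj,
    fun hi => ⟨i, hi, h⟩⟩

lemma levelGraph_injective : Function.Injective (levelGraph (k := k)) := by
  intro A B h
  ext i
  have hi : Associated (((2 : ℕ) : ZMod (2 ^ k)) ^ (i : ℕ))
      (((2 : ℕ) : ZMod (2 ^ k)) ^ (i : ℕ) - 0) := by
    rw [sub_zero]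
  rw [← levelGraph_adj_iff_mem hi, h, levelGraph_adj_iff_mem hi]

lemma isInvariantGraph_levelGraph (A : Finset (Fin k)) :
    IsInvariantGraph (affineRep (ZMod (2 ^ k))) (levelGraph A) := by
  intro g
  ext x y
  exact exists_congr fun i => and_congr_right fun _ =>
    ⟨fun h => h.trans (associated_affineRep_sub g x y).symm,
      fun h => h.trans (associated_affineRep_sub g x y)⟩

lemma exists_levelGraph_eq_of_isInvariantGraph {K : SimpleGraph (ZMod (2 ^ k))}
    (hK : IsInvariantGraph (affineRep (ZMod (2 ^ k))) K) :
    ∃ A : Finset (Fin k), levelGraph A = K := by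
  refine ⟨Finset.univ.filter fun i => K.Adj (((2 : ℕ) : ZMod (2 ^ k)) ^ (i : ℕ)) 0, ?_⟩
  ext x y
  by_cases hxy : x = y
  · simp [hxy]
  obtain ⟨i, hi⟩ := zmod_exists_associated_pow Nat.prime_two (sub_ne_zero.mpr hxy)
  have hassoc : Associated (((2 : ℕ) : ZMod (2 ^ k)) ^ (i : ℕ) - 0) (x - y) := by rwa [sub_zero]
  obtain ⟨g, hx, hy⟩ := exists_affineRep_eq_pair hassoc
  rw [levelGraph_adj_iff_mem hi, Finset.mem_filter_univ, ← hK.adj_iff g, hx, hy]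

lemma colorable_levelGraph (A : Finset (Fin k)) : (levelGraph A).Colorable (2 ^ A.card) := by
  let c : (levelGraph A).Coloring (A → Bool) :=
    SimpleGraph.Coloring.mk (fun x i => x.val.testBit i) <| by
      rintro x y ⟨i, hi, h⟩ hc
      refine zmod_testBit_ne_of_associated (a := x.val) (b := y.val) i.2 ?_ (congrFun hc ⟨i, hi⟩)
      simpa only [ZMod.natCast_zmod_val] using h
  simpa using c.colorable

lemma nonempty_top_hom_levelGraph (A : Finset (Fin k)) :
    Nonempty ((⊤ : SimpleGraph (Fin (2 ^ A.card))) →g levelGraph A) := by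
  let e : Fin (2 ^ A.card) ≃ (A → Bool) := (Fintype.equivFinOfCardEq (by simp)).symm
  let bits (a : Fin (2 ^ A.card)) (i : Fin k) : Bool := if hi : i ∈ A then e a ⟨i, hi⟩ else false
  let f (a : Fin (2 ^ A.card)) : ZMod (2 ^ k) := (Nat.ofBits (bits a) : ℕ)
  have testBit_bits (a) (i : Fin k) : (Nat.ofBits (bits a)).testBit i = bits a i :=
    Nat.testBit_ofBits_lt _ i i.2
  have hf : Function.Injective f := by
    intro a b hab
    have hnat : Nat.ofBits (bits a) = Nat.ofBits (bits b) :=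
      ((ZMod.natCast_eq_natCast_iff _ _ _).mp hab).eq_of_lt_of_lt
        (Nat.ofBits_lt_two_pow _) (Nat.ofBits_lt_two_pow _)
    refine e.injective (funext fun i => ?_)
    have hi : bits a i = bits b i := by rw [← testBit_bits, hnat, testBit_bits]
    simpa [bits] using hi
  refine ⟨⟨f, fun {a b} hab => ?_⟩⟩
  obtain ⟨i, hi⟩ := zmod_exists_associated_pow Nat.prime_two (sub_ne_zero.mpr (hf.ne hab))
  have hbits := zmod_testBit_ne_of_associated i.2 hi
  rw [testBit_bits, testBit_bits] at hbits
  refine ⟨i, ?_, hi⟩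
  by_contra hA
  exact hbits (by simp [bits, hA])

end LevelGraph

section Periodicity

variable {V : Type*} (H : SimpleGraph V) (α : Type*) [Finite α]

theorem noHomCount_sum_zmod_two_pow_modEq (k : ℕ) :
    noHomCount H (α ⊕ ZMod (2 ^ k)) ≡ ∑ j ∈ Finset.range (k + 1),
      k.choose j • substCount H α (⊤ : SimpleGraph (Fin (2 ^ j))) [MOD 2] := by
  have : NeZero (2 ^ k) := ⟨by positivity⟩
  refine (noHomCount_sum_modEq H (isPGroup_affine_zmod_two_pow k)
    exists_affineRep_eq).trans (congrArg (· % 2) ?_)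
  let level (A : Finset (Fin k)) :
      {K : SimpleGraph (ZMod (2 ^ k)) // IsInvariantGraph (affineRep _) K} :=
    ⟨levelGraph A, isInvariantGraph_levelGraph A⟩
  have hlevel : Function.Bijective level :=
    ⟨fun A B h => levelGraph_injective (congrArg Subtype.val h), fun K =>
      (exists_levelGraph_eq_of_isInvariantGraph K.2).imp fun _ => Subtype.ext⟩
  have hsubst (A : Finset (Fin k)) : substCount H α (levelGraph A) =
      substCount H α (⊤ : SimpleGraph (Fin (2 ^ A.card))) :=
    substCount_congr H (colorable_levelGraph A).some (nonempty_top_hom_levelGraph A).some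
  rw [← hlevel.sum_comp fun K => substCount H α K.1, ← Finset.powerset_univ,
    Finset.sum_congr rfl fun A _ => hsubst A,
    Finset.sum_powerset_apply_card fun j => substCount H α (⊤ : SimpleGraph (Fin (2 ^ j))),
    Finset.card_univ, Fintype.card_fin]

variable {H} {t : ℕ} (hH : H.Colorable (2 ^ 2 ^ t))

include hH

theorem noHomCount_sum_zmod_modEq_option :
    noHomCount H (α ⊕ ZMod (2 ^ 2 ^ t)) ≡ noHomCount H (Option α) [MOD 2] := by
  refine (noHomCount_sum_zmod_two_pow_modEq H α (2 ^ t)).trans ?_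
  have hinner : 2 ∣ ∑ j ∈ (Finset.range (2 ^ t)).erase 0,
      (2 ^ t).choose j • substCount H α (⊤ : SimpleGraph (Fin (2 ^ j))) := by
    refine Finset.dvd_sum fun j hj => ?_
    obtain ⟨hj0, hlt⟩ := Finset.mem_erase.mp hj
    exact (Nat.prime_two.dvd_choose_pow hj0 (Finset.mem_range.mp hlt).ne).mul_right _
  have hlast : substCount H α (⊤ : SimpleGraph (Fin (2 ^ 2 ^ t))) = 0 :=
    substCount_eq_zero H hH.some
  have hfirst : substCount H α (⊤ : SimpleGraph (Fin (2 ^ 0))) = noHomCount H (Option α) :=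
    substCount_of_unique H (X := Fin 1) ⊤
  rw [Finset.sum_range_succ, hlast, smul_zero, add_zero,
    ← Finset.add_sum_erase _ _ (Finset.mem_range.mpr (Nat.two_pow_pos t)), hfirst,
    Nat.choose_zero_right, one_smul]
  exact (Nat.modEq_zero_iff_dvd.mpr hinner).add_left _

lemma noHomCount_fin_add_modEq (n : ℕ) :
    noHomCount H (Fin (n + 2 ^ 2 ^ t)) ≡ noHomCount H (Fin (n + 1)) [MOD 2] := by
  have : NeZero (2 ^ 2 ^ t) := ⟨by positivity⟩
  have h := noHomCount_sum_zmod_modEq_option (Fin n) hH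
  rwa [noHomCount_congr H (Fintype.equivFinOfCardEq (by simp [ZMod.card]) :
      Fin n ⊕ ZMod (2 ^ 2 ^ t) ≃ Fin (n + 2 ^ 2 ^ t)),
    noHomCount_congr H (Fintype.equivFinOfCardEq (by simp) : Option (Fin n) ≃ Fin (n + 1))] at h

theorem noHomCount_fin_modEq_one (hbot : H ≠ ⊥) (m : ℕ) :
    noHomCount H (Fin (m * (2 ^ 2 ^ t - 1) + 1)) ≡ 1 [MOD 2] := by
  induction m with
  | zero =>
    obtain ⟨u, v, huv⟩ := SimpleGraph.ne_bot_iff_exists_adj.mp hbot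
    have : Unique {G : SimpleGraph (Fin 1) // IsEmpty (H →g G)} :=
      { default := ⟨⊥, ⟨fun f => f.map_adj huv⟩⟩
        uniq G := Subtype.ext (Subsingleton.elim _ _) }
    rw [zero_mul, zero_add, noHomCount, Nat.card_unique]
  | succ m ih =>
    have hpos : 0 < 2 ^ 2 ^ t := by positivity
    have hstep : (m + 1) * (2 ^ 2 ^ t - 1) + 1 = m * (2 ^ 2 ^ t - 1) + 2 ^ 2 ^ t := by
      rw [add_mul]; omega
    rw [hstep]
    exact (noHomCount_fin_add_modEq hH _).trans ih

end Periodicity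

section EulerCharacteristic

variable {V : Type} (H : SimpleGraph V)

lemma chiNoHom_zero : chiNoHom H 0 = 0 :=
  Finset.sum_eq_zero fun G _ => if_neg fun h => by
    simp [Subsingleton.elim G ⊥] at h

lemma chiNoHom_bot {r : ℕ} (hr : 0 < r) : chiNoHom (⊥ : SimpleGraph V) r = 0 :=
  Finset.sum_eq_zero fun _ _ => if_neg fun h => h.1 ⟨⟨fun _ => ⟨0, hr⟩, False.elim⟩⟩

variable {H}

lemma chiNoHom_cast_add_one (hbot : H ≠ ⊥) (r : ℕ) :
    (chiNoHom H r : ZMod 2) + 1 = noHomCount H (Fin r) := by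
  obtain ⟨u, v, huv⟩ := SimpleGraph.ne_bot_iff_exists_adj.mp hbot
  have hempty : IsEmpty (H →g (⊥ : SimpleGraph (Fin r))) := ⟨fun f => f.map_adj huv⟩
  have hcount : (noHomCount H (Fin r) : ZMod 2) =
      ∑ G : SimpleGraph (Fin r), if IsEmpty (H →g G) then 1 else 0 := by
    rw [noHomCount, Nat.card_eq_fintype_card, Fintype.card_subtype, Finset.sum_boole]
  have hterm (G : SimpleGraph (Fin r)) :
      (((if ¬ Nonempty (H →g G) ∧ G.edgeSet.Nonempty then (-1) ^ (G.edgeSet.ncard - 1) else 0 : ℤ) :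
        ZMod 2) + if G = ⊥ then 1 else 0) = if IsEmpty (H →g G) then 1 else 0 := by
    by_cases hG : G = ⊥
    · simp [hG, hempty]
    · simp [hG, SimpleGraph.edgeSet_nonempty, ZModModule.neg_eq_self]
  rw [hcount, chiNoHom, Int.cast_sum, ← Finset.sum_congr rfl fun G _ => hterm G,
    Finset.sum_add_distrib, Finset.sum_ite_eq' _ _ _, if_pos (Finset.mem_univ _)]

theorem chi_even_of_congr_general {t : ℕ} (hH : H.Colorable (2 ^ 2 ^ t)) {r : ℕ}
    (hmod : r ≡ 1 [MOD 2 ^ 2 ^ t - 1]) : 2 ∣ chiNoHom H r := by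
  obtain rfl | hr := r.eq_zero_or_pos
  · simp [chiNoHom_zero]
  by_cases hbot : H = ⊥
  · simp [hbot, chiNoHom_bot hr]
  obtain ⟨m, hm⟩ := (Nat.modEq_iff_dvd' hr).mp hmod.symm
  obtain rfl : r = m * (2 ^ 2 ^ t - 1) + 1 := by
    rw [mul_comm, ← hm, Nat.sub_add_cancel hr]
  have hodd := (ZMod.natCast_eq_natCast_iff _ _ 2).mpr (noHomCount_fin_modEq_one hH hbot m)
  rw [← chiNoHom_cast_add_one hbot, Nat.cast_one, add_eq_right] at hodd
  exact (ZMod.intCast_zmod_eq_zero_iff_dvd _ 2).mp hodd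

end EulerCharacteristic

/-- Chakrabarti–Khot–Shi: if `H` has `h ≥ 1` vertices,
`T_H = min {2^{2^t} - 1 : 2^{2^t} ≥ h}` and `r ≡ 1 (mod T_H)`, `r ≥ 1`, then the Euler
characteristic of `Q_r^{[[H]]}` is even. -/
theorem chi_even_of_congr
    {V : Type} [Fintype V] (H : SimpleGraph V) (h : ℕ) (hcard : Fintype.card V = h)
    (hh : 1 ≤ h)
    (T : ℕ) (hT : T = sInf {m : ℕ | ∃ t : ℕ, m = 2 ^ 2 ^ t - 1 ∧ h ≤ 2 ^ 2 ^ t})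
    (r : ℕ) (hr : 1 ≤ r) (hmod : r % T = 1 % T) :
    2 ∣ chiNoHom H r := by
  have hne : {m : ℕ | ∃ t : ℕ, m = 2 ^ 2 ^ t - 1 ∧ h ≤ 2 ^ 2 ^ t}.Nonempty :=
    ⟨_, h, rfl, (Nat.lt_two_pow_self.trans Nat.lt_two_pow_self).le⟩
  obtain ⟨t, hTt, ht⟩ := Nat.sInf_mem hne
  rw [← hT] at hTt
  exact chi_even_of_congr_general (H.colorable_of_fintype.mono (hcard.trans_le ht)) (hTt ▸ hmod)
end

section
/- Let q be a prime power, ℓ a positive divisor of q−1, and a_1, ..., a_t distinct elements of the finite field F_q. Let N be the number of x ∈ F_q satisfying (a_i + x)^{(q−1)/ℓ} = 1 for all i = 1, ..., t. Then |N − q/ℓ^t| ≤ t·√q. -/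
/-!
Expanding the condition `(a i + x) ^ ((q - 1) / ℓ) = 1` in powers of a character `ψ` of order `ℓ`
reduces the count to the estimate `‖∑ x, ∏ i, χ i (a i + x)‖ ≤ (t - 1) * √q` for characters `χ i`
that are not all trivial.

The `L`-function of the Dirichlet character `g ↦ ∏ i, χ i (g (a i))` on monic polynomials has
constant term `1` and is a polynomial of degree less than `t`: in degree at least `t`, averaging
over the values at the points `a i` gives `0`. The coefficients of its logarithmic derivative are
the character sums over the extensions of `F_q`, so the sum over `F_(q^n)` is minus the `n`-th
power sum of at most `t - 1` complex numbers `w`. It is enough that `‖w‖ ^ 2 ≤ q`, and for this a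
bound `O(q ^ n)` on the sums over the extensions of even degree `2 * n`.

This bound comes from the Stepanov method over a field `K` with `P ^ 2` elements, where
`P = q ^ n`. The product of the `χ i (a i + x)` is `χ (f x)` for a single character `χ` of `K`.
A polynomial that vanishes wherever `χ (f x) = ω` is found by counting unknowns and equations, and
is nonzero because `Y ^ ℓ - u * f` is irreducible. This bounds every fibre of `x ↦ χ (f x)` from
above; as the fibres almost fill `K`, these bounds also control the sum.
-/

open Polynomial
open scoped PowerSeries

/-! ### Irreducibility of Kummer polynomials and resultants -/

/-- `a` has order divisible by `ℓ` modulo units and `ℓ`-th powers. Over an integral domain this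
makes `Y ^ ℓ - u * a` irreducible for every unit `u`. -/
def HasKummerOrder {R : Type*} [CommRing R] (a : R) (ℓ : ℕ) : Prop :=
  ∀ d b, Associated (b ^ ℓ) (a ^ d) → ℓ ∣ d

theorem HasKummerOrder.of_associated {R : Type*} [CommRing R] {a b : R} {ℓ : ℕ}
    (ha : HasKummerOrder a ℓ) (hab : Associated a b) : HasKummerOrder b ℓ :=
  fun d _ h => ha d _ (h.trans (hab.symm.pow_pow))

theorem HasKummerOrder.ne_zero {R : Type*} [CommRing R] {a : R} {ℓ : ℕ}
    (ha : HasKummerOrder a ℓ) (hℓ : 2 ≤ ℓ) : a ≠ 0 := by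
  rintro rfl
  have : ℓ ∣ 1 := ha 1 0 (by rw [zero_pow (by omega), pow_one])
  exact absurd (Nat.le_of_dvd one_pos this) (by omega)

theorem pow_eq_of_monic_dvd_X_pow_sub_C {R : Type*} [CommRing R] [IsDomain R] {ℓ : ℕ} {a : R}
    {g : R[X]} (hg : g.Monic) (h : g ∣ X ^ ℓ - C a) :
    ((-1) ^ g.natDegree * g.coeff 0) ^ ℓ = a ^ g.natDegree := by
  let Ω := AlgebraicClosure (FractionRing R)
  have : FaithfulSMul R Ω := .trans R (FractionRing R) Ω
  set φ := algebraMap R Ω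
  have hsplits : (g.map φ).Splits := IsAlgClosed.splits _
  have hdeg : (g.map φ).natDegree = g.natDegree := hg.natDegree_map φ
  have hroot : ∀ z ∈ (g.map φ).roots, z ^ ℓ = φ a := fun z hz => by
    have hdvd : g.map φ ∣ X ^ ℓ - C (φ a) := by simpa using Polynomial.map_dvd φ h
    simpa [sub_eq_zero] using (isRoot_of_mem_roots hz).dvd hdvd
  have hprod : φ ((-1) ^ g.natDegree * g.coeff 0) = (g.map φ).roots.prod := by
    have hcoeff := hsplits.coeff_zero_eq_prod_roots_of_monic (hg.map φ)
    rw [coeff_map, hdeg] at hcoeff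
    rw [map_mul, hcoeff, map_pow, map_neg, map_one, ← mul_assoc, ← mul_pow, neg_one_mul, neg_neg,
      one_pow, one_mul]
  apply FaithfulSMul.algebraMap_injective R Ω
  rw [map_pow, hprod, map_pow, ← Multiset.map_id' (g.map φ).roots, ← Multiset.prod_map_pow,
    Multiset.map_congr rfl hroot, Multiset.map_const', Multiset.prod_replicate,
    ← hsplits.natDegree_eq_card_roots, hdeg]

theorem HasKummerOrder.irreducible_X_pow_sub_C {R : Type*} [CommRing R] [IsDomain R] {a : R}
    {ℓ : ℕ} (hℓ : ℓ ≠ 0) (ha : HasKummerOrder a ℓ) : Irreducible (X ^ ℓ - C a) := by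
  have hmonic : (X ^ ℓ - C a).Monic := monic_X_pow_sub_C a hℓ
  have hdeg : (X ^ ℓ - C a).natDegree = ℓ := natDegree_X_pow_sub_C
  rw [hmonic.irreducible_iff_natDegree']
  refine ⟨fun h => hℓ (by rw [← hdeg, h, natDegree_one]), fun g h _ hh hgh hmem => ?_⟩
  rw [hdeg, Finset.mem_Ioc] at hmem
  have hpow := pow_eq_of_monic_dvd_X_pow_sub_C hh (Dvd.intro_left g hgh)
  have := Nat.le_of_dvd hmem.1 (ha _ _ (Associated.of_eq hpow))
  omega

theorem natDegree_det_le_sum {R n : Type*} [CommRing R] [Fintype n] [DecidableEq n]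
    {M : Matrix n n R[X]} {d : n → ℕ} (h : ∀ i j, (M i j).natDegree ≤ d j) :
    M.det.natDegree ≤ ∑ j, d j := by
  rw [Matrix.det_apply]
  refine natDegree_sum_le_of_forall_le _ _ fun σ _ => (natDegree_smul_le _ _).trans ?_
  exact (natDegree_prod_le _ _).trans (Finset.sum_le_sum fun j _ => h _ _)

theorem natDegree_resultant_le {R : Type*} [CommRing R] {f g : R[X][X]} (m n : ℕ) {a b : ℕ}
    (hf : ∀ i, (f.coeff i).natDegree ≤ a) (hg : ∀ i, (g.coeff i).natDegree ≤ b) :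
    (f.resultant g m n).natDegree ≤ m * b + n * a := by
  refine (natDegree_det_le_sum (d := Fin.addCases (fun _ => b) fun _ => a) fun i j => ?_).trans ?_
  · induction j using Fin.addCases with
    | left j => simp only [sylvester, Matrix.of_apply, Fin.addCases_left]; split_ifs <;> simp [hg]
    | right j => simp only [sylvester, Matrix.of_apply, Fin.addCases_right]; split_ifs <;> simp [hf]
  · simp [Fin.sum_univ_add]

theorem eq_zero_of_resultant_eq_zero {R : Type*} [CommRing R] [IsDomain R] [IsIntegrallyClosed R]
    {T H : R[X]} (hT : T.Monic) (hirr : Irreducible T) (hdeg : H.degree < T.degree)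
    (h : T.resultant H = 0) : H = 0 := by
  set φ := algebraMap R (FractionRing R)
  have hφ : Function.Injective φ := IsFractionRing.injective R _
  have hmap : (T.map φ).resultant (H.map φ) = 0 := by
    rw [natDegree_map_eq_of_injective hφ, natDegree_map_eq_of_injective hφ, resultant_map_map, h,
      map_zero]
  have hirr' : Irreducible (T.map φ) := (hT.irreducible_iff_irreducible_map_fraction_map).mp hirr
  have hdvd : T.map φ ∣ H.map φ := by
    by_contra hndvd
    exact (resultant_eq_zero_iff.mp hmap).2
      ((EuclideanDomain.dvd_or_coprime _ _ hirr').resolve_left hndvd)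
  rw [← degree_map_eq_of_injective hφ, ← degree_map_eq_of_injective hφ T] at hdeg
  exact (Polynomial.map_eq_zero_iff hφ).mp (eq_zero_of_dvd_of_degree_lt hdvd hdeg)

theorem eq_zero_of_dvd_eval_of_dvd_eval {K : Type*} [Field K] {T H : K[X][X]} (hT : T.Monic)
    (hirr : Irreducible T) (hdeg : H.degree < T.degree) {τ u : K[X]} (hTu : τ ∣ T.eval u)
    (hHu : τ ∣ H.eval u) {a b : ℕ} (ha : ∀ i, (T.coeff i).natDegree ≤ a)
    (hb : ∀ i, (H.coeff i).natDegree ≤ b)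
    (hτ : T.natDegree * b + H.natDegree * a < τ.natDegree) : H = 0 := by
  refine eq_zero_of_resultant_eq_zero hT hirr hdeg (eq_zero_of_dvd_of_natDegree_lt ?_
    ((natDegree_resultant_le _ _ ha hb).trans_lt hτ))
  have hT0 : T.natDegree ≠ 0 := fun h0 => hirr.not_isUnit <| by
    rw [hT.natDegree_eq_zero.mp h0]; exact isUnit_one
  obtain ⟨p, q, -, -, hpq⟩ := exists_mul_add_mul_eq_C_resultant T H le_rfl le_rfl (.inl hT0)
  have heval := congrArg (eval u) hpq
  rw [eval_add, eval_mul, eval_mul, eval_C] at heval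
  rw [← heval]
  exact dvd_add (hTu.mul_right _) (hHu.mul_right _)

theorem forall_eq_zero_of_sum_mul_pow_eq_zero {R : Type*} [CommRing R] [IsDomain R] {τ : R}
    (hτ : τ ≠ 0) {n : ℕ} {s : Fin n → R} (hs : ∀ a, τ ∣ s a → s a = 0)
    (hsum : ∑ a, s a * τ ^ (a : ℕ) = 0) (a : Fin n) : s a = 0 := by
  induction n with
  | zero => exact a.elim0
  | succ n ih =>
    have hsucc : ∑ a : Fin n, s a.succ * τ ^ (a.succ : ℕ) =
        τ * ∑ a : Fin n, s a.succ * τ ^ (a : ℕ) := by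
      rw [Finset.mul_sum]
      exact Finset.sum_congr rfl fun a _ => by rw [Fin.val_succ]; ring
    rw [Fin.sum_univ_succ, Fin.val_zero, pow_zero, mul_one, hsucc] at hsum
    have hzero : s 0 = 0 := hs 0 (Dvd.intro (-∑ a : Fin n, s a.succ * τ ^ (a : ℕ))
      (by linear_combination -hsum))
    rw [hzero, zero_add, mul_eq_zero] at hsum
    exact Fin.cases hzero (ih (fun a => hs a.succ) (hsum.resolve_left hτ)) a

theorem rootMultiplicity_prod_X_add_C_pow {K ι : Type*} [Field K] [Fintype ι] {b : ι → K}
    (hb : Function.Injective b) (j : ι → ℕ) (i : ι) :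
    (∏ i, (X + C (b i)) ^ j i).rootMultiplicity (-b i) = j i := by
  classical
  have h0 : ∏ i, (X + C (b i)) ^ j i ≠ 0 :=
    Finset.prod_ne_zero_iff.mpr fun i _ => pow_ne_zero _ (X_add_C_ne_zero _)
  rw [← Finset.mul_prod_erase _ _ (Finset.mem_univ i)] at h0 ⊢
  rw [rootMultiplicity_mul h0, ← sub_neg_eq_add, ← C_neg, rootMultiplicity_X_sub_C_pow,
    rootMultiplicity_eq_zero, add_zero]
  rw [IsRoot, eval_prod, Finset.prod_eq_zero_iff]
  rintro ⟨i', hi', h⟩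
  have h' := eq_zero_of_pow_eq_zero (eval_pow (R := K) _ ▸ h)
  rw [eval_add, eval_X, eval_C, neg_add_eq_zero] at h'
  exact Finset.ne_of_mem_erase hi' (hb h').symm

theorem hasKummerOrder_prod_X_add_C_pow {K ι : Type*} [Field K] [Fintype ι] {b : ι → K}
    (hb : Function.Injective b) {j : ι → ℕ} {ℓ : ℕ} (hj : ∀ d, (∀ i, ℓ ∣ d * j i) → ℓ ∣ d) :
    HasKummerOrder (∏ i, (X + C (b i)) ^ j i) ℓ := by
  classical
  refine fun d g h => hj d fun i => ?_
  have hcount := congrArg (Multiset.count (-b i)) h.roots_eq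
  rw [roots_pow, roots_pow, Multiset.count_nsmul, Multiset.count_nsmul, count_roots, count_roots,
    rootMultiplicity_prod_X_add_C_pow hb] at hcount
  exact Dvd.intro _ hcount

/-! ### The Stepanov method -/

theorem exists_sum_pow_mul_eq_zero {K ι : Type*} [Field K] [Finite K] [Fintype ι] {p e D E : ℕ}
    [Fact p.Prime] [CharP K p] {g : ι → K[X]} (hg : ∀ i, (g i).natDegree ≤ E)
    (hcount : p ^ e * D + E < Fintype.card ι * D) :
    ∃ r : ι → K[X], r ≠ 0 ∧ (∀ i, (r i).natDegree < D) ∧ ∑ i, r i ^ p ^ e * g i = 0 := by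
  have hp : 0 < p ^ e := pow_pos (Fact.out : p.Prime).pos e
  have hD : 0 < D := Nat.pos_of_ne_zero fun h => by simp [h] at hcount
  have hnatDegree {n : ℕ} (hn : 0 < n) {f : K[X]} : f ∈ degreeLT K n ↔ f.natDegree < n := by
    rcases eq_or_ne f 0 with rfl | hf
    · simp [hn]
    · rw [mem_degreeLT, natDegree_lt_iff_degree_lt hf]
  have hcard (n : ℕ) : Nat.card (degreeLT K n) = Nat.card K ^ n := by
    rw [Nat.card_congr (degreeLTEquiv K n).toEquiv, Nat.card_fun, Nat.card_fin]
  have hfin (n : ℕ) : Finite (degreeLT K n) := .of_equiv _ (degreeLTEquiv K n).toEquiv.symm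
  have hmem (r : ι → degreeLT K D) :
      ∑ i, (r i : K[X]) ^ p ^ e * g i ∈ degreeLT K (p ^ e * D + E) := by
    refine Submodule.sum_mem _ fun i _ => (hnatDegree (by positivity)).mpr ?_
    refine (natDegree_mul_le_of_le natDegree_pow_le (hg i)).trans_lt ?_
    have := (hnatDegree hD).mp (r i).2
    gcongr
  let Φ (r : ι → degreeLT K D) : degreeLT K (p ^ e * D + E) := ⟨_, hmem r⟩
  obtain ⟨x, y, hxy, hne⟩ : ∃ x y, Φ x = Φ y ∧ x ≠ y := by
    rw [← Function.not_injective_iff]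
    intro hinj
    have hle := Nat.card_le_card_of_injective Φ hinj
    rw [Nat.card_fun, hcard, hcard, ← pow_mul, Nat.card_eq_fintype_card (α := ι),
      Nat.pow_le_pow_iff_right Finite.one_lt_card, mul_comm D] at hle
    omega
  refine ⟨fun i => x i - y i, fun h => hne ?_, fun i => ?_, ?_⟩
  · exact _root_.funext fun i => Subtype.ext (sub_eq_zero.mp (congrFun h i))
  · exact (hnatDegree hD).mp (Submodule.sub_mem _ (x i).2 (y i).2)
  · simp_rw [sub_pow_char_pow, sub_mul, Finset.sum_sub_distrib]
    exact sub_eq_zero.mpr (congrArg Subtype.val hxy)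

theorem eq_zero_of_dvd_sum_mul_pow {K : Type*} [Field K] {ℓ D : ℕ} (hℓ : 2 ≤ ℓ) {s τ u : K[X]}
    (hs : HasKummerOrder s ℓ) (hu : τ ∣ u ^ ℓ - s) {r : Fin ℓ → K[X]}
    (hr : ∀ b, (r b).natDegree ≤ D) (hτ : ℓ * (D + s.natDegree) < τ.natDegree)
    (hdvd : τ ∣ ∑ b, r b * u ^ (b : ℕ)) : r = 0 := by
  classical
  set T : K[X][X] := X ^ ℓ - C s
  have hTdeg : T.degree = ℓ := degree_X_pow_sub_C (by omega) s
  have hTnatDegree : T.natDegree = ℓ := natDegree_X_pow_sub_C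
  have hTcoeff (i : ℕ) : (T.coeff i).natDegree ≤ s.natDegree := by
    rw [coeff_sub, coeff_X_pow, coeff_C]
    exact (natDegree_sub_le _ _).trans (by split_ifs <;> simp)
  set H : K[X][X] := ofFn ℓ r with hH
  have hHcoeff (i : ℕ) : (H.coeff i).natDegree ≤ D := by
    rcases lt_or_ge i ℓ with hi | hi
    · rw [ofFn_coeff_eq_val_of_lt _ hi]; exact hr _
    · rw [ofFn_coeff_eq_zero_of_ge _ hi]; simp
  have hHeval : H.eval u = ∑ b, r b * u ^ (b : ℕ) := by
    simp only [hH, ofFn_eq_sum_monomial, eval_finsetSum, eval_monomial]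
  have hH0 : H = 0 := by
    refine eq_zero_of_dvd_eval_of_dvd_eval (monic_X_pow_sub_C s (by omega))
      (hs.irreducible_X_pow_sub_C (by omega)) (hTdeg ▸ ofFn_degree_lt _) (u := u) (by simpa [T])
      (hHeval ▸ hdvd) hTcoeff hHcoeff ?_
    have : H.natDegree < ℓ := ofFn_natDegree_lt (by omega) _
    rw [hTnatDegree]
    nlinarith
  refine _root_.funext fun b => ?_
  rw [← ofFn_coeff_eq_val_of_lt r b.2, ← hH, hH0, coeff_zero, Pi.zero_apply]

theorem sum_mul_pow_mul_pow_ne_zero {K : Type*} [Field K] {A ℓ D : ℕ} (hℓ : 2 ≤ ℓ) {s τ u : K[X]}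
    (hs : HasKummerOrder s ℓ) (hu : τ ∣ u ^ ℓ - s) {r : Fin A × Fin ℓ → K[X]}
    (hr : ∀ i, (r i).natDegree ≤ D) (hτ : ℓ * (D + s.natDegree) < τ.natDegree) (hr0 : r ≠ 0) :
    ∑ i, r i * τ ^ (i.1 : ℕ) * u ^ (i.2 : ℕ) ≠ 0 := by
  intro hsum
  have hzero (a : Fin A) (hdvd : τ ∣ ∑ b, r (a, b) * u ^ (b : ℕ)) : (fun b => r (a, b)) = 0 :=
    eq_zero_of_dvd_sum_mul_pow hℓ hs hu (fun b => hr (a, b)) hτ hdvd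
  have hinner (a : Fin A) : ∑ b, r (a, b) * u ^ (b : ℕ) = 0 := by
    refine forall_eq_zero_of_sum_mul_pow_eq_zero (ne_zero_of_natDegree_gt hτ)
      (s := fun a => ∑ b, r (a, b) * u ^ (b : ℕ)) (fun a hdvd => ?_) ?_ a
    · exact Finset.sum_eq_zero fun b _ => by rw [congrFun (hzero a hdvd) b]; simp
    · rw [← hsum, Fintype.sum_prod_type]
      simp only [Finset.sum_mul]
      exact Finset.sum_congr rfl fun a _ => Finset.sum_congr rfl fun b _ => by ring
  exact hr0 (_root_.funext fun ⟨a, b⟩ => congrFun (hzero a (hinner a ▸ dvd_zero τ)) b)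

theorem X_sub_C_pow_dvd_pow_sub_C {K : Type*} [Field K] (f : K[X]) (β : K) (p e : ℕ)
    [Fact p.Prime] [CharP K p] :
    (X - C β) ^ p ^ e ∣ f ^ p ^ e - C (f.eval β ^ p ^ e) := by
  rw [C_pow, ← sub_pow_char_pow]
  exact pow_dvd_pow_of_dvd (dvd_iff_isRoot.mpr (by simp)) _

section Stepanov

variable {K : Type*} [Field K] {p e ℓ k A : ℕ} {f : K[X]} {β : K} {r : Fin A × Fin ℓ → K[X]}

/-- Stepanov's auxiliary polynomial `∑ r_ab * (X - β)^(a * P) * f^(b * (P - k))`, which is used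
over the field with `P ^ 2` elements, for `P = ℓ * k + 1`, to bound the number of solutions of
`f(x)^(k * (P + 1)) = c`. -/
noncomputable def stepanovPoly (P k : ℕ) (f : K[X]) (β : K) (r : Fin A × Fin ℓ → K[X]) : K[X] :=
  ∑ i, r i * ((X - C β) ^ P) ^ (i.1 : ℕ) * (f ^ (P - k)) ^ (i.2 : ℕ)

theorem natDegree_stepanovPoly_le {P D : ℕ} (hr : ∀ i, (r i).natDegree ≤ D) :
    (stepanovPoly P k f β r).natDegree ≤ D + A * P + ℓ * f.natDegree * P := by
  refine natDegree_sum_le_of_forall_le _ _ fun i _ =>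
    natDegree_mul_le_of_le (natDegree_mul_le_of_le (hr i) ?_) ?_
  · rw [natDegree_pow, natDegree_pow, natDegree_X_sub_C, mul_one]
    exact Nat.mul_le_mul_right _ i.1.2.le
  · rw [natDegree_pow, natDegree_pow, mul_assoc, mul_comm f.natDegree]
    exact Nat.mul_le_mul i.2.2.le (Nat.mul_le_mul_right _ (Nat.sub_le _ _))

variable [Fact p.Prime] [CharP K p]

theorem stepanovPoly_ne_zero {D : ℕ} (hk : p ^ e = ℓ * k + 1) (hℓ : 2 ≤ ℓ)
    (hf : HasKummerOrder f ℓ) (hβ : f.eval β ≠ 0) (hr : ∀ i, (r i).natDegree ≤ D)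
    (hD : D + f.natDegree ≤ k) (hr0 : r ≠ 0) : stepanovPoly (p ^ e) k f β r ≠ 0 := by
  set γ := (f.eval β ^ p ^ e) ^ (ℓ - 1)
  have hγ : γ ≠ 0 := pow_ne_zero _ (pow_ne_zero _ hβ)
  have hexp : (p ^ e - k) * ℓ = p ^ e * (ℓ - 1) + 1 := by
    rw [Nat.sub_mul, Nat.mul_sub, mul_comm k, mul_one, show ℓ * k = p ^ e - 1 by omega]
    have : p ^ e * 1 ≤ p ^ e * ℓ := Nat.mul_le_mul_left _ (by omega)
    omega
  have hroot : (X - C β) ^ p ^ e ∣ (f ^ (p ^ e - k)) ^ ℓ - C γ * f := by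
    rw [← pow_mul, hexp, pow_succ, pow_mul, C_pow, ← sub_mul]
    exact ((X_sub_C_pow_dvd_pow_sub_C f β p e).trans (sub_dvd_pow_sub_pow _ _ _)).mul_right f
  have hs : HasKummerOrder (C γ * f) ℓ :=
    hf.of_associated (associated_unit_mul_right _ _ (isUnit_C.mpr (isUnit_iff_ne_zero.mpr hγ)))
  refine sum_mul_pow_mul_pow_ne_zero hℓ hs hroot hr ?_ hr0
  rw [natDegree_C_mul hγ, natDegree_pow, natDegree_X_sub_C, mul_one, hk, Nat.lt_succ_iff]
  exact Nat.mul_le_mul_left ℓ hD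

theorem eval_stepanovPoly_pow [Fintype K] (hcard : Fintype.card K = (p ^ e) ^ 2) (hk : k ≤ p ^ e)
    {c x : K} (hc : c ≠ 0) (hx : f.eval x ^ (k * (p ^ e + 1)) = c) :
    (stepanovPoly (p ^ e) k f β r).eval x ^ p ^ e =
      (∑ i, r i ^ p ^ e *
        ((X - C β) ^ (i.1 : ℕ) * (C c⁻¹ * f ^ (k + 1)) ^ (i.2 : ℕ))).eval x := by
  -- The `P`-th power lowers the exponents because `x ^ (P ^ 2) = x`.
  have hβ : ((x - β) ^ p ^ e) ^ p ^ e = x - β := by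
    rw [← pow_mul, ← sq, ← hcard, FiniteField.pow_card]
  have hf : (f.eval x ^ (p ^ e - k)) ^ p ^ e = c⁻¹ * f.eval x ^ (k + 1) := by
    have hexp : k * (p ^ e + 1) + (p ^ e - k) * p ^ e = Fintype.card K + k := by
      rw [hcard]
      zify [hk]
      ring
    rw [eq_inv_mul_iff_mul_eq₀ hc, ← hx, ← pow_mul, ← pow_add, hexp, pow_add,
      FiniteField.pow_card, pow_succ']
  rw [stepanovPoly, eval_finsetSum, eval_finsetSum, sum_pow_char_pow]
  refine Finset.sum_congr rfl fun i _ => ?_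
  simp only [eval_mul, eval_pow, eval_sub, eval_X, eval_C]
  rw [mul_pow, mul_pow, pow_right_comm _ (i.1 : ℕ), hβ, pow_right_comm _ (i.2 : ℕ), hf, mul_assoc]

theorem stepanov_unknowns_gt_equations {k ℓ m : ℕ} (hℓ : 2 ≤ ℓ) (hkm : 2 * m + 2 ≤ k) :
    (ℓ * k + 1) * (k - m) + (k + 4 * ℓ * m + 3 + ℓ * ((k + 1) * m)) <
      (k + 4 * ℓ * m + 3) * ℓ * (k - m) := by
  obtain ⟨D, rfl⟩ := Nat.exists_eq_add_of_le (show m ≤ k by omega)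
  obtain ⟨v, rfl⟩ := Nat.exists_eq_add_of_le hℓ
  obtain ⟨w, rfl⟩ := Nat.exists_eq_add_of_le (show m + 2 ≤ D by omega)
  rw [Nat.add_sub_cancel_left]
  nlinarith [Nat.zero_le (v * m * m), Nat.zero_le (v * m * w), Nat.zero_le (v * v * m * m),
    Nat.zero_le (v * v * m * w), Nat.zero_le (v * w)]

theorem card_filter_eval_pow_eq_le [Fintype K] [DecidableEq K]
    (hcard : Fintype.card K = (p ^ e) ^ 2) (hk : p ^ e = ℓ * k + 1) (hℓ : 2 ≤ ℓ)
    (hf : HasKummerOrder f ℓ) (hkm : 2 * f.natDegree + 2 ≤ k) {c : K} (hc : c ≠ 0) :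
    (Finset.univ.filter fun x => f.eval x ^ (k * (p ^ e + 1)) = c).card ≤
      (k + 5 * ℓ * f.natDegree + 4) * p ^ e := by
  set m := f.natDegree with hm
  have hkP : k ≤ p ^ e := by nlinarith
  obtain ⟨β, hβ⟩ : ∃ β, f.eval β ≠ 0 := by
    by_contra! h
    refine hf.ne_zero hℓ
      (eq_zero_of_natDegree_lt_card_of_eval_eq_zero f Function.injective_id h ?_)
    rw [hcard]
    nlinarith
  set A := k + 4 * ℓ * m + 3 with hA
  have hdeg (i : Fin A × Fin ℓ) :
      ((X - C β) ^ (i.1 : ℕ) * (C c⁻¹ * f ^ (k + 1)) ^ (i.2 : ℕ)).natDegree ≤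
        A + ℓ * ((k + 1) * m) := by
    refine natDegree_mul_le_of_le ?_ ?_
    · rw [natDegree_pow, natDegree_X_sub_C, mul_one]
      exact i.1.2.le
    · rw [natDegree_pow, natDegree_C_mul (inv_ne_zero hc), natDegree_pow]
      exact Nat.mul_le_mul_right _ i.2.2.le
  obtain ⟨r, hr0, hr, hsum⟩ := exists_sum_pow_mul_eq_zero (p := p) (e := e) (D := k - m) hdeg <| by
    rw [Fintype.card_prod, Fintype.card_fin, Fintype.card_fin, hk]
    exact stepanov_unknowns_gt_equations hℓ hkm
  have hne : stepanovPoly (p ^ e) k f β r ≠ 0 :=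
    stepanovPoly_ne_zero hk hℓ hf hβ (fun i => (hr i).le) (by omega) hr0
  refine (card_le_degree_of_subset_roots (p := stepanovPoly (p ^ e) k f β r) fun x hx => ?_).trans
    ((natDegree_stepanovPoly_le fun i => (hr i).le).trans ?_)
  · rw [mem_roots hne, IsRoot.def]
    refine eq_zero_of_pow_eq_zero (n := p ^ e) ?_
    rw [eval_stepanovPoly_pow hcard hkP hc (Finset.mem_filter.mp hx).2, hsum, eval_zero]
  · rw [← hm, hA]
    have : k - m ≤ p ^ e := by omega
    linarith

end Stepanov

/-! ### Character sums over extensions of even degree -/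

theorem sum_nthRootsFinset_one_eq_zero {R : Type*} [CommRing R] [IsDomain R] {ζ : R} {n : ℕ}
    (hζ : IsPrimitiveRoot ζ n) (hn : 1 < n) : ∑ ω ∈ nthRootsFinset n (1 : R), ω = 0 := by
  classical
  rw [nthRootsFinset_def, Finset.sum_eq_multiset_sum, Multiset.toFinset_val,
    hζ.nthRoots_one_nodup.dedup, Multiset.map_id', hζ.nthRoots_eq (one_pow n)]
  simpa [Finset.sum_eq_multiset_sum] using hζ.geom_sum_eq_zero hn

theorem norm_sum_le_of_card_fiber_le {α : Type*} {s : Finset α} {φ : α → ℂ} {n M : ℕ} (hn : 2 ≤ n)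
    (hφ : ∀ x ∈ s, φ x ^ n = 1) (hM : ∀ ω : ℂ, ω ^ n = 1 → (s.filter fun x => φ x = ω).card ≤ M) :
    ‖∑ x ∈ s, φ x‖ ≤ n * M - s.card := by
  classical
  have hζ := Complex.isPrimitiveRoot_exp n (by omega)
  set Ω := nthRootsFinset n (1 : ℂ)
  have hmem {ω : ℂ} : ω ∈ Ω ↔ ω ^ n = 1 := mem_nthRootsFinset (by omega) 1
  have hmaps : ∀ x ∈ s, φ x ∈ Ω := fun x hx => hmem.mpr (hφ x hx)
  let N (ω : ℂ) : ℕ := (s.filter fun x => φ x = ω).card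
  -- The `n`-th roots of unity sum to `0`, so the fibre sizes may be replaced by their defects.
  have hsum : ∑ x ∈ s, φ x = -∑ ω ∈ Ω, ((M - N ω : ℝ) : ℂ) * ω := by
    have hfiber : ∑ x ∈ s, φ x = ∑ ω ∈ Ω, N ω * ω := by
      rw [← Finset.sum_fiberwise_of_maps_to hmaps]
      refine Finset.sum_congr rfl fun ω _ => ?_
      rw [Finset.sum_congr rfl fun x hx => (Finset.mem_filter.mp hx).2, Finset.sum_const,
        nsmul_eq_mul]
    push_cast
    rw [Finset.sum_congr rfl fun ω _ => sub_mul _ _ _, Finset.sum_sub_distrib, ← Finset.mul_sum,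
      sum_nthRootsFinset_one_eq_zero hζ (by omega), mul_zero, zero_sub, neg_neg,
      hfiber]
  have hnorm : ∀ ω ∈ Ω, ‖((M - N ω : ℝ) : ℂ) * ω‖ = M - N ω := fun ω hω => by
    have hle : (N ω : ℝ) ≤ M := by exact_mod_cast hM ω (hmem.mp hω)
    rw [norm_mul, Complex.norm_eq_one_of_pow_eq_one (hmem.mp hω) (by omega), mul_one,
      Complex.norm_real, Real.norm_of_nonneg (sub_nonneg.mpr hle)]
  calc ‖∑ x ∈ s, φ x‖ ≤ ∑ ω ∈ Ω, ‖((M - N ω : ℝ) : ℂ) * ω‖ := by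
        rw [hsum, norm_neg]
        exact norm_sum_le _ _
    _ = Ω.card * M - ∑ ω ∈ Ω, (N ω : ℝ) := by
        rw [Finset.sum_congr rfl hnorm, Finset.sum_sub_distrib, Finset.sum_const, nsmul_eq_mul]
    _ = n * M - s.card := by
        rw [hζ.card_nthRootsFinset, Finset.card_eq_sum_card_fiberwise hmaps, Nat.cast_sum]

section MulChar

variable {F : Type*} [Field F]

theorem mulChar_apply_eq_one_iff [Fintype F] {R : Type*} [CommRing R] [Nontrivial R]
    (χ : MulChar F R) (v : F) : χ v = 1 ↔ v ^ ((Fintype.card F - 1) / orderOf χ) = 1 := by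
  classical
  obtain ⟨c, hc⟩ := MulChar.orderOf_dvd_card_sub_one F χ
  have hχ : 0 < orderOf χ := MulChar.orderOf_pos χ
  have hF : 0 < Fintype.card F - 1 := Nat.sub_pos_of_lt Fintype.one_lt_card
  have hc0 : 0 < c := Nat.pos_of_ne_zero fun h => by simp [h] at hc; omega
  rw [hc, Nat.mul_div_cancel_left _ hχ]
  rcases eq_or_ne v 0 with rfl | hv
  · simp [MulChar.map_zero, hc0.ne']
  obtain ⟨g, hg⟩ := IsCyclic.exists_generator (α := Fˣ)
  obtain ⟨s, hs⟩ := mem_powers_iff_mem_zpowers.mpr (hg (Units.mk0 v hv))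
  obtain rfl : v = (g : F) ^ s := by simpa using (congrArg Units.val hs).symm
  have horderχ : orderOf (χ g) = orderOf χ := orderOf_eq_orderOf_iff.mpr fun n => by
    rw [MulChar.eq_iff hg, ← MulChar.pow_apply_coe, MulChar.one_apply_coe]
  have horderg : orderOf (g : F) = orderOf χ * c := by
    rw [orderOf_units, orderOf_eq_card_of_forall_mem_zpowers hg, Nat.card_eq_fintype_card,
      Fintype.card_units, hc]
  rw [map_pow, ← pow_mul, ← orderOf_dvd_iff_pow_eq_one, ← orderOf_dvd_iff_pow_eq_one, horderχ,
    horderg, Nat.mul_dvd_mul_iff_right hc0]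

theorem mulChar_apply_eq_apply_iff [Fintype F] {R : Type*} [CommRing R] [Nontrivial R]
    (χ : MulChar F R) (v : F) {w : F} (hw : w ≠ 0) :
    χ v = χ w ↔ v ^ ((Fintype.card F - 1) / orderOf χ) =
      w ^ ((Fintype.card F - 1) / orderOf χ) := by
  have hχ : IsUnit (χ w) := (Ne.isUnit hw).map χ
  rw [← div_eq_one_iff_eq (pow_ne_zero _ hw), ← div_pow, ← mulChar_apply_eq_one_iff χ,
    ← hχ.mul_left_inj (b := χ (v / w)), one_mul, ← map_mul, div_mul_cancel₀ v hw]

/-- The lift `χ ∘ N_{K/F}` of a multiplicative character `χ` of `F` to an extension `K`. -/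
noncomputable def mulCharLift (K : Type*) [Field K] [Algebra F K] [FiniteDimensional F K]
    (R : Type*) [CommMonoidWithZero R] : MulChar F R →* MulChar K R where
  toFun χ :=
    { toMonoidHom := χ.toMonoidHom.comp (Algebra.norm F)
      map_nonunit' := fun x hx => by
        simp [not_not.mp (mt Ne.isUnit hx), MulChar.map_zero] }
  map_one' := by
    ext x
    simp [MulChar.one_apply (x.isUnit.map (Algebra.norm F))]
  map_mul' χ ψ := by
    ext x
    simp

theorem mulCharLift_apply {K R : Type*} [Field K] [Algebra F K] [FiniteDimensional F K]
    [CommMonoidWithZero R] (χ : MulChar F R) (x : K) :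
    mulCharLift K R χ x = χ (Algebra.norm F x) := rfl

theorem mulCharLift_injective (K R : Type*) [Field K] [Algebra F K] [Finite K]
    [CommMonoidWithZero R] : Function.Injective (mulCharLift (F := F) K R) := by
  intro χ ψ h
  refine MulChar.ext' fun v => ?_
  obtain ⟨x, rfl⟩ := FiniteField.norm_surjective F K v
  simp only [← mulCharLift_apply, h]

end MulChar

theorem exists_pow_eq_of_isCyclic {G ι : Type*} [CommGroup G] [Finite G] [IsCyclic G]
    (χ : ι → G) : ∃ (ψ : G) (j : ι → ℕ), (∀ i, j i ≠ 0 ∧ ψ ^ j i = χ i) ∧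
      ∀ d, (∀ i, χ i ^ d = 1) → ψ ^ d = 1 := by
  obtain ⟨ψ, hψ⟩ : ∃ ψ, Subgroup.zpowers ψ = Subgroup.closure (Set.range χ) :=
    (Subgroup.isCyclic_iff_exists_zpowers_eq_top _).mp inferInstance
  have hpow (i : ι) : ∃ n, n ≠ 0 ∧ ψ ^ n = χ i := by
    have hmem : χ i ∈ Subgroup.zpowers ψ := hψ ▸ Subgroup.subset_closure (Set.mem_range_self i)
    obtain ⟨n, hn⟩ := mem_powers_iff_mem_zpowers.mpr hmem
    exact ⟨n + orderOf ψ, (Nat.add_pos_right n (orderOf_pos ψ)).ne', by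
      rw [pow_add, pow_orderOf_eq_one, mul_one, ← hn]⟩
  choose j hj using hpow
  refine ⟨ψ, j, hj, fun d hd => ?_⟩
  have hle : Subgroup.closure (Set.range χ) ≤ (powMonoidHom d : G →* G).ker :=
    (Subgroup.closure_le _).mpr (Set.range_subset_iff.mpr hd)
  exact hle (hψ ▸ Subgroup.mem_zpowers ψ)

theorem card_filter_mulChar_eval_eq_le {K : Type*} [Field K] [Fintype K] {P k : ℕ}
    (hcard : Fintype.card K = P ^ 2) {χ : MulChar K ℂ} (hχ : 2 ≤ orderOf χ)
    (hP : P = orderOf χ * k + 1) {f : K[X]} (hf : HasKummerOrder f (orderOf χ))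
    (hk : 2 * f.natDegree + 2 ≤ k) {ω : ℂ} (hω : ω ≠ 0) :
    (Finset.univ.filter fun x => χ (f.eval x) = ω).card ≤
      (k + 5 * orderOf χ * f.natDegree + 4) * P := by
  classical
  rcases (Finset.univ.filter fun x => χ (f.eval x) = ω).eq_empty_or_nonempty with hempty | ⟨y, hy⟩
  · simp [hempty]
  obtain ⟨p, _, n, hp, hcardp⟩ := FiniteField.card' K
  have : Fact p.Prime := ⟨hp⟩
  have hexp : (Fintype.card K - 1) / orderOf χ = k * (P + 1) := by
    rw [hcard, hP]
    refine Nat.div_eq_of_eq_mul_right (by omega) ?_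
    rw [Nat.sub_eq_iff_eq_add (Nat.one_le_pow _ _ (by omega))]
    ring
  obtain ⟨e, -, rfl⟩ := (Nat.dvd_prime_pow hp).mp (hcardp ▸ hcard ▸ dvd_pow_self P two_ne_zero)
  rw [Finset.mem_filter_univ] at hy
  have hy0 : f.eval y ≠ 0 := fun h => hω (by rw [← hy, h, MulChar.map_zero])
  refine (Finset.card_le_card fun x hx => ?_).trans
    (card_filter_eval_pow_eq_le hcard hP hχ hf hk (pow_ne_zero (k * (p ^ e + 1)) hy0))
  rw [Finset.mem_filter_univ] at hx ⊢
  rw [← hexp, ← mulChar_apply_eq_apply_iff χ _ hy0, hx, hy]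

theorem card_le_card_filter_eval_ne_zero_add_natDegree {K : Type*} [Field K] [Fintype K]
    [DecidableEq K] {f : K[X]} (hf : f ≠ 0) :
    Fintype.card K ≤ (Finset.univ.filter fun x => f.eval x ≠ 0).card + f.natDegree := by
  rw [← Finset.card_add_card_compl (Finset.univ.filter fun x => f.eval x ≠ 0)]
  gcongr
  refine card_le_degree_of_subset_roots fun x hx => ?_
  rw [mem_roots hf]
  simpa using hx

theorem norm_sum_mulChar_eval_le {K : Type*} [Field K] [Fintype K] {P : ℕ}
    (hcard : Fintype.card K = P ^ 2) {χ : MulChar K ℂ} (hχ : 2 ≤ orderOf χ)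
    (hdvd : orderOf χ ∣ P - 1) {f : K[X]} (hf : HasKummerOrder f (orderOf χ))
    (hP : orderOf χ * (2 * f.natDegree + 2) < P) :
    ‖∑ x, χ (f.eval x)‖ ≤
      (orderOf χ * (5 * orderOf χ * f.natDegree + 4) + f.natDegree : ℕ) * P := by
  classical
  set ℓ := orderOf χ with hℓ
  set m := f.natDegree
  obtain ⟨k, hk⟩ := hdvd
  have hPk : P = ℓ * k + 1 := by omega
  have hkm : 2 * m + 2 ≤ k := by
    rw [hPk, Nat.lt_succ_iff] at hP
    exact Nat.le_of_mul_le_mul_left hP (by omega)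
  set s := Finset.univ.filter fun x => f.eval x ≠ 0
  have hs : P ^ 2 ≤ s.card + m :=
    hcard ▸ card_le_card_filter_eval_ne_zero_add_natDegree (hf.ne_zero hχ)
  have hpow : ∀ x ∈ s, χ (f.eval x) ^ ℓ = 1 := fun x hx => by
    rw [← MulChar.pow_apply' _ (by omega), hℓ, pow_orderOf_eq_one,
      MulChar.one_apply (Ne.isUnit (Finset.mem_filter.mp hx).2)]
  have hfiber (ω : ℂ) (hω : ω ^ ℓ = 1) :
      (s.filter fun x => χ (f.eval x) = ω).card ≤ (k + 5 * ℓ * m + 4) * P :=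
    (Finset.card_le_card (Finset.filter_subset_filter _ s.subset_univ)).trans <|
      card_filter_mulChar_eval_eq_le hcard hχ hPk hf hkm fun h0 => by
        rw [h0, zero_pow (by omega)] at hω
        exact zero_ne_one hω
  have hsum : ∑ x, χ (f.eval x) = ∑ x ∈ s, χ (f.eval x) :=
    (Finset.sum_filter_of_ne (p := fun x => f.eval x ≠ 0)
      fun x _ hx h0 => hx (by rw [h0, MulChar.map_zero])).symm
  have hsR : (P : ℝ) ^ 2 ≤ s.card + m := by exact_mod_cast hs
  have hPR : (P : ℝ) = ℓ * k + 1 := by exact_mod_cast hPk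
  have hmP : (m : ℝ) ≤ m * P := by exact_mod_cast Nat.le_mul_of_pos_right m (by omega)
  calc ‖∑ x, χ (f.eval x)‖ ≤ ℓ * ((k + 5 * ℓ * m + 4) * P : ℕ) - s.card :=
        hsum ▸ norm_sum_le_of_card_fiber_le hχ hpow hfiber
    _ ≤ (ℓ * k) * P + ℓ * (5 * ℓ * m + 4) * P - (P ^ 2 - m * P) := by push_cast; linarith
    _ ≤ (ℓ * (5 * ℓ * m + 4) + m : ℕ) * P := by
        rw [eq_sub_of_add_eq hPR.symm]
        push_cast
        linarith [Nat.cast_nonneg (α := ℝ) P]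

theorem isCyclic_mulChar (F : Type*) [Field F] [Finite F] : IsCyclic (MulChar F ℂ) :=
  (MulChar.mulEquiv_units F ℂ).some.isCyclic.mpr inferInstance

theorem norm_sum_prod_mulCharLift_pow_le {F ι K : Type*} [Field F] [Fintype F] [Fintype ι]
    [Field K] [Fintype K] [Algebra F K] {ψ : MulChar F ℂ} (hψ : 2 ≤ orderOf ψ) {j : ι → ℕ}
    (hj : ∀ i, j i ≠ 0) (hψj : ∀ d, (∀ i, orderOf ψ ∣ d * j i) → orderOf ψ ∣ d)
    {a : ι → F} (ha : Function.Injective a) {n : ℕ} (hn : orderOf ψ * (2 * ∑ i, j i + 2) ≤ n)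
    (hK : Module.finrank F K = 2 * n) :
    ‖∑ x : K, ∏ i, mulCharLift K ℂ (ψ ^ j i) (algebraMap F K (a i) + x)‖ ≤
      (orderOf ψ * (5 * orderOf ψ * ∑ i, j i + 4) + ∑ i, j i : ℕ) *
        (Fintype.card F : ℝ) ^ n := by
  set f : K[X] := ∏ i, (X + C (algebraMap F K (a i))) ^ j i with hf
  have hdeg : f.natDegree = ∑ i, j i := by
    rw [hf, natDegree_prod _ _ fun i _ => pow_ne_zero _ (X_add_C_ne_zero _)]
    simp
  have horder : orderOf (mulCharLift K ℂ ψ) = orderOf ψ :=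
    orderOf_injective _ (mulCharLift_injective K ℂ) ψ
  have hsum : ∑ x : K, ∏ i, mulCharLift K ℂ (ψ ^ j i) (algebraMap F K (a i) + x) =
      ∑ x, mulCharLift K ℂ ψ (f.eval x) := by
    refine Finset.sum_congr rfl fun x _ => ?_
    rw [hf, eval_prod, map_prod]
    refine Finset.prod_congr rfl fun i _ => ?_
    rw [map_pow, MulChar.pow_apply' _ (hj i), eval_pow, map_pow, eval_add, eval_X, eval_C,
      add_comm]
  have hkummer : HasKummerOrder f (orderOf ψ) :=
    hasKummerOrder_prod_X_add_C_pow ((algebraMap F K).injective.comp ha) hψj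
  have hdvd : orderOf ψ ∣ Fintype.card F ^ n - 1 :=
    (MulChar.orderOf_dvd_card_sub_one F ψ).trans <| by
      simpa using Nat.sub_dvd_pow_sub_pow (Fintype.card F) 1 n
  rw [← horder] at hψ hkummer hdvd hn
  rw [hsum, ← hdeg, ← Nat.cast_pow, ← horder]
  refine norm_sum_mulChar_eval_le ?_ hψ hdvd hkummer ?_
  · rw [Module.card_eq_pow_finrank (K := F), hK, mul_comm, pow_mul]
  · rw [hdeg]
    exact hn.trans_lt (Nat.lt_pow_self Fintype.one_lt_card)

theorem exists_norm_sum_prod_mulCharLift_le {F ι : Type*} [Field F] [Fintype F] [Fintype ι]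
    {χ : ι → MulChar F ℂ} (hχ : ∃ i, χ i ≠ 1) {a : ι → F} (ha : Function.Injective a) :
    ∃ (A : ℝ) (n₀ : ℕ), ∀ n ≥ n₀, ∀ (K : Type) [Field K] [Fintype K] [Algebra F K],
      Module.finrank F K = 2 * n →
        ‖∑ x : K, ∏ i, mulCharLift K ℂ (χ i) (algebraMap F K (a i) + x)‖ ≤
          A * (Fintype.card F : ℝ) ^ n := by
  have := isCyclic_mulChar F
  obtain ⟨ψ, j, hj, hψ⟩ := exists_pow_eq_of_isCyclic χ
  obtain rfl : χ = fun i => ψ ^ j i := funext fun i => (hj i).2.symm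
  have hψ2 : 2 ≤ orderOf ψ := by
    have hψ1 : orderOf ψ ≠ 1 := fun h => by
      obtain ⟨i, hi⟩ := hχ
      exact hi (by simp only [orderOf_eq_one_iff.mp h, one_pow])
    have : 0 < orderOf ψ := orderOf_pos ψ
    omega
  have hψj (d : ℕ) (hd : ∀ i, orderOf ψ ∣ d * j i) : orderOf ψ ∣ d :=
    orderOf_dvd_of_pow_eq_one <| hψ d fun i => by
      rw [← pow_mul, mul_comm]
      exact orderOf_dvd_iff_pow_eq_one.mp (hd i)
  exact ⟨_, _, fun n hn K _ _ _ hK =>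
    norm_sum_prod_mulCharLift_pow_le hψ2 (fun i => (hj i).1) hψj ha hn hK⟩

/-! ### Power sums -/

theorem exists_prod_one_sub_C_mul_X_eq {k : Type*} [Field k] [IsAlgClosed k] {L : k[X]}
    (hL : L.coeff 0 = 1) :
    ∃ s : Multiset k, s.card = L.natDegree ∧ (s.map fun w => 1 - C w * X).prod = L := by
  have hsplits := IsAlgClosed.splits L
  refine ⟨L.roots.map (·⁻¹), by rw [Multiset.card_map, hsplits.natDegree_eq_card_roots], ?_⟩
  set M := ((L.roots.map (·⁻¹)).map fun w => 1 - C w * X).prod with hM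
  have hlin : ∀ r ∈ L.roots, X - C r = C (-r) * (1 - C r⁻¹ * X) := fun r hr => by
    have hr0 : r ≠ 0 := by
      rintro rfl
      rw [mem_roots', IsRoot, ← coeff_zero_eq_eval_zero, hL] at hr
      exact one_ne_zero hr.2
    rw [mul_sub, ← mul_assoc, ← C_mul, neg_mul, mul_inv_cancel₀ hr0]
    simp
    ring
  have hfactor : L = C (L.leadingCoeff * (L.roots.map fun r => -r).prod) * M := by
    conv_lhs => rw [hsplits.eq_prod_roots, Multiset.map_congr rfl hlin,
      Multiset.prod_map_mul]
    rw [hM, Multiset.map_map, C_mul, mul_assoc, map_multiset_prod, Multiset.map_map]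
    rfl
  have hM0 : M.coeff 0 = 1 := by
    rw [hM, coeff_zero_multiset_prod]
    simp
  have hconst := congrArg (coeff · 0) hfactor
  simp only [coeff_C_mul, hM0, mul_one, hL] at hconst
  rw [hfactor, ← hconst, C_1, one_mul]

theorem derivative_one_sub_C_mul_X {R : Type*} [CommRing R] (w : R) :
    d⁄dX R (1 - PowerSeries.C w * PowerSeries.X) =
      -(PowerSeries.mk fun n => w ^ (n + 1)) * (1 - PowerSeries.C w * PowerSeries.X) := by
  rw [map_sub, Derivation.leibniz, PowerSeries.derivative_X, PowerSeries.derivative_C,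
    PowerSeries.derivative_one]
  ext n
  rw [mul_sub, ← mul_assoc]
  cases n with
  | zero => simp
  | succ n => simp [PowerSeries.coeff_succ_mul_X, pow_succ]

theorem derivative_prod_one_sub_C_mul_X {R : Type*} [CommRing R] (s : Multiset R) :
    d⁄dX R (s.map fun w => 1 - PowerSeries.C w * PowerSeries.X).prod =
      -(PowerSeries.mk fun n => (s.map (· ^ (n + 1))).sum) *
        (s.map fun w => 1 - PowerSeries.C w * PowerSeries.X).prod := by
  induction s using Multiset.induction_on with
  | empty =>
    ext n
    simp
  | cons w s ih =>
    have hadd : (PowerSeries.mk fun n => ((w ::ₘ s).map (· ^ (n + 1))).sum) =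
        (PowerSeries.mk fun n => w ^ (n + 1)) +
          PowerSeries.mk fun n => (s.map (· ^ (n + 1))).sum := by
      ext n
      simp
    rw [Multiset.map_cons, Multiset.prod_cons, Derivation.leibniz, ih,
      derivative_one_sub_C_mul_X, hadd, smul_eq_mul, smul_eq_mul]
    ring

theorem exists_eq_neg_sum_map_pow {k : Type*} [Field k] [IsAlgClosed k] {c Λ : k⟦X⟧}
    {d : ℕ} (hc0 : c.constantCoeff = 1) (hc : ∀ n > d, c.coeff n = 0)
    (hΛ : d⁄dX k c = Λ * c) :
    ∃ s : Multiset k, s.card ≤ d ∧ ∀ n, Λ.coeff n = -(s.map (· ^ (n + 1))).sum := by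
  have hcoe : (c.trunc (d + 1) : k⟦X⟧) = c := by
    ext n
    rw [coeff_coe, PowerSeries.coeff_trunc]
    split_ifs with h
    · rfl
    · exact (hc n (by omega)).symm
  obtain ⟨s, hcard, hs⟩ := exists_prod_one_sub_C_mul_X_eq (L := c.trunc (d + 1))
    (by simp [PowerSeries.coeff_trunc, hc0])
  have hprod : (s.map fun w => 1 - PowerSeries.C w * PowerSeries.X).prod = c := by
    rw [← hcoe, ← hs, ← coeToPowerSeries.ringHom_apply, map_multiset_prod, Multiset.map_map]
    exact congrArg _ (Multiset.map_congr rfl fun w _ => by simp)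
  refine ⟨s, hcard ▸ Nat.lt_succ_iff.mp (PowerSeries.natDegree_trunc_lt c d), fun n => ?_⟩
  have hcne : c ≠ 0 := by
    rintro rfl
    simp at hc0
  rw [← hprod, derivative_prod_one_sub_C_mul_X, hprod] at hΛ
  rw [← mul_right_cancel₀ hcne hΛ]
  simp

theorem eval_mul_pow_eq_sum_coeff_mul {R : Type*} [CommSemiring R] {s : Finset R} {m : R → R}
    {p : R[X]} {w : R} (hw : w ∈ s) (hp : ∀ v ∈ s, v ≠ w → p.eval v = 0) (n : ℕ) :
    m w * p.eval w * w ^ n =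
      ∑ k ∈ Finset.range (p.natDegree + 1), p.coeff k * ∑ v ∈ s, m v * v ^ (n + k) := by
  have heval (v : R) : m v * p.eval v * v ^ n =
      ∑ k ∈ Finset.range (p.natDegree + 1), p.coeff k * (m v * v ^ (n + k)) := by
    rw [eval_eq_sum_range, Finset.mul_sum, Finset.sum_mul]
    exact Finset.sum_congr rfl fun k _ => by ring
  simp_rw [Finset.mul_sum]
  rw [Finset.sum_comm, Finset.sum_eq_single_of_mem w hw fun v hv hvw => ?_, heval]
  rw [← heval, hp v hv hvw, mul_zero, zero_mul]

theorem norm_le_of_norm_sum_mul_pow_le {s : Finset ℂ} {m : ℂ → ℂ} {A B : ℝ} {n₀ : ℕ}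
    (hm : ∀ w ∈ s, m w ≠ 0) (hB : 0 < B) (h : ∀ n ≥ n₀, ‖∑ w ∈ s, m w * w ^ n‖ ≤ A * B ^ n)
    {w : ℂ} (hw : w ∈ s) : ‖w‖ ≤ B := by
  set p := Lagrange.basis s id w
  have hpw : p.eval w = 1 := Lagrange.eval_basis_self Function.injective_id.injOn hw
  set D := ∑ k ∈ Finset.range (p.natDegree + 1), ‖p.coeff k‖ * (A * B ^ k) with hD
  have hbound : ∀ n ≥ n₀, ‖m w‖ * ‖w‖ ^ n ≤ D * B ^ n := fun n hn => by
    rw [← norm_pow, ← norm_mul, ← mul_one (m w), ← hpw, eval_mul_pow_eq_sum_coeff_mul hw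
      fun v hv hvw => Lagrange.eval_basis_of_ne (v := id) hvw.symm hv, hD, Finset.sum_mul]
    refine norm_sum_le_of_le _ fun k _ => ?_
    rw [norm_mul, mul_assoc, mul_assoc, ← pow_add, add_comm k]
    gcongr
    exact h _ (by omega)
  by_contra! hlt
  have hmw : 0 < ‖m w‖ := norm_pos_iff.mpr (hm w hw)
  have htend := tendsto_pow_atTop_atTop_of_one_lt ((one_lt_div hB).mpr hlt)
  obtain ⟨n, hn, hgt⟩ := ((Filter.eventually_ge_atTop n₀).and
    (htend.eventually_gt_atTop (D / ‖m w‖))).exists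
  rw [div_pow, div_lt_div_iff₀ hmw (by positivity)] at hgt
  linarith [hbound n hn]

theorem norm_le_of_norm_sum_map_pow_le {s : Multiset ℂ} {A B : ℝ} {n₀ : ℕ} (hB : 0 < B)
    (h : ∀ n ≥ n₀, ‖(s.map (· ^ n)).sum‖ ≤ A * B ^ n) {w : ℂ} (hw : w ∈ s) : ‖w‖ ≤ B := by
  classical
  refine norm_le_of_norm_sum_mul_pow_le (s := s.toFinset) (m := fun w => (s.count w : ℂ)) (A := A)
    (n₀ := n₀) (fun v hv => ?_) hB (fun n hn => ?_) (Multiset.mem_toFinset.mpr hw)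
  · exact Nat.cast_ne_zero.mpr (Multiset.count_ne_zero.mpr (Multiset.mem_toFinset.mp hv))
  · simpa only [Finset.sum_multiset_map_count, nsmul_eq_mul] using h n hn

/-! ### `L`-functions over `F[X]` -/

theorem finite_setOf_natDegree_le (R : Type*) [CommRing R] [Finite R] (n : ℕ) :
    {g : R[X] | g.natDegree ≤ n}.Finite := by
  have : Finite (degreeLT R (n + 1)) := Module.finite_of_finite R
  refine (Set.toFinite (degreeLT R (n + 1) : Set R[X])).subset fun g hg => ?_
  exact mem_degreeLT.mpr (degree_lt_iff_coeff_zero _ _ |>.mpr fun k hk =>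
    coeff_eq_zero_of_natDegree_lt (lt_of_le_of_lt hg hk))

section EulerProduct

variable (F : Type*) [Field F] [Finite F]

/-- The monic polynomials of degree `n` over a finite field. -/
noncomputable def monicFinset (n : ℕ) : Finset F[X] :=
  ((finite_setOf_natDegree_le F n).subset
    (show {g : F[X] | g.Monic ∧ g.natDegree = n} ⊆ _ from fun _ hg => hg.2.le)).toFinset

/-- The monic irreducible polynomials of degree at most `n` over a finite field. -/
noncomputable def monicIrreducibleFinset (n : ℕ) : Finset F[X] :=
  ((finite_setOf_natDegree_le F n).subset
    (show {p : F[X] | (p.Monic ∧ Irreducible p) ∧ p.natDegree ≤ n} ⊆ _ from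
      fun _ hp => hp.2)).toFinset

variable {F} {R : Type*} [CommSemiring R] {n : ℕ} {g p : F[X]}

theorem mem_monicFinset : g ∈ monicFinset F n ↔ g.Monic ∧ g.natDegree = n := by
  simp [monicFinset]

theorem mem_monicIrreducibleFinset :
    p ∈ monicIrreducibleFinset F n ↔ (p.Monic ∧ Irreducible p) ∧ p.natDegree ≤ n := by
  simp [monicIrreducibleFinset]

/-- The sum of `χ` over the monic polynomials of degree `n`: the coefficient of `T ^ n` in the
`L`-function of `χ`. -/
noncomputable def monicSum (χ : F[X] →* R) (n : ℕ) : R :=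
  ∑ g ∈ monicFinset F n, χ g

/-- The sum of `deg p * χ (p ^ i)` over the powers `p ^ i` of degree `n` of monic irreducibles: the
coefficient of `T ^ n` in the logarithmic derivative `T L' / L` of the `L`-function of `χ`. -/
noncomputable def primePowerSum (χ : F[X] →* R) (n : ℕ) : R :=
  ∑ p ∈ monicIrreducibleFinset F n with p.natDegree ∣ n, p.natDegree * χ (p ^ (n / p.natDegree))

theorem monicSum_zero (χ : F[X] →* R) : monicSum χ 0 = 1 := by
  have hone : monicFinset F 0 = {1} := by
    ext g
    rw [mem_monicFinset, Finset.mem_singleton]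
    exact ⟨fun h => h.1.natDegree_eq_zero.mp h.2, by rintro rfl; simp⟩
  rw [monicSum, hone, Finset.sum_singleton, map_one]

open Classical in
theorem sum_monicFinset_filter_dvd (χ : F[X] →* R) (hp : p.Monic) (hn : p.natDegree ≤ n) :
    ∑ g ∈ monicFinset F n with p ∣ g, χ g = χ p * monicSum χ (n - p.natDegree) := by
  rw [monicSum, Finset.mul_sum]
  symm
  refine Finset.sum_bij (fun g _ => p * g) (fun g hg => ?_)
    (fun g _ h _ hgh => mul_left_cancel₀ hp.ne_zero hgh) (fun g hg => ?_) fun g _ => ?_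
  · rw [mem_monicFinset] at hg
    rw [Finset.mem_filter, mem_monicFinset, hp.natDegree_mul hg.1, hg.2]
    exact ⟨⟨hp.mul hg.1, by omega⟩, dvd_mul_right _ _⟩
  · rw [Finset.mem_filter, mem_monicFinset] at hg
    obtain ⟨⟨hg, hdeg⟩, h, rfl⟩ := hg
    have hh := hp.of_mul_monic_left hg
    rw [hp.natDegree_mul hh] at hdeg
    exact ⟨h, mem_monicFinset.mpr ⟨hh, by omega⟩, rfl⟩
  · rw [map_mul]

open Classical in
theorem card_filter_pow_dvd (hg : g ∈ monicFinset F n) (hp : p.Monic) (hp' : Irreducible p) :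
    {k ∈ Finset.Icc 1 n | p.natDegree ∣ k ∧ p ^ (k / p.natDegree) ∣ g}.card =
      (UniqueFactorizationMonoid.normalizedFactors g).count p := by
  rw [mem_monicFinset] at hg
  have hpos := hp'.natDegree_pos
  have hdvd (i : ℕ) : p ^ i ∣ g ↔
      i ≤ (UniqueFactorizationMonoid.normalizedFactors g).count p := by
    rw [pow_dvd_iff_le_emultiplicity,
      UniqueFactorizationMonoid.emultiplicity_eq_count_normalizedFactors hp' hg.1.ne_zero,
      hp.normalize_eq_self, Nat.cast_le]
  have himage : {k ∈ Finset.Icc 1 n | p.natDegree ∣ k ∧ p ^ (k / p.natDegree) ∣ g} =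
      (Finset.Icc 1 ((UniqueFactorizationMonoid.normalizedFactors g).count p)).image
        (p.natDegree * ·) := by
    ext k
    simp only [Finset.mem_filter, Finset.mem_Icc, Finset.mem_image]
    constructor
    · rintro ⟨⟨h1, _⟩, ⟨i, rfl⟩, h2⟩
      rw [Nat.mul_div_cancel_left _ hpos, hdvd] at h2
      exact ⟨i, ⟨Nat.pos_of_mul_pos_left h1, h2⟩, rfl⟩
    · rintro ⟨i, ⟨h1, h2⟩, rfl⟩
      rw [← hdvd] at h2
      refine ⟨⟨Nat.mul_pos hpos h1, ?_⟩, dvd_mul_right _ _, ?_⟩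
      · rw [mul_comm, ← natDegree_pow, ← hg.2]
        exact natDegree_le_of_dvd h2 hg.1.ne_zero
      · rwa [Nat.mul_div_cancel_left _ hpos]
  rw [himage, Finset.card_image_of_injective _ (mul_right_injective₀ hpos.ne')]
  simp

open Classical in
theorem sum_count_normalizedFactors_mul_natDegree (hg : g ∈ monicFinset F n) :
    ∑ p ∈ monicIrreducibleFinset F n,
      (UniqueFactorizationMonoid.normalizedFactors g).count p * p.natDegree = n := by
  rw [mem_monicFinset] at hg
  set s := UniqueFactorizationMonoid.normalizedFactors g
  have hirr : ∀ p ∈ s, Irreducible p := UniqueFactorizationMonoid.irreducible_of_normalized_factor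
  have hmonic : ∀ p ∈ s, p.Monic := fun p hp => by
    rw [← UniqueFactorizationMonoid.normalize_normalized_factor p hp]
    exact monic_normalize (hirr p hp).ne_zero
  have hprod : s.prod = g := by
    rw [UniqueFactorizationMonoid.prod_normalizedFactors_eq hg.1.ne_zero, hg.1.normalize_eq_self]
  have hsub : s.toFinset ⊆ monicIrreducibleFinset F n := fun p hp => by
    rw [Multiset.mem_toFinset] at hp
    refine mem_monicIrreducibleFinset.mpr ⟨⟨hmonic p hp, hirr p hp⟩, hg.2 ▸ ?_⟩
    exact natDegree_le_of_dvd (UniqueFactorizationMonoid.dvd_of_mem_normalizedFactors hp)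
      hg.1.ne_zero
  rw [← Finset.sum_subset hsub fun p _ hp => by
    rw [Multiset.count_eq_zero_of_notMem (mt Multiset.mem_toFinset.mpr hp), zero_mul]]
  simp only [← smul_eq_mul]
  rw [← Finset.sum_multiset_map_count, ← natDegree_multiset_prod_of_monic _ hmonic, hprod, hg.2]

open Classical in
theorem sum_natDegree_of_pow_dvd (hg : g ∈ monicFinset F n) :
    ∑ k ∈ Finset.Icc 1 n, ∑ p ∈ monicIrreducibleFinset F n with
      p.natDegree ∣ k ∧ p ^ (k / p.natDegree) ∣ g, p.natDegree = n := by
  simp only [Finset.sum_filter]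
  rw [Finset.sum_comm]
  conv_rhs => rw [← sum_count_normalizedFactors_mul_natDegree hg]
  refine Finset.sum_congr rfl fun p hp => ?_
  rw [mem_monicIrreducibleFinset] at hp
  rw [← Finset.sum_filter, Finset.sum_const, card_filter_pow_dvd hg hp.1.1 hp.1.2, smul_eq_mul]

open Classical in
theorem primePowerSum_mul_monicSum (χ : F[X] →* R) {k : ℕ} (hk : 1 ≤ k) (hkn : k ≤ n) :
    primePowerSum χ k * monicSum χ (n - k) =
      ∑ g ∈ monicFinset F n, ((∑ p ∈ monicIrreducibleFinset F n with
        p.natDegree ∣ k ∧ p ^ (k / p.natDegree) ∣ g, p.natDegree : ℕ) : R) * χ g := by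
  have hindex : {p ∈ monicIrreducibleFinset F k | p.natDegree ∣ k} =
      {p ∈ monicIrreducibleFinset F n | p.natDegree ∣ k} := by
    ext p
    simp only [Finset.mem_filter, mem_monicIrreducibleFinset]
    exact ⟨fun h => ⟨⟨h.1.1, h.1.2.trans hkn⟩, h.2⟩,
      fun h => ⟨⟨h.1.1, Nat.le_of_dvd hk h.2⟩, h.2⟩⟩
  have hterm : ∀ p ∈ {p ∈ monicIrreducibleFinset F n | p.natDegree ∣ k},
      χ (p ^ (k / p.natDegree)) * monicSum χ (n - k) =
        ∑ g ∈ monicFinset F n, if p ^ (k / p.natDegree) ∣ g then χ g else 0 := fun p hp => by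
    rw [Finset.mem_filter, mem_monicIrreducibleFinset] at hp
    have hdeg : (p ^ (k / p.natDegree)).natDegree = k := by
      rw [natDegree_pow, Nat.div_mul_cancel hp.2]
    rw [← Finset.sum_filter, sum_monicFinset_filter_dvd χ (hp.1.1.1.pow _) (hdeg.trans_le hkn),
      hdeg]
  rw [primePowerSum, hindex, Finset.sum_mul, Finset.sum_congr rfl fun p hp => by
    rw [mul_assoc, hterm p hp, Finset.mul_sum], Finset.sum_comm]
  refine Finset.sum_congr rfl fun g _ => ?_
  rw [← Finset.filter_filter, Nat.cast_sum, Finset.sum_mul]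
  simp only [mul_ite, mul_zero]
  exact (Finset.sum_filter _ _).symm

theorem natCast_mul_monicSum (χ : F[X] →* R) (n : ℕ) :
    n * monicSum χ n = ∑ k ∈ Finset.Icc 1 n, primePowerSum χ k * monicSum χ (n - k) := by
  classical
  rw [Finset.sum_congr rfl fun k hk => primePowerSum_mul_monicSum χ (Finset.mem_Icc.mp hk).1
    (Finset.mem_Icc.mp hk).2, Finset.sum_comm, monicSum, Finset.mul_sum]
  refine Finset.sum_congr rfl fun g hg => ?_
  rw [← Finset.sum_mul, ← Nat.cast_sum, sum_natDegree_of_pow_dvd hg]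

theorem derivative_mk_monicSum (χ : F[X] →* R) :
    d⁄dX R (PowerSeries.mk (monicSum χ)) =
      PowerSeries.mk (fun n => primePowerSum χ (n + 1)) * PowerSeries.mk (monicSum χ) := by
  ext n
  rw [PowerSeries.coeff_derivative, PowerSeries.coeff_mk, mul_comm, ← Nat.cast_succ,
    natCast_mul_monicSum, PowerSeries.coeff_mul,
    Finset.Nat.sum_antidiagonal_eq_sum_range_succ_mk, Finset.range_eq_Ico,
    ← Finset.sum_Ico_add_right_sub_eq 0 n.succ 1]
  refine Finset.sum_congr (by ext; simp) fun k hk => ?_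
  have hk1 : 1 ≤ k := (Finset.mem_Ico.mp hk).1
  rw [PowerSeries.coeff_mk, PowerSeries.coeff_mk, Nat.sub_add_cancel hk1,
    tsub_tsub_eq_add_tsub_of_le hk1]

end EulerProduct

theorem norm_eq_coeff_zero_minpoly_pow {F K : Type*} [Field F] [Field K] [Algebra F K]
    [FiniteDimensional F K] (z : K) :
    Algebra.norm F z = ((-1) ^ (minpoly F z).natDegree * (minpoly F z).coeff 0) ^
      (Module.finrank F K / (minpoly F z).natDegree) := by
  have hz : IsIntegral F z := .of_finite F z
  have hgen := Algebra.PowerBasis.norm_gen_eq_coeff_zero_minpoly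
    (IntermediateField.adjoin.powerBasis hz)
  rw [IntermediateField.adjoin.powerBasis_gen, IntermediateField.adjoin.powerBasis_dim,
    IntermediateField.minpoly_gen] at hgen
  rw [Algebra.norm_eq_norm_adjoin, hgen,
    ← Module.finrank_mul_finrank F (IntermediateField.adjoin F {z}) K,
    IntermediateField.adjoin.finrank hz, Nat.mul_div_cancel_left _ (minpoly.natDegree_pos hz)]

theorem norm_algebraMap_sub_eq_eval_minpoly_pow {F K : Type*} [Field F] [Field K] [Algebra F K]
    [FiniteDimensional F K] (a : F) (z : K) :
    Algebra.norm F (algebraMap F K a - z) =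
      (minpoly F z).eval a ^ (Module.finrank F K / (minpoly F z).natDegree) := by
  have hdeg : (minpoly F (z - algebraMap F K a)).natDegree = (minpoly F z).natDegree := by
    rw [minpoly.sub_algebraMap, natDegree_comp, natDegree_X_add_C, mul_one]
  have hcoeff : (minpoly F (z - algebraMap F K a)).coeff 0 = (minpoly F z).eval a := by
    rw [minpoly.sub_algebraMap, coeff_zero_eq_eval_zero, eval_comp]
    simp
  have hneg : algebraMap F K a - z = algebraMap F K (-1) * (z - algebraMap F K a) := by
    rw [map_neg, map_one, neg_one_mul, neg_sub]
  rw [hneg, map_mul, Algebra.norm_algebraMap, norm_eq_coeff_zero_minpoly_pow, hdeg, hcoeff, mul_pow,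
    ← pow_mul, Nat.mul_div_cancel' (minpoly.degree_dvd (.of_finite F z)), ← mul_assoc, ← mul_pow,
    neg_one_mul, neg_neg, one_pow, one_mul]

open Classical in
theorem card_filter_minpoly_eq {F K : Type*} [Field F] [Finite F] [Field K] [Fintype K]
    [Algebra F K] {p : F[X]} (hp : p.Monic) (hp' : Irreducible p)
    (hdvd : p.natDegree ∣ Module.finrank F K) :
    ({z : K | minpoly F z = p} : Finset K).card = p.natDegree := by
  have hsplits : (p.map (algebraMap F K)).Splits := by
    rw [hp'.natDegree_dvd_iff_dvd_X_pow_card_pow_sub_X, ← Module.natCard_eq_pow_finrank] at hdvd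
    refine (splits_X_pow_nat_card_sub_X (K := K)).of_dvd ?_ ?_
    · exact FiniteField.X_pow_card_sub_X_ne_zero K Finite.one_lt_card
    · simpa using map_dvd (algebraMap F K) hdvd
  have hfilter : ({z : K | minpoly F z = p} : Finset K) = (p.rootSet K).toFinset := by
    ext z
    rw [Finset.mem_filter_univ, Set.mem_toFinset, mem_rootSet_of_ne hp.ne_zero]
    exact ⟨fun h => h ▸ minpoly.aeval F z,
      fun h => (minpoly.eq_of_irreducible_of_monic hp' h hp).symm⟩
  rw [hfilter, Set.toFinset_card,
    card_rootSet_eq_natDegree (PerfectField.separable_of_irreducible hp') hsplits]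

theorem sum_minpoly_eq {F K R : Type*} [Field F] [Finite F] [Field K] [Fintype K] [Algebra F K]
    [Semiring R] (G : F[X] → R) :
    ∑ z : K, G (minpoly F z) =
      ∑ p ∈ monicIrreducibleFinset F (Module.finrank F K) with p.natDegree ∣ Module.finrank F K,
        p.natDegree * G p := by
  classical
  rw [← Finset.sum_fiberwise_of_maps_to (g := minpoly F) fun z _ => ?_]
  · refine Finset.sum_congr rfl fun p hp => ?_
    rw [Finset.mem_filter, mem_monicIrreducibleFinset] at hp
    rw [Finset.sum_congr rfl fun z hz => by rw [(Finset.mem_filter.mp hz).2], Finset.sum_const,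
      card_filter_minpoly_eq hp.1.1.1 hp.1.1.2 hp.2, nsmul_eq_mul]
  · have hz : IsIntegral F z := .of_finite F z
    have hdvd := minpoly.degree_dvd hz
    exact Finset.mem_filter.mpr ⟨mem_monicIrreducibleFinset.mpr ⟨⟨minpoly.monic hz,
      minpoly.irreducible hz⟩, Nat.le_of_dvd Module.finrank_pos hdvd⟩, hdvd⟩

section EvalMulChar

variable {F ι R : Type*} [Field F] [Fintype ι]

/-- The Dirichlet character `g ↦ ∏ i, χ i (g (a i))` modulo `∏ i, (X - a i)`, on polynomials. -/
noncomputable def evalMulChar [CommMonoidWithZero R] (χ : ι → MulChar F R) (a : ι → F) :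
    F[X] →* R :=
  ∏ i, (χ i).toMonoidHom.comp (evalRingHom (a i)).toMonoidHom

theorem evalMulChar_apply [CommMonoidWithZero R] (χ : ι → MulChar F R) (a : ι → F) (g : F[X]) :
    evalMulChar χ a g = ∏ i, χ i (g.eval (a i)) := by
  simp [evalMulChar]

theorem sum_prod_mulCharLift_eq_primePowerSum [CommSemiring R] [Finite F] {K : Type*} [Field K]
    [Fintype K] [Algebra F K] (χ : ι → MulChar F R) (a : ι → F) :
    ∑ x : K, ∏ i, mulCharLift K R (χ i) (algebraMap F K (a i) + x) =
      primePowerSum (evalMulChar χ a) (Module.finrank F K) := by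
  rw [primePowerSum, ← sum_minpoly_eq (K := K)
    fun p => evalMulChar χ a (p ^ (Module.finrank F K / p.natDegree)), ← Equiv.sum_comp (.neg K)]
  refine Finset.sum_congr rfl fun z _ => ?_
  rw [evalMulChar_apply]
  refine Finset.prod_congr rfl fun i _ => ?_
  rw [Equiv.neg_apply, ← sub_eq_add_neg, mulCharLift_apply,
    norm_algebraMap_sub_eq_eval_minpoly_pow, eval_pow]

open Classical in
theorem add_C_mul_lagrangeBasis_mem_monicFinset [Finite F] {a : ι → F} (ha : Function.Injective a)
    {n : ℕ} (hn : Fintype.card ι ≤ n) (i : ι) (v : F) {g : F[X]} (hg : g ∈ monicFinset F n) :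
    g + C v * Lagrange.basis Finset.univ a i ∈ monicFinset F n := by
  rw [mem_monicFinset] at hg ⊢
  have hpos : 0 < Fintype.card ι := Fintype.card_pos_iff.mpr ⟨i⟩
  have hlt : (C v * Lagrange.basis Finset.univ a i).degree < g.degree := by
    rw [degree_eq_natDegree hg.1.ne_zero, hg.2, C_mul']
    refine (degree_smul_le _ _).trans_lt ?_
    rw [Lagrange.degree_basis ha.injOn (Finset.mem_univ _), Finset.card_univ, Nat.cast_lt]
    omega
  exact ⟨hg.1.add_of_left hlt, by rw [natDegree_add_eq_left_of_degree_lt hlt, hg.2]⟩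

open Classical in
theorem evalMulChar_add_C_mul_lagrangeBasis [CommMonoidWithZero R] (χ : ι → MulChar F R)
    {a : ι → F} (ha : Function.Injective a) (i : ι) (v : F) (g : F[X]) :
    evalMulChar χ a (g + C v * Lagrange.basis Finset.univ a i) =
      χ i (g.eval (a i) + v) * ∏ k ∈ Finset.univ.erase i, χ k (g.eval (a k)) := by
  rw [evalMulChar_apply, ← Finset.mul_prod_erase _ _ (Finset.mem_univ i), eval_add, eval_mul,
    eval_C, Lagrange.eval_basis_self ha.injOn (Finset.mem_univ i), mul_one]
  congr 1
  refine Finset.prod_congr rfl fun k hk => ?_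
  rw [eval_add, eval_mul, Lagrange.eval_basis_of_ne (Finset.ne_of_mem_erase hk).symm
    (Finset.mem_univ k), mul_zero, add_zero]

theorem monicSum_evalMulChar_eq_zero [Finite F] [CommRing R] [IsDomain R] [CharZero R]
    {χ : ι → MulChar F R} {a : ι → F} (ha : Function.Injective a) (hχ : ∃ i, χ i ≠ 1) {n : ℕ}
    (hn : Fintype.card ι ≤ n) : monicSum (evalMulChar χ a) n = 0 := by
  classical
  have := Fintype.ofFinite F
  obtain ⟨i, hi⟩ := hχ
  have hshift (v : F) : ∑ g ∈ monicFinset F n,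
      evalMulChar χ a (g + C v * Lagrange.basis Finset.univ a i) =
        monicSum (evalMulChar χ a) n := by
    refine Finset.sum_nbij' (· + C v * Lagrange.basis Finset.univ a i)
      (· + C (-v) * Lagrange.basis Finset.univ a i)
      (fun g => add_C_mul_lagrangeBasis_mem_monicFinset ha hn i v)
      (fun g => add_C_mul_lagrangeBasis_mem_monicFinset ha hn i (-v)) (fun g _ => ?_)
      (fun g _ => ?_) fun _ _ => rfl
    · simp
    · simp
  have haverage : (Fintype.card F : R) * monicSum (evalMulChar χ a) n = 0 := by
    rw [← nsmul_eq_mul, ← Finset.card_univ, ← Finset.sum_const,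
      ← Finset.sum_congr rfl fun v _ => hshift v, Finset.sum_comm]
    refine Finset.sum_eq_zero fun g _ => ?_
    have hsum : ∑ v, χ i (g.eval (a i) + v) = 0 :=
      (Equiv.sum_comp (Equiv.addLeft (g.eval (a i))) fun v => χ i v).trans
        (MulChar.sum_eq_zero_of_ne_one hi)
    rw [Finset.sum_congr rfl fun v _ => evalMulChar_add_C_mul_lagrangeBasis χ ha i v g,
      ← Finset.sum_mul, hsum, zero_mul]
  exact (mul_eq_zero.mp haverage).resolve_left (Nat.cast_ne_zero.mpr Fintype.card_ne_zero)

end EvalMulChar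

theorem exists_norm_primePowerSum_evalMulChar_le {F ι : Type*} [Field F] [Fintype F] [Fintype ι]
    {χ : ι → MulChar F ℂ} (hχ : ∃ i, χ i ≠ 1) {a : ι → F} (ha : Function.Injective a) :
    ∃ (A : ℝ) (n₀ : ℕ), ∀ n ≥ n₀,
      ‖primePowerSum (evalMulChar χ a) (2 * n)‖ ≤ A * (Fintype.card F : ℝ) ^ n := by
  obtain ⟨A, n₀, hA⟩ := exists_norm_sum_prod_mulCharLift_le hχ ha
  refine ⟨A, n₀ + 1, fun n hn => ?_⟩
  obtain ⟨p, hchar⟩ := CharP.exists F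
  have : Fact p.Prime := ⟨CharP.char_is_prime F p⟩
  have : NeZero (2 * n) := ⟨by omega⟩
  have := Fintype.ofFinite (FiniteField.Extension F p (2 * n))
  have hfinrank := FiniteField.finrank_extension F p (2 * n)
  have hbound := hA n (by omega) _ hfinrank
  rwa [sum_prod_mulCharLift_eq_primePowerSum, hfinrank] at hbound

theorem exists_primePowerSum_evalMulChar_eq {F ι : Type*} [Field F] [Finite F] [Fintype ι]
    {χ : ι → MulChar F ℂ} (hχ : ∃ i, χ i ≠ 1) {a : ι → F} (ha : Function.Injective a) :
    ∃ s : Multiset ℂ, s.card ≤ Fintype.card ι - 1 ∧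
      ∀ n ≠ 0, primePowerSum (evalMulChar χ a) n = -(s.map (· ^ n)).sum := by
  obtain ⟨s, hs, hsum⟩ := exists_eq_neg_sum_map_pow (d := Fintype.card ι - 1)
    (c := PowerSeries.mk (monicSum (evalMulChar χ a)))
    (by simpa using monicSum_zero (evalMulChar χ a))
    (fun n hn => by rw [PowerSeries.coeff_mk, monicSum_evalMulChar_eq_zero ha hχ (by omega)])
    (derivative_mk_monicSum _)
  refine ⟨s, hs, fun n hn => ?_⟩
  obtain ⟨m, rfl⟩ := Nat.exists_eq_succ_of_ne_zero hn
  rw [← hsum, PowerSeries.coeff_mk]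

theorem norm_sum_prod_mulChar_add_le {F ι : Type*} [Field F] [Fintype F] [Fintype ι]
    {χ : ι → MulChar F ℂ} (hχ : ∃ i, χ i ≠ 1) {a : ι → F} (ha : Function.Injective a) :
    ‖∑ x, ∏ i, χ i (a i + x)‖ ≤ (Fintype.card ι - 1 : ℕ) * √(Fintype.card F) := by
  obtain ⟨s, hs, hsum⟩ := exists_primePowerSum_evalMulChar_eq hχ ha
  obtain ⟨A, n₀, hA⟩ := exists_norm_primePowerSum_evalMulChar_le hχ ha
  have hroot : ∀ w ∈ s, ‖w‖ ≤ √(Fintype.card F) := fun w hw => by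
    refine Real.le_sqrt_of_sq_le ?_
    rw [← norm_pow]
    refine norm_le_of_norm_sum_map_pow_le (s := s.map (· ^ 2)) (A := A) (n₀ := n₀ + 1)
      (Nat.cast_pos.mpr Fintype.card_pos) (fun n hn => ?_) (Multiset.mem_map_of_mem _ hw)
    have hbound := hA n (by omega)
    rw [hsum _ (by omega), norm_neg] at hbound
    simpa only [Multiset.map_map, Function.comp_def, ← pow_mul] using hbound
  have hone : ∑ x, ∏ i, χ i (a i + x) = primePowerSum (evalMulChar χ a) 1 := by
    rw [← Module.finrank_self F, ← sum_prod_mulCharLift_eq_primePowerSum (K := F)]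
    simp [mulCharLift_apply]
  calc ‖∑ x, ∏ i, χ i (a i + x)‖ = ‖s.sum‖ := by simp [hone, hsum 1 one_ne_zero]
    _ ≤ (s.map norm).sum := norm_multiset_sum_le s
    _ ≤ s.card * √(Fintype.card F) := by
        simpa using Multiset.sum_le_card_nsmul (s.map norm) √(Fintype.card F) (by simpa using hroot)
    _ ≤ (Fintype.card ι - 1 : ℕ) * √(Fintype.card F) := by gcongr

/-! ### Counting with characters -/

open Classical in
theorem sum_Icc_mulChar_pow_apply {F R : Type*} [Field F] [Finite F] [CommRing R] [IsDomain R]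
    (ψ : MulChar F R) (v : F) :
    ∑ j ∈ Finset.Icc 1 (orderOf ψ), (ψ ^ j) v = if ψ v = 1 then (orderOf ψ : R) else 0 := by
  have hpow : ∑ j ∈ Finset.Icc 1 (orderOf ψ), (ψ ^ j) v =
      ψ v * ∑ j ∈ Finset.range (orderOf ψ), ψ v ^ j := by
    rw [Finset.mul_sum, Finset.range_eq_Ico, ← Finset.sum_Ico_add_right_sub_eq 0 _ 1]
    refine Finset.sum_congr (by ext; simp) fun j hj => ?_
    have hj0 : j ≠ 0 := Nat.one_le_iff_ne_zero.mp (Finset.mem_Ico.mp hj).1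
    rw [MulChar.pow_apply' _ hj0, mul_pow_sub_one hj0]
  rw [hpow]
  split_ifs with hv
  · simp [hv]
  · by_cases hv0 : v = 0
    · rw [hv0, MulChar.map_zero, zero_mul]
    have hgeom := mul_neg_geom_sum (ψ v) (orderOf ψ)
    rw [← MulChar.pow_apply' _ (MulChar.orderOf_pos ψ).ne', pow_orderOf_eq_one,
      MulChar.one_apply (Ne.isUnit hv0), sub_self] at hgeom
    rw [(mul_eq_zero.mp hgeom).resolve_left (sub_ne_zero.mpr (Ne.symm hv)), mul_zero]

open Classical in
theorem sum_piFinset_prod_mulChar_pow_apply {F R ι : Type*} [Field F] [Finite F] [CommRing R]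
    [IsDomain R] [Fintype ι] (ψ : MulChar F R) (v : ι → F) :
    ∑ j ∈ Fintype.piFinset fun _ : ι => Finset.Icc 1 (orderOf ψ), ∏ i, (ψ ^ j i) (v i) =
      if ∀ i, ψ (v i) = 1 then (orderOf ψ : R) ^ Fintype.card ι else 0 := by
  rw [← Finset.prod_univ_sum (fun _ => Finset.Icc 1 (orderOf ψ)) fun i j => (ψ ^ j) (v i)]
  simp only [sum_Icc_mulChar_pow_apply]
  split_ifs with h
  · simp [h]
  · obtain ⟨i, hi⟩ := not_forall.mp h
    exact Finset.prod_eq_zero (Finset.mem_univ i) (if_neg hi)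

open Classical in
theorem pow_card_mul_card_filter_mulChar_eq {F R ι : Type*} [Field F] [Fintype F] [CommRing R]
    [IsDomain R] [Fintype ι] (ψ : MulChar F R) (a : ι → F) :
    (orderOf ψ : R) ^ Fintype.card ι * ({x | ∀ i, ψ (a i + x) = 1} : Finset F).card =
      ∑ j ∈ Fintype.piFinset fun _ : ι => Finset.Icc 1 (orderOf ψ),
        ∑ x, ∏ i, (ψ ^ j i) (a i + x) := by
  rw [Finset.sum_comm]
  simp only [sum_piFinset_prod_mulChar_pow_apply, ← Finset.sum_filter, Finset.sum_const,
    nsmul_eq_mul]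
  rw [mul_comm]

theorem norm_sum_prod_one_add_sub_card_le {F ι : Type*} [Field F] [Fintype F] [Fintype ι]
    (a : ι → F) :
    ‖∑ x, ∏ i, (1 : MulChar F ℂ) (a i + x) - Fintype.card F‖ ≤ Fintype.card ι := by
  classical
  have hcard : (Fintype.card F : ℂ) = ∑ _x : F, 1 := by simp
  rw [hcard, ← Finset.sum_sub_distrib]
  calc ‖∑ x, (∏ i, (1 : MulChar F ℂ) (a i + x) - 1)‖
      ≤ ∑ x, if x ∈ Finset.univ.image (-a ·) then (1 : ℝ) else 0 := by
        refine norm_sum_le_of_le _ fun x _ => ?_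
        split_ifs with hx
        · obtain ⟨i, -, rfl⟩ := Finset.mem_image.mp hx
          rw [Finset.prod_eq_zero (Finset.mem_univ i) (by rw [add_neg_cancel, MulChar.map_zero])]
          simp
        · have hne (i : ι) : a i + x ≠ 0 := fun h =>
            hx (Finset.mem_image.mpr ⟨i, Finset.mem_univ i, neg_eq_of_add_eq_zero_right h⟩)
          rw [Finset.prod_eq_one fun i _ => MulChar.one_apply (hne i).isUnit]
          simp
    _ = (Finset.univ.image (-a ·)).card := by simp
    _ ≤ Fintype.card ι := mod_cast Finset.card_image_le

theorem norm_sum_prod_mulChar_pow_sub_ite_le {F ι : Type*} [Field F] [Fintype F] [Fintype ι]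
    [DecidableEq ι] (ψ : MulChar F ℂ) {a : ι → F} (ha : Function.Injective a) {j : ι → ℕ}
    (hj : j ∈ Fintype.piFinset fun _ => Finset.Icc 1 (orderOf ψ)) :
    ‖∑ x, ∏ i, (ψ ^ j i) (a i + x) - if j = fun _ => orderOf ψ then (Fintype.card F : ℂ) else 0‖ ≤
      Fintype.card ι * √(Fintype.card F) := by
  split_ifs with h
  · simp only [h, pow_orderOf_eq_one]
    refine (norm_sum_prod_one_add_sub_card_le a).trans (le_mul_of_one_le_right (by positivity) ?_)
    rw [Real.one_le_sqrt, Nat.one_le_cast]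
    exact Fintype.card_pos
  · obtain ⟨i, hi⟩ := Function.ne_iff.mp h
    obtain ⟨hj1, hjψ⟩ := Finset.mem_Icc.mp (Fintype.mem_piFinset.mp hj i)
    rw [sub_zero]
    refine (norm_sum_prod_mulChar_add_le (χ := fun i => ψ ^ j i) ⟨i, ?_⟩ ha).trans ?_
    · exact pow_ne_one_of_lt_orderOf (Nat.one_le_iff_ne_zero.mp hj1) (lt_of_le_of_ne hjψ hi)
    · gcongr
      exact Nat.sub_le _ _

open Classical in
theorem norm_card_filter_mulChar_eq_one_sub_le {F ι : Type*} [Field F] [Fintype F] [Fintype ι]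
    (ψ : MulChar F ℂ) {a : ι → F} (ha : Function.Injective a) :
    ‖(orderOf ψ : ℂ) ^ Fintype.card ι * ({x | ∀ i, ψ (a i + x) = 1} : Finset F).card -
        Fintype.card F‖ ≤
      (orderOf ψ : ℝ) ^ Fintype.card ι * (Fintype.card ι * √(Fintype.card F)) := by
  set J := Fintype.piFinset fun _ : ι => Finset.Icc 1 (orderOf ψ) with hJ
  have hmem : (fun _ => orderOf ψ) ∈ J := by
    simp only [hJ, Fintype.mem_piFinset, Finset.right_mem_Icc]
    exact fun _ => MulChar.orderOf_pos ψ
  have hmain : (Fintype.card F : ℂ) =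
      ∑ j ∈ J, if j = fun _ => orderOf ψ then (Fintype.card F : ℂ) else 0 := by
    rw [Finset.sum_ite_eq', if_pos hmem]
  rw [pow_card_mul_card_filter_mulChar_eq, hmain, ← Finset.sum_sub_distrib]
  refine (norm_sum_le_of_le _ fun j => norm_sum_prod_mulChar_pow_sub_ite_le ψ ha).trans_eq ?_
  simp

theorem abs_ncard_setOf_mulChar_eq_one_sub_le {F ι : Type*} [Field F] [Fintype F] [Fintype ι]
    (ψ : MulChar F ℂ) {a : ι → F} (ha : Function.Injective a) :
    |({x : F | ∀ i, ψ (a i + x) = 1}.ncard : ℝ) -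
        Fintype.card F / (orderOf ψ : ℝ) ^ Fintype.card ι| ≤
      Fintype.card ι * √(Fintype.card F) := by
  classical
  have hncard : {x : F | ∀ i, ψ (a i + x) = 1}.ncard =
      ({x | ∀ i, ψ (a i + x) = 1} : Finset F).card := by
    rw [← Set.ncard_coe_finset, Finset.coe_filter_univ]
  have hpos : (0 : ℝ) < (orderOf ψ : ℝ) ^ Fintype.card ι :=
    pow_pos (Nat.cast_pos.mpr (MulChar.orderOf_pos ψ)) _
  refine le_of_mul_le_mul_left ?_ hpos
  rw [hncard]
  nth_rewrite 1 [← abs_of_pos hpos]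
  rw [← abs_mul, mul_sub, mul_div_cancel₀ _ hpos.ne', ← Real.norm_eq_abs, ← Complex.norm_real]
  push_cast
  exact norm_card_filter_mulChar_eq_one_sub_le ψ ha

/-- Weil-type estimate: for `ℓ ∣ q - 1`, `ℓ > 0`, and distinct `a_1, …, a_t` in `F_q`,
the number `N` of `x ∈ F_q` with `(a_i + x)^{(q-1)/ℓ} = 1` for all `i` satisfies
`|N - q/ℓ^t| ≤ t √q`. -/
theorem weil_system_count (q ℓ t : ℕ) (hq : IsPrimePow q) (hℓ : 0 < ℓ) (hdvd : ℓ ∣ q - 1)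
    {F : Type} [Field F] [Fintype F] (hF : Fintype.card F = q)
    (a : Fin t → F) (ha : Function.Injective a) :
    |({x : F | ∀ i : Fin t, (a i + x) ^ ((q - 1) / ℓ) = 1}.ncard : ℝ)
        - (q : ℝ) / (ℓ : ℝ) ^ t| ≤ (t : ℝ) * Real.sqrt q := by
  subst hF
  obtain ⟨ψ, rfl⟩ := MulChar.exists_mulChar_orderOf F hdvd
    (Complex.isPrimitiveRoot_exp ℓ hℓ.ne')
  simpa only [mulChar_apply_eq_one_iff, Fintype.card_fin] using
    abs_ncard_setOf_mulChar_eq_one_sub_le ψ ha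
end
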